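/- Strict separation: let w be a minimizer of J in the open unit ball B₁ with w(x) ≥ U₀(x) for all x ∈ ℝⁿ \ B₁. Then w ≥ U₀ on B₁; moreover, either w = U₀ on B₁ ∩ closure({U₀ > 0}), or w(x) > U₀(x) for every x ∈ B₁ ∩ closure({U₀ > 0}). -/

import Mathlib

open MeasureTheory Metric Set Filter ENNReal NNReal

/-- The Alt–Caffarelli energy `J_D(u) = ∫_D (‖∇u‖² + 𝟙_{u>0})`, valued in `[0,∞]`. -/
noncomputable def JE {n : ℕ} (D : Set (EuclideanSpace ℝ (Fin n)))
    (u : EuclideanSpace ℝ (Fin n) → ℝ) : ℝ≥0∞ :=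
  ∫⁻ x in D, ((‖gradient u x‖₊ : ℝ≥0∞) ^ 2 + if 0 < u x then 1 else 0)

/-- `u` is a (nonnegative, locally Lipschitz) minimizer of `J` in the open set `Ω`:
for every nonnegative locally Lipschitz competitor `v` with `{v ≠ u}` a bounded subset
of `Ω`, one has `J_{Ω ∩ B}(u) ≤ J_{Ω ∩ B}(v)` for every open ball `B ⊇ {v ≠ u}`. -/
def IsMinimizer {n : ℕ} (Ω : Set (EuclideanSpace ℝ (Fin n)))
    (u : EuclideanSpace ℝ (Fin n) → ℝ) : Prop :=
  (∀ x, 0 ≤ u x) ∧ LocallyLipschitz u ∧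
  ∀ v : EuclideanSpace ℝ (Fin n) → ℝ, (∀ x, 0 ≤ v x) → LocallyLipschitz v →
    Bornology.IsBounded {x | v x ≠ u x} → {x | v x ≠ u x} ⊆ Ω →
    ∀ (c : EuclideanSpace ℝ (Fin n)) (r : ℝ), {x | v x ≠ u x} ⊆ Metric.ball c r →
      JE (Ω ∩ Metric.ball c r) u ≤ JE (Ω ∩ Metric.ball c r) v

/-!
Since the energies of `min U w` and `max U w` add up to those of `U` and `w`, the minimum is again a
minimizer. It cannot touch `U` inside `{U > 0}` without coinciding nearby, by the strong maximum
principle, so `U` vanishes on the frontier of `{w < U}`. Cutting `U` off there leaves a minimizer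
with compact support, and this is `0` because `0` has less energy. Hence `U ≤ w`, and by the strong
maximum principle again, `w` either equals `U` or exceeds it throughout the connected set `{U > 0}`.

The point is strictness at the free boundary. Consider all pairs of minimizers `Λ u ≤ w` that vanish
at a common free boundary point, and the supremum of the possible factors `Λ`. By compactness of
rescalings it is attained, by minimizers on the whole space. If `Λ u < w` inside `{u > 0}`, the
boundary Harnack inequality allows a larger `Λ`, so some pair with the maximal `Λ` must touch inside
`{u > 0}`, and then `w = Λ u` on a component, on which `u` and `Λ u` both yield minimizers. If
`Λ > 1`, comparing their first inner variations shows that the indicator of that component has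
zero distributional gradient, so `u` is positive everywhere, contradicting `u = 0` at the free
boundary. Thus `Λ ≤ 1`, and a pair `u ≤ w` touching at a free boundary point must also touch inside
`{u > 0}`, for otherwise the boundary Harnack inequality would yield a factor larger than `1`.
-/

namespace AltCaffarelli

open scoped Topology RealInnerProductSpace Gradient

/-! ### Lipschitz functions and their gradients -/

section Lipschitz

variable {X : Type*} [PseudoMetricSpace X] {f g : X → ℝ}

/-- Real functions that are Lipschitz for some constant, when its value does not matter. -/
def IsLipschitz (f : X → ℝ) : Prop := ∃ K : ℝ≥0, LipschitzWith K f

theorem isLipschitz_of_abs_sub_le (K : ℝ) (h : ∀ x y, |f x - f y| ≤ K * dist x y) :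
    IsLipschitz f :=
  ⟨K.toNNReal, LipschitzWith.of_dist_le_mul fun x y =>
    (h x y).trans (mul_le_mul_of_nonneg_right K.le_coe_toNNReal dist_nonneg)⟩

namespace IsLipschitz

theorem continuous (hf : IsLipschitz f) : Continuous f :=
  let ⟨_, h⟩ := hf; h.continuous

theorem const (c : ℝ) : IsLipschitz (fun _ : X => c) := ⟨0, LipschitzWith.const c⟩

theorem add (hf : IsLipschitz f) (hg : IsLipschitz g) : IsLipschitz (fun x => f x + g x) :=
  let ⟨_, h⟩ := hf; let ⟨_, h'⟩ := hg; ⟨_, h.add h'⟩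

theorem sub (hf : IsLipschitz f) (hg : IsLipschitz g) : IsLipschitz (fun x => f x - g x) :=
  let ⟨_, h⟩ := hf; let ⟨_, h'⟩ := hg; ⟨_, h.sub h'⟩

theorem neg (hf : IsLipschitz f) : IsLipschitz (fun x => -f x) :=
  let ⟨_, h⟩ := hf; ⟨_, h.neg⟩

theorem max (hf : IsLipschitz f) (hg : IsLipschitz g) : IsLipschitz (fun x => max (f x) (g x)) :=
  let ⟨_, h⟩ := hf; let ⟨_, h'⟩ := hg; ⟨_, h.max h'⟩

theorem min (hf : IsLipschitz f) (hg : IsLipschitz g) : IsLipschitz (fun x => min (f x) (g x)) :=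
  let ⟨_, h⟩ := hf; let ⟨_, h'⟩ := hg; ⟨_, h.min h'⟩

theorem const_mul (c : ℝ) (hf : IsLipschitz f) : IsLipschitz (fun x => c * f x) := by
  obtain ⟨K, h⟩ := hf
  refine isLipschitz_of_abs_sub_le (|c| * K) fun x y => ?_
  rw [← mul_sub, abs_mul, mul_assoc]
  exact mul_le_mul_of_nonneg_left (h.dist_le_mul x y) (abs_nonneg c)

theorem mul_of_abs_le (hf : IsLipschitz f) (hg : IsLipschitz g) (M N : ℝ) (hM : ∀ x, |f x| ≤ M)
    (hN : ∀ x, f x ≠ 0 → |g x| ≤ N) : IsLipschitz (fun x => f x * g x) := by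
  obtain ⟨K, h⟩ := hf
  obtain ⟨K', h'⟩ := hg
  have key : ∀ x y, f y ≠ 0 → |f x * g x - f y * g y| ≤ (M * K' + N * K) * dist x y := by
    intro x y hy
    calc |f x * g x - f y * g y|
        = |f x * (g x - g y) + g y * (f x - f y)| := by congr 1; ring
      _ ≤ |f x| * |g x - g y| + |g y| * |f x - f y| := by
        rw [← abs_mul, ← abs_mul]; exact abs_add_le _ _
      _ ≤ M * (K' * dist x y) + N * (K * dist x y) :=
        add_le_add
          (mul_le_mul (hM x) (h'.dist_le_mul x y) (abs_nonneg _) ((abs_nonneg _).trans (hM x)))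
          (mul_le_mul (hN y hy) (h.dist_le_mul x y) (abs_nonneg _)
            ((abs_nonneg _).trans (hN y hy)))
      _ = (M * K' + N * K) * dist x y := by ring
  refine isLipschitz_of_abs_sub_le |M * K' + N * K| fun x y => ?_
  by_cases hy : f y = 0
  · by_cases hx : f x = 0
    · simp only [hx, hy, zero_mul, sub_self, abs_zero]; positivity
    · rw [abs_sub_comm, dist_comm]
      exact (key y x hx).trans (mul_le_mul_of_nonneg_right (le_abs_self _) dist_nonneg)
  · exact (key x y hy).trans (mul_le_mul_of_nonneg_right (le_abs_self _) dist_nonneg)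

end IsLipschitz

end Lipschitz

theorem nonneg_of_forall_small_quadratic_nonneg {a b t₀ : ℝ} (ht₀ : 0 < t₀)
    (h : ∀ t, 0 < t → t < t₀ → 0 ≤ t * a + t ^ 2 * b) : 0 ≤ a := by
  have hlim : Tendsto (fun t : ℝ => a + t * b) (𝓝[>] 0) (𝓝 a) :=
    tendsto_nhdsWithin_of_tendsto_nhds (Continuous.tendsto' (by fun_prop) _ _ (by simp))
  refine ge_of_tendsto hlim ?_
  filter_upwards [Ioo_mem_nhdsGT ht₀] with t ht
  refine nonneg_of_mul_nonneg_right ?_ ht.1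
  linarith [h t ht.1 ht.2]

section Gradient

variable {V : Type*} [NormedAddCommGroup V] [InnerProductSpace ℝ V] [CompleteSpace V]
  {f g : V → ℝ} {x : V}

theorem norm_gradient (f : V → ℝ) (x : V) : ‖∇ f x‖ = ‖fderiv ℝ f x‖ := by
  simp only [gradient, LinearIsometryEquiv.norm_map]

theorem norm_gradient_le {K : ℝ≥0} (hf : LipschitzWith K f) (x : V) : ‖∇ f x‖ ≤ K := by
  rw [norm_gradient]; exact norm_fderiv_le_of_lipschitz ℝ hf

theorem gradient_eq_zero_of_fderiv (h : fderiv ℝ f x = 0) : ∇ f x = 0 := by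
  simp only [gradient, h, map_zero]

theorem gradient_add (hf : DifferentiableAt ℝ f x) (hg : DifferentiableAt ℝ g x) :
    ∇ (fun y => f y + g y) x = ∇ f x + ∇ g x := by
  simp only [gradient, fderiv_fun_add hf hg, map_add]

theorem gradient_sub (hf : DifferentiableAt ℝ f x) (hg : DifferentiableAt ℝ g x) :
    ∇ (fun y => f y - g y) x = ∇ f x - ∇ g x := by
  simp only [gradient, fderiv_fun_sub hf hg, map_sub]

theorem gradient_const_mul (c : ℝ) (hf : DifferentiableAt ℝ f x) :
    ∇ (fun y => c * f y) x = c • ∇ f x := by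
  simp [gradient, fderiv_const_mul hf]

theorem gradient_neg (f : V → ℝ) (x : V) : ∇ (fun y => -f y) x = -∇ f x := by
  simp only [gradient, fderiv_fun_neg, map_neg]

theorem gradient_mul (hf : DifferentiableAt ℝ f x) (hg : DifferentiableAt ℝ g x) :
    ∇ (fun y => f y * g y) x = f x • ∇ g x + g x • ∇ f x := by
  simp [gradient, fderiv_fun_mul hf hg]

theorem norm_gradient_add_const_mul_sq (hf : DifferentiableAt ℝ f x)
    (hg : DifferentiableAt ℝ g x) (t : ℝ) :
    ‖∇ (fun y => f y + t * g y) x‖ ^ 2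
      = ‖∇ f x‖ ^ 2 + t * (2 * ⟪∇ f x, ∇ g x⟫) + t ^ 2 * ‖∇ g x‖ ^ 2 := by
  rw [gradient_add hf (hg.const_mul t), gradient_const_mul t hg, norm_add_sq_real,
    inner_smul_right, norm_smul, mul_pow, Real.norm_eq_abs, sq_abs]
  ring

theorem norm_inner_gradient_le {K K' : ℝ≥0} (hf : LipschitzWith K f) (hg : LipschitzWith K' g)
    (x : V) : ‖⟪∇ f x, ∇ g x⟫‖ ≤ K * K' :=
  (norm_inner_le_norm _ _).trans
    (mul_le_mul (norm_gradient_le hf x) (norm_gradient_le hg x) (norm_nonneg _) K.2)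

theorem gradient_eq_zero_of_forall_ge (h : ∀ y, f x ≤ f y) : ∇ f x = 0 :=
  gradient_eq_zero_of_fderiv
    (show IsLocalMin f x from Filter.Eventually.of_forall h).fderiv_eq_zero

theorem gradient_eq_zero_of_forall_le (h : ∀ y, f y ≤ f x) : ∇ f x = 0 :=
  gradient_eq_zero_of_fderiv
    (show IsLocalMax f x from Filter.Eventually.of_forall h).fderiv_eq_zero

theorem gradient_eq_of_forall_le (h : ∀ y, f y ≤ g y) (hx : f x = g x)
    (hf : DifferentiableAt ℝ f x) (hg : DifferentiableAt ℝ g x) : ∇ f x = ∇ g x := by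
  have h0 : ∇ (fun y => g y - f y) x = 0 :=
    gradient_eq_zero_of_forall_ge fun y => by rw [hx, sub_self]; exact sub_nonneg.2 (h y)
  rw [gradient_sub hg hf] at h0
  exact (sub_eq_zero.1 h0).symm

theorem gradient_eq_zero_of_notMem {K : Set V} (hK : IsClosed K) (h : ∀ x ∉ K, f x = 0)
    (hx : x ∉ K) : ∇ f x = 0 := by
  have h0 : f =ᶠ[𝓝 x] fun _ => 0 := by
    filter_upwards [hK.isOpen_compl.mem_nhds hx] with y hy using h y hy
  rw [h0.gradient_eq, gradient_fun_const]

theorem gradient_max_min_of_le (hf : DifferentiableAt ℝ f x) (hg : DifferentiableAt ℝ g x)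
    (hmax : DifferentiableAt ℝ (fun y => max (f y) (g y)) x)
    (hmin : DifferentiableAt ℝ (fun y => min (f y) (g y)) x) (h : f x ≤ g x) :
    ∇ (fun y => max (f y) (g y)) x = ∇ g x ∧ ∇ (fun y => min (f y) (g y)) x = ∇ f x := by
  rcases h.lt_or_eq with hlt | heq
  · have hev : ∀ᶠ y in 𝓝 x, f y < g y := hf.continuousAt.eventually_lt hg.continuousAt hlt
    exact ⟨EventuallyEq.gradient_eq (hev.mono fun y hy => max_eq_right hy.le),
      EventuallyEq.gradient_eq (hev.mono fun y hy => min_eq_left hy.le)⟩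
  · exact ⟨(gradient_eq_of_forall_le (fun _ => le_max_right _ _) (by simp [heq]) hg hmax).symm,
      gradient_eq_of_forall_le (fun _ => min_le_left _ _) (by simp [heq]) hmin hf⟩

theorem gradient_posPart (hf : Continuous f) (x : V) :
    ∇ (fun y => max (f y) 0) x = if 0 < f x then ∇ f x else 0 := by
  split_ifs with h
  · refine EventuallyEq.gradient_eq ?_
    filter_upwards [(isOpen_lt continuous_const hf).mem_nhds h] with y hy using max_eq_left hy.le
  · refine gradient_eq_zero_of_forall_ge fun y => ?_
    rw [max_eq_right (not_lt.1 h)]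
    exact le_max_right _ _

end Gradient

/-- The indicator of the positive half line; `heaviside (u x)` is the term `𝟙_{u > 0}` of the
energy density. -/
noncomputable def heaviside (t : ℝ) : ℝ := if 0 < t then 1 else 0

theorem heaviside_nonneg (t : ℝ) : 0 ≤ heaviside t := by
  unfold heaviside; split_ifs <;> norm_num

theorem heaviside_le_one (t : ℝ) : heaviside t ≤ 1 := by
  unfold heaviside; split_ifs <;> norm_num

theorem heaviside_of_pos {t : ℝ} (h : 0 < t) : heaviside t = 1 := if_pos h

theorem heaviside_of_nonpos {t : ℝ} (h : t ≤ 0) : heaviside t = 0 := if_neg h.not_gt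

theorem heaviside_congr {s t : ℝ} (h : 0 < s ↔ 0 < t) : heaviside s = heaviside t :=
  if_congr h rfl rfl

theorem measurable_heaviside : Measurable heaviside :=
  Measurable.ite measurableSet_Ioi measurable_const measurable_const

section EnergyDensity

variable {V : Type*} [NormedAddCommGroup V] [InnerProductSpace ℝ V] [CompleteSpace V]
  {u v : V → ℝ} {x : V}

/-- The Alt–Caffarelli energy density `‖∇u‖² + 𝟙_{u > 0}` as a real function, so that differences
of densities can be integrated. -/
noncomputable def energyDensity (u : V → ℝ) (x : V) : ℝ := ‖∇ u x‖ ^ 2 + heaviside (u x)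

theorem energyDensity_nonneg (u : V → ℝ) (x : V) : 0 ≤ energyDensity u x :=
  add_nonneg (sq_nonneg _) (heaviside_nonneg _)

theorem energyDensity_le {K : ℝ≥0} (hu : LipschitzWith K u) (x : V) :
    energyDensity u x ≤ (K : ℝ) ^ 2 + 1 :=
  add_le_add (pow_le_pow_left₀ (norm_nonneg _) (norm_gradient_le hu x) 2) (heaviside_le_one _)

theorem energyDensity_congr (h : u =ᶠ[𝓝 x] v) : energyDensity u x = energyDensity v x := by
  unfold energyDensity; rw [h.gradient_eq, h.eq_of_nhds]

theorem energyDensity_congr_of_notMem {K : Set V} (hK : IsClosed K)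
    (h : ∀ x ∉ K, v x = u x) (hx : x ∉ K) : energyDensity v x = energyDensity u x := by
  apply energyDensity_congr
  filter_upwards [hK.isOpen_compl.mem_nhds hx] with y hy using h y hy

theorem measurable_gradient [MeasurableSpace V] [BorelSpace V] (f : V → ℝ) : Measurable (∇ f) :=
  (InnerProductSpace.toDual ℝ V).symm.continuous.measurable.comp (measurable_fderiv ℝ f)

theorem measurable_energyDensity [MeasurableSpace V] [BorelSpace V] (hu : Continuous u) :
    Measurable (energyDensity u) :=
  ((measurable_gradient u).norm.pow_const 2).add (measurable_heaviside.comp hu.measurable)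

end EnergyDensity

section Minimizers

variable {V : Type*} [NormedAddCommGroup V] [InnerProductSpace ℝ V] [FiniteDimensional ℝ V]
  [MeasurableSpace V] [BorelSpace V]

theorem IsLipschitz.ae_differentiableAt {f : V → ℝ} (hf : IsLipschitz f) :
    ∀ᵐ x : V, DifferentiableAt ℝ f x :=
  let ⟨_, h⟩ := hf; h.ae_differentiableAt

theorem ae_energyDensity_max_add_min {a b : V → ℝ} (ha : IsLipschitz a) (hb : IsLipschitz b) :
    ∀ᵐ x : V, energyDensity (fun y => max (a y) (b y)) x
      + energyDensity (fun y => min (a y) (b y)) x = energyDensity a x + energyDensity b x := by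
  filter_upwards [ha.ae_differentiableAt, hb.ae_differentiableAt,
    (ha.max hb).ae_differentiableAt, (ha.min hb).ae_differentiableAt] with x h₁ h₂ h₃ h₄
  simp only [energyDensity]
  rcases le_total (a x) (b x) with h | h
  · obtain ⟨e₁, e₂⟩ := gradient_max_min_of_le h₁ h₂ h₃ h₄ h
    rw [e₁, e₂, max_eq_right h, min_eq_left h, add_comm]
  · simp only [max_comm (a _), min_comm (a _)] at h₃ h₄ ⊢
    obtain ⟨e₁, e₂⟩ := gradient_max_min_of_le h₂ h₁ h₃ h₄ h
    rw [e₁, e₂, max_eq_right h, min_eq_left h]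

theorem integrableOn_of_forall_norm_le {F : Type*} [NormedAddCommGroup F] {g : V → F} {s : Set V}
    (hs : Bornology.IsBounded s) (hg : AEStronglyMeasurable g) (C : ℝ) (hC : ∀ x, ‖g x‖ ≤ C) :
    IntegrableOn g s :=
  Measure.integrableOn_of_bounded (M := C) hs.measure_lt_top.ne hg (Eventually.of_forall hC)

theorem integrable_of_forall_norm_le {g : V → ℝ} {K : Set V} (hK : IsCompact K)
    (hg : AEStronglyMeasurable g) (C : ℝ) (hC : ∀ x, ‖g x‖ ≤ C) (h0 : ∀ x ∉ K, g x = 0) :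
    Integrable g :=
  (integrableOn_iff_integrable_of_support_subset
    (fun x hx => by by_contra h; exact hx (h0 x h))).1
    (integrableOn_of_forall_norm_le hK.isBounded hg C hC)

theorem integrableOn_ball {g : V → ℝ} (hg : Continuous g) (c : V) (r : ℝ) :
    IntegrableOn g (ball c r) :=
  (hg.continuousOn.integrableOn_compact (isCompact_closedBall c r)).mono_set ball_subset_closedBall

theorem integrable_inner_gradient {f ζ : V → ℝ} {K : Set V} (hf : IsLipschitz f)
    (hζ : IsLipschitz ζ) (hK : IsCompact K) (h0 : ∀ x ∉ K, ζ x = 0) :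
    Integrable (fun x => ⟪∇ f x, ∇ ζ x⟫) := by
  obtain ⟨A, hA⟩ := hf
  obtain ⟨B, hB⟩ := hζ
  refine integrable_of_forall_norm_le hK
    ((measurable_gradient f).inner (measurable_gradient ζ)).aestronglyMeasurable
    (A * B) (norm_inner_gradient_le hA hB) fun x hx => ?_
  rw [gradient_eq_zero_of_notMem hK.isClosed h0 hx, inner_zero_right]

theorem integrable_norm_gradient_sq {ζ : V → ℝ} {K : Set V} (hζ : IsLipschitz ζ)
    (hK : IsCompact K) (h0 : ∀ x ∉ K, ζ x = 0) : Integrable (fun x => ‖∇ ζ x‖ ^ 2) := by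
  simpa only [real_inner_self_eq_norm_sq] using integrable_inner_gradient hζ hζ hK h0

theorem integrableOn_energyDensity {u : V → ℝ} {L : ℝ≥0} (hu : LipschitzWith L u) {s : Set V}
    (hs : Bornology.IsBounded s) : IntegrableOn (energyDensity u) s :=
  integrableOn_of_forall_norm_le hs
    (measurable_energyDensity hu.continuous).aestronglyMeasurable (L ^ 2 + 1) fun x => by
      rw [Real.norm_of_nonneg (energyDensity_nonneg _ _)]; exact energyDensity_le hu x

theorem integrable_energyDensity_sub {u v : V → ℝ} {K : Set V} (hu : IsLipschitz u)
    (hv : IsLipschitz v) (hK : IsCompact K) (h0 : ∀ x ∉ K, v x = u x) :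
    Integrable (fun x => energyDensity v x - energyDensity u x) := by
  obtain ⟨A, hA⟩ := hu
  obtain ⟨B, hB⟩ := hv
  refine (integrableOn_iff_integrable_of_support_subset fun x hx => ?_).1
    ((integrableOn_energyDensity hB hK.isBounded).sub (integrableOn_energyDensity hA hK.isBounded))
  by_contra hxK
  exact hx (sub_eq_zero.2 (energyDensity_congr_of_notMem hK.isClosed h0 hxK))

/-- Nonnegative `L`-Lipschitz minimizers of the Alt–Caffarelli energy in `Ω` among Lipschitz
competitors that agree with `u` off a compact subset of `Ω`. Minimality is phrased through the
integral of the difference of the energy densities, which is finite even when `Ω` is unbounded. -/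
structure IsLipMinimizer (L : ℝ≥0) (Ω : Set V) (u : V → ℝ) : Prop where
  nonneg : ∀ x, 0 ≤ u x
  lipschitzWith : LipschitzWith L u
  integral_sub_nonneg : ∀ v : V → ℝ, (∀ x, 0 ≤ v x) → IsLipschitz v → ∀ K : Set V, IsCompact K →
    K ⊆ Ω → (∀ x ∉ K, v x = u x) → 0 ≤ ∫ x, (energyDensity v x - energyDensity u x)

/-- Weakly harmonic functions in `P`, tested with Lipschitz functions vanishing off a compact
subset of `P`. -/
def WeaklyHarmonicOn (P : Set V) (f : V → ℝ) : Prop :=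
  ∀ ζ : V → ℝ, IsLipschitz ζ → ∀ K : Set V, IsCompact K → K ⊆ P → (∀ x ∉ K, ζ x = 0) →
    ∫ x, ⟪∇ f x, ∇ ζ x⟫ = 0

namespace WeaklyHarmonicOn

variable {P Q : Set V} {f g : V → ℝ}

theorem mono (h : WeaklyHarmonicOn P f) (hQ : Q ⊆ P) : WeaklyHarmonicOn Q f :=
  fun ζ hζ K hK hKQ h0 => h ζ hζ K hK (hKQ.trans hQ) h0

theorem sub_const_mul (hf : WeaklyHarmonicOn P f) (hg : WeaklyHarmonicOn P g)
    (lf : IsLipschitz f) (lg : IsLipschitz g) (c : ℝ) :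
    WeaklyHarmonicOn P (fun x => f x - c * g x) := by
  intro ζ hζ K hK hKP h0
  have hae : ∀ᵐ x : V, ⟪∇ (fun x => f x - c * g x) x, ∇ ζ x⟫
      = ⟪∇ f x, ∇ ζ x⟫ - c * ⟪∇ g x, ∇ ζ x⟫ := by
    filter_upwards [lf.ae_differentiableAt, lg.ae_differentiableAt] with x hx hx'
    rw [gradient_sub hx (hx'.const_mul c), gradient_const_mul c hx', inner_sub_left,
      real_inner_smul_left]
  rw [integral_congr_ae hae, integral_sub (integrable_inner_gradient lf hζ hK h0)
    ((integrable_inner_gradient lg hζ hK h0).const_mul c), integral_const_mul,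
    hf ζ hζ K hK hKP h0, hg ζ hζ K hK hKP h0, mul_zero, sub_zero]

theorem neg (hf : WeaklyHarmonicOn P f) : WeaklyHarmonicOn P (fun x => -f x) := by
  intro ζ hζ K hK hKP h0
  simp only [gradient_neg, inner_neg_left, integral_neg, hf ζ hζ K hK hKP h0, neg_zero]

end WeaklyHarmonicOn

namespace IsLipMinimizer

variable {L : ℝ≥0} {Ω Ω' : Set V} {u : V → ℝ}

theorem isLipschitz (h : IsLipMinimizer L Ω u) : IsLipschitz u := ⟨L, h.lipschitzWith⟩

theorem mono (h : IsLipMinimizer L Ω u) (hΩ : Ω' ⊆ Ω) : IsLipMinimizer L Ω' u :=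
  ⟨h.nonneg, h.lipschitzWith, fun v hv lv K hK hKΩ hvu =>
    h.integral_sub_nonneg v hv lv K hK (hKΩ.trans hΩ) hvu⟩

theorem integral_inner_gradient_nonneg_of_heaviside_eq (h : IsLipMinimizer L Ω u) {ζ : V → ℝ}
    (hζ : IsLipschitz ζ) {K : Set V} (hK : IsCompact K) (hKΩ : K ⊆ Ω) (h0 : ∀ x ∉ K, ζ x = 0)
    {t₀ : ℝ} (ht₀ : 0 < t₀) (hnonneg : ∀ t, 0 < t → t < t₀ → ∀ x, 0 ≤ u x + t * ζ x)
    (hsame : ∀ t, 0 < t → t < t₀ → ∀ᵐ x : V, heaviside (u x + t * ζ x) = heaviside (u x)) :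
    0 ≤ ∫ x, ⟪∇ u x, ∇ ζ x⟫ := by
  suffices 0 ≤ 2 * ∫ x, ⟪∇ u x, ∇ ζ x⟫ by linarith
  refine nonneg_of_forall_small_quadratic_nonneg (b := ∫ x, ‖∇ ζ x‖ ^ 2) ht₀ fun t ht ht' => ?_
  have hmin := h.integral_sub_nonneg (fun x => u x + t * ζ x) (hnonneg t ht ht')
    (h.isLipschitz.add (hζ.const_mul t)) K hK hKΩ (fun x hx => by simp [h0 x hx])
  have hae : ∀ᵐ x : V, energyDensity (fun x => u x + t * ζ x) x - energyDensity u x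
      = t * (2 * ⟪∇ u x, ∇ ζ x⟫) + t ^ 2 * ‖∇ ζ x‖ ^ 2 := by
    filter_upwards [h.isLipschitz.ae_differentiableAt, hζ.ae_differentiableAt, hsame t ht ht']
      with x hx hx' hxt
    rw [energyDensity, energyDensity, norm_gradient_add_const_mul_sq hx hx', hxt]
    ring
  rwa [integral_congr_ae hae, integral_add
    (((integrable_inner_gradient h.isLipschitz hζ hK h0).const_mul 2).const_mul t)
    ((integrable_norm_gradient_sq hζ hK h0).const_mul _), integral_const_mul, integral_const_mul,
    integral_const_mul] at hmin

theorem integral_inner_gradient_nonneg (h : IsLipMinimizer L Ω u) {ζ : V → ℝ}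
    (hζ : IsLipschitz ζ) {K : Set V} (hK : IsCompact K) (hKΩ : K ⊆ Ω) (hKu : ∀ x ∈ K, 0 < u x)
    (h0 : ∀ x ∉ K, ζ x = 0) : 0 ≤ ∫ x, ⟪∇ u x, ∇ ζ x⟫ := by
  obtain ⟨m, hm, hum⟩ := hK.exists_forall_le' h.isLipschitz.continuous.continuousOn hKu
  obtain ⟨M, hM, hζM⟩ := (hK.image hζ.continuous).isBounded.exists_pos_norm_le
  have hpos : ∀ t, 0 < t → t < m / M → ∀ x ∈ K, 0 < u x + t * ζ x := fun t ht ht' x hx => by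
    have h₁ := hum x hx
    have h₂ := neg_le_of_abs_le (hζM (ζ x) (mem_image_of_mem ζ hx))
    have h₃ : t * M < m := (lt_div_iff₀ hM).1 ht'
    nlinarith
  refine h.integral_inner_gradient_nonneg_of_heaviside_eq hζ hK hKΩ h0 (div_pos hm hM)
    (fun t ht ht' x => ?_) (fun t ht ht' => .of_forall fun x => ?_)
  · by_cases hx : x ∈ K
    · exact (hpos t ht ht' x hx).le
    · simpa [h0 x hx] using h.nonneg x
  · by_cases hx : x ∈ K
    · rw [heaviside_of_pos (hpos t ht ht' x hx), heaviside_of_pos (hKu x hx)]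
    · simp [h0 x hx]

theorem weaklyHarmonicOn (h : IsLipMinimizer L Ω u) : WeaklyHarmonicOn ({x | 0 < u x} ∩ Ω) u := by
  intro ζ hζ K hK hKP h0
  have hKΩ : K ⊆ Ω := fun x hx => (hKP hx).2
  have hKu : ∀ x ∈ K, 0 < u x := fun x hx => (hKP hx).1
  refine le_antisymm ?_ (h.integral_inner_gradient_nonneg hζ hK hKΩ hKu h0)
  have hneg := h.integral_inner_gradient_nonneg hζ.neg hK hKΩ hKu (fun x hx => by simp [h0 x hx])
  simp only [gradient_neg, inner_neg_right, integral_neg] at hneg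
  linarith

end IsLipMinimizer

end Minimizers

/-! ### Mean value inequalities -/

section MeanValue

variable {V : Type*} [NormedAddCommGroup V] [InnerProductSpace ℝ V] [FiniteDimensional ℝ V]
  [MeasurableSpace V] [BorelSpace V]

theorem setIntegral_unitBall_comp_add_smul (F : V → ℝ) (x₀ : V) {s : ℝ} (hs : 0 < s) :
    ∫ y in ball (0 : V) 1, F (x₀ + s • y) =
      (s ^ Module.finrank ℝ V)⁻¹ * ∫ y in ball x₀ s, F y := by
  rw [Measure.setIntegral_comp_smul_of_pos volume (fun z => F (x₀ + z)) _ hs,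
    _root_.smul_ball hs.ne', smul_zero, Real.norm_of_nonneg hs.le, mul_one, smul_eq_mul,
    ← (measurePreserving_add_left volume x₀).setIntegral_preimage_emb
      (measurableEmbedding_addLeft x₀) F (ball x₀ s)]
  congr 3
  ext z; simp

theorem volume_real_ball_pos (x₀ : V) {s : ℝ} (hs : 0 < s) : 0 < volume.real (ball x₀ s) :=
  ENNReal.toReal_pos (measure_ball_pos _ _ hs).ne' measure_ball_lt_top.ne

theorem volume_real_ball_mul (x y : V) {c : ℝ} (hc : 0 < c) (s : ℝ) :
    volume.real (ball x (c * s)) = c ^ Module.finrank ℝ V * volume.real (ball y s) := by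
  rw [Measure.real, Measure.real, Measure.addHaar_ball_mul_of_pos _ _ hc, ENNReal.toReal_mul,
    ENNReal.toReal_ofReal (by positivity), Measure.addHaar_ball_center volume y]

theorem ae_comp_add_smul {p : V → Prop} (h : ∀ᵐ z, p z) (x₀ : V) {s : ℝ} (hs : s ≠ 0) :
    ∀ᵐ y, p (x₀ + s • y) :=
  (Measure.quasiMeasurePreserving_smul volume hs).ae
    ((measurePreserving_add_left volume x₀).quasiMeasurePreserving.ae h)

theorem hasDerivAt_setIntegral_unitBall {F : V → ℝ} {K : ℝ≥0} (hF : LipschitzWith K F) (x₀ : V)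
    {s : ℝ} (hs : 0 < s) :
    HasDerivAt (fun s => ∫ y in ball (0 : V) 1, F (x₀ + s • y))
      (∫ y in ball (0 : V) 1, ⟪∇ F (x₀ + s • y), y⟫) s := by
  have hcont : ∀ t : ℝ, Continuous fun y : V => F (x₀ + t • y) := fun t =>
    hF.continuous.comp (by fun_prop)
  refine (hasDerivAt_integral_of_dominated_loc_of_lip (bound := fun _ => (K : ℝ))
    (s := univ) univ_mem (Eventually.of_forall fun t => (hcont t).aestronglyMeasurable)
    (integrableOn_ball (hcont s) 0 1)
    (((measurable_gradient F).comp (by fun_prop)).inner measurable_id).aestronglyMeasurable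
    ?_ (integrableOn_ball continuous_const 0 1) ?_).2
  · filter_upwards [ae_restrict_mem measurableSet_ball] with y hy
    refine LipschitzOnWith.of_dist_le_mul fun a _ b _ => ?_
    simp only [Real.coe_nnabs, NNReal.abs_eq]
    refine (hF.dist_le_mul _ _).trans (mul_le_mul_of_nonneg_left ?_ K.2)
    rw [dist_add_left, dist_eq_norm, ← sub_smul, norm_smul, Real.dist_eq]
    exact mul_le_of_le_one_right (abs_nonneg _) (mem_ball_zero_iff.1 hy).le
  · filter_upwards [ae_restrict_of_ae (ae_comp_add_smul hF.ae_differentiableAt x₀ hs.ne')]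
      with y hy
    have hline : HasDerivAt (fun t : ℝ => x₀ + t • y) y s := by
      simpa using ((hasDerivAt_id s).smul_const y).const_add x₀
    have hcomp := hy.hasFDerivAt.comp_hasDerivAt s hline
    rwa [← inner_gradient_left] at hcomp

theorem continuous_setIntegral_unitBall {F : V → ℝ} (hF : Continuous F) (x₀ : V) :
    Continuous (fun s : ℝ => ∫ y in ball (0 : V) 1, F (x₀ + s • y)) := by
  refine continuous_iff_continuousAt.2 fun s₀ => ?_
  obtain ⟨M, -, hM⟩ :=
    ((isCompact_closedBall x₀ (|s₀| + 1)).image hF).isBounded.exists_pos_norm_le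
  refine continuousAt_of_dominated (bound := fun _ => M)
    (Eventually.of_forall fun t => (hF.comp (by fun_prop)).aestronglyMeasurable) ?_
    (integrableOn_ball continuous_const 0 1)
    (Eventually.of_forall fun y => (hF.comp (by fun_prop)).continuousAt)
  filter_upwards [ball_mem_nhds s₀ one_pos] with s hs
  filter_upwards [ae_restrict_mem measurableSet_ball] with y hy
  refine hM _ (mem_image_of_mem F ?_)
  have hs' : |s| ≤ |s₀| + 1 := by
    have := abs_sub_abs_le_abs_sub s s₀
    have : |s - s₀| < 1 := by simpa [Real.dist_eq] using hs
    linarith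
  rw [mem_closedBall, dist_eq_norm, add_sub_cancel_left, norm_smul, Real.norm_eq_abs]
  exact (mul_le_of_le_one_right (abs_nonneg _) (mem_ball_zero_iff.1 hy).le).trans hs'

theorem monotoneOn_setIntegral_unitBall {F : V → ℝ} (hF : IsLipschitz F) (x₀ : V) {r : ℝ}
    (h : ∀ s, 0 < s → s < r → 0 ≤ ∫ y in ball x₀ s, ⟪∇ F y, y - x₀⟫) :
    MonotoneOn (fun s : ℝ => ∫ y in ball (0 : V) 1, F (x₀ + s • y)) (Icc 0 r) := by
  obtain ⟨K, hK⟩ := hF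
  refine monotoneOn_of_deriv_nonneg (convex_Icc 0 r)
    (continuous_setIntegral_unitBall hK.continuous x₀).continuousOn ?_ ?_ <;> rw [interior_Icc]
  · exact fun s hs =>
      (hasDerivAt_setIntegral_unitBall hK x₀ hs.1).differentiableAt.differentiableWithinAt
  · rintro s ⟨hs, hsr⟩
    have hscale := setIntegral_unitBall_comp_add_smul (fun z => s⁻¹ * ⟪∇ F z, z - x₀⟫) x₀ hs
    simp only [add_sub_cancel_left, inner_smul_right, inv_mul_cancel_left₀ hs.ne'] at hscale
    rw [(hasDerivAt_setIntegral_unitBall hK x₀ hs).deriv, hscale, integral_const_mul]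
    have := h s hs hsr
    positivity

theorem mul_volume_ball_le_setIntegral {F : V → ℝ} (hF : IsLipschitz F) (x₀ : V) {r : ℝ}
    (hr : 0 < r) (h : ∀ s, 0 < s → s < r → 0 ≤ ∫ y in ball x₀ s, ⟪∇ F y, y - x₀⟫) :
    F x₀ * volume.real (ball x₀ r) ≤ ∫ y in ball x₀ r, F y := by
  have hle := monotoneOn_setIntegral_unitBall hF x₀ h (left_mem_Icc.2 hr.le)
    (right_mem_Icc.2 hr.le) hr.le
  simp only [zero_smul, add_zero] at hle
  rw [setIntegral_unitBall_comp_add_smul F x₀ hr, setIntegral_const, smul_eq_mul,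
    le_inv_mul_iff₀ (by positivity)] at hle
  rwa [← mul_one r, volume_real_ball_mul x₀ 0 hr, mul_one, mul_left_comm, mul_comm (F x₀)]

theorem eq_zero_of_setIntegral_ball_le_zero {f : V → ℝ} (hf : Continuous f) {x₀ : V} {r : ℝ}
    (h0 : ∀ x ∈ ball x₀ r, 0 ≤ f x) (hi : ∫ y in ball x₀ r, f y ≤ 0) :
    ∀ x ∈ ball x₀ r, f x = 0 := by
  have hae : 0 ≤ᵐ[volume.restrict (ball x₀ r)] f :=
    (ae_restrict_mem measurableSet_ball).mono h0
  have hzero := (setIntegral_eq_zero_iff_of_nonneg_ae hae (integrableOn_ball hf x₀ r)).1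
    (le_antisymm hi (integral_nonneg_of_ae hae))
  exact Measure.eqOn_open_of_ae_eq hzero isOpen_ball hf.continuousOn continuousOn_const

end MeanValue

section QuadraticBump

/-- The test function `max ((s² - ‖x - x₀‖²) / 2) 0`: testing a vector field `G` with it computes
the integral of `⟪G x, x - x₀⟫` over the ball of radius `s`, the derivative of spherical means. -/
noncomputable def quadraticBump {V : Type*} [NormedAddCommGroup V] (x₀ : V) (s : ℝ) (x : V) : ℝ :=
  max ((s ^ 2 - ‖x - x₀‖ ^ 2) / 2) 0

section Normed

variable {V : Type*} [NormedAddCommGroup V] {x₀ x : V} {s : ℝ}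

theorem quadraticBump_nonneg (x₀ : V) (s : ℝ) (x : V) : 0 ≤ quadraticBump x₀ s x :=
  le_max_right _ _

theorem quadraticBump_eq_zero (hs : 0 ≤ s) (hx : x ∉ ball x₀ s) : quadraticBump x₀ s x = 0 := by
  have : s ≤ ‖x - x₀‖ := by simpa [dist_eq_norm] using hx
  exact max_eq_right (by nlinarith [norm_nonneg (x - x₀)])

theorem quadraticBump_eq_zero_of_notMem_closedBall (hs : 0 ≤ s) (hx : x ∉ closedBall x₀ s) :
    quadraticBump x₀ s x = 0 :=
  quadraticBump_eq_zero hs fun h => hx (ball_subset_closedBall h)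

theorem quadraticBump_le (x₀ : V) (s : ℝ) (x : V) : quadraticBump x₀ s x ≤ s ^ 2 / 2 :=
  max_le (by nlinarith [sq_nonneg ‖x - x₀‖]) (by positivity)

theorem quadraticBump_eq_of_mem (hx : x ∈ ball x₀ s) :
    quadraticBump x₀ s x = (s ^ 2 - ‖x - x₀‖ ^ 2) / 2 := by
  have : ‖x - x₀‖ < s := by simpa [dist_eq_norm] using hx
  exact max_eq_left (by nlinarith [norm_nonneg (x - x₀)])

theorem quadraticBump_eq_sub_min_sq (hs : 0 ≤ s) (x : V) :
    quadraticBump x₀ s x = (s ^ 2 - (min ‖x - x₀‖ s) ^ 2) / 2 := by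
  by_cases hx : x ∈ ball x₀ s
  · rw [quadraticBump_eq_of_mem hx, min_eq_left (by simpa [dist_eq_norm] using (mem_ball.1 hx).le)]
  · rw [quadraticBump_eq_zero hs hx, min_eq_right (by simpa [dist_eq_norm] using hx)]
    ring

theorem isLipschitz_quadraticBump (x₀ : V) (hs : 0 ≤ s) : IsLipschitz (quadraticBump x₀ s) := by
  refine isLipschitz_of_abs_sub_le s fun x y => ?_
  rw [quadraticBump_eq_sub_min_sq hs, quadraticBump_eq_sub_min_sq hs]
  set a := min ‖x - x₀‖ s
  set b := min ‖y - x₀‖ s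
  have hdiff : |a - b| ≤ dist x y := by
    refine (abs_inf_sub_inf_le_abs _ _ _).trans ((abs_norm_sub_norm_le _ _).trans ?_)
    rw [sub_sub_sub_cancel_right, dist_eq_norm]
  have hsum : |a + b| ≤ 2 * s := by
    rw [abs_of_nonneg (by positivity)]
    linarith [min_le_right ‖x - x₀‖ s, min_le_right ‖y - x₀‖ s]
  have hfactor : (s ^ 2 - a ^ 2) / 2 - (s ^ 2 - b ^ 2) / 2 = -((a - b) * (a + b) / 2) := by ring
  rw [hfactor, abs_neg, abs_div, abs_mul, abs_of_pos (two_pos : (0 : ℝ) < 2)]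
  linarith [mul_le_mul hdiff hsum (abs_nonneg _) dist_nonneg]

end Normed

theorem gradient_quadraticBump_of_mem {V : Type*} [NormedAddCommGroup V] [InnerProductSpace ℝ V]
    [CompleteSpace V] {x₀ x : V} {s : ℝ} (hx : x ∈ ball x₀ s) :
    ∇ (quadraticBump x₀ s) x = -(x - x₀) := by
  have hev : quadraticBump x₀ s =ᶠ[𝓝 x] fun x => (s ^ 2 - ‖x - x₀‖ ^ 2) / 2 := by
    filter_upwards [isOpen_ball.mem_nhds hx] with y hy using quadraticBump_eq_of_mem hy
  rw [hev.gradient_eq]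
  refine HasGradientAt.gradient ?_
  rw [hasGradientAt_iff_hasFDerivAt]
  have hsq := (((((hasFDerivAt_id x).sub_const x₀).norm_sq).const_sub (s ^ 2)).mul_const
    (1 / 2 : ℝ))
  refine (hsq.congr_fderiv ?_).congr_of_eventuallyEq (Eventually.of_forall fun y => ?_)
  · ext v; simp
  · simp only [id]; ring

variable {V : Type*} [NormedAddCommGroup V] [InnerProductSpace ℝ V] [FiniteDimensional ℝ V]
  [MeasurableSpace V] [BorelSpace V]

theorem ae_gradient_quadraticBump (x₀ : V) {s : ℝ} (hs : 0 < s) :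
    ∀ᵐ x : V, ∇ (quadraticBump x₀ s) x = (ball x₀ s).indicator (fun x => -(x - x₀)) x := by
  filter_upwards [measure_eq_zero_iff_ae_notMem.1
    (Measure.addHaar_sphere_of_ne_zero volume x₀ hs.ne')] with x hx
  by_cases h : x ∈ ball x₀ s
  · rw [indicator_of_mem h, gradient_quadraticBump_of_mem h]
  · rw [indicator_of_notMem h]
    refine gradient_eq_zero_of_notMem isClosed_closedBall
      (fun y hy => quadraticBump_eq_zero_of_notMem_closedBall hs.le hy) fun hc => ?_
    rw [← ball_union_sphere] at hc
    exact hc.elim h hx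

theorem integral_inner_gradient_quadraticBump (G : V → V) (x₀ : V) {s : ℝ} (hs : 0 < s) :
    ∫ x, ⟪G x, ∇ (quadraticBump x₀ s) x⟫ = -∫ x in ball x₀ s, ⟪G x, x - x₀⟫ := by
  rw [← integral_neg, ← integral_indicator measurableSet_ball]
  refine integral_congr_ae ?_
  filter_upwards [ae_gradient_quadraticBump x₀ hs] with x hx
  rw [hx]
  by_cases h : x ∈ ball x₀ s
  · rw [indicator_of_mem h, indicator_of_mem h, inner_neg_right]
  · simp [indicator_of_notMem h]

namespace WeaklyHarmonicOn

variable {P : Set V} {f : V → ℝ} {x₀ : V} {r : ℝ}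

theorem mul_volume_ball_le_setIntegral (hf : WeaklyHarmonicOn P f) (lf : IsLipschitz f)
    (hr : 0 < r) (hP : ball x₀ r ⊆ P) :
    f x₀ * volume.real (ball x₀ r) ≤ ∫ y in ball x₀ r, f y := by
  refine AltCaffarelli.mul_volume_ball_le_setIntegral lf x₀ hr fun s hs hsr => ?_
  have htest := hf (quadraticBump x₀ s) (isLipschitz_quadraticBump x₀ hs.le) (closedBall x₀ s)
    (isCompact_closedBall _ _) ((closedBall_subset_ball hsr).trans hP)
    (fun x hx => quadraticBump_eq_zero_of_notMem_closedBall hs.le hx)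
  rw [integral_inner_gradient_quadraticBump _ _ hs] at htest
  linarith

theorem mul_volume_ball_eq_setIntegral (hf : WeaklyHarmonicOn P f) (lf : IsLipschitz f)
    (hr : 0 < r) (hP : ball x₀ r ⊆ P) :
    f x₀ * volume.real (ball x₀ r) = ∫ y in ball x₀ r, f y := by
  refine le_antisymm (hf.mul_volume_ball_le_setIntegral lf hr hP) ?_
  have hneg := hf.neg.mul_volume_ball_le_setIntegral lf.neg hr hP
  rw [integral_neg] at hneg
  linarith

theorem eq_zero_of_nonneg_of_center_eq_zero (hf : WeaklyHarmonicOn P f) (lf : IsLipschitz f)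
    (hr : 0 < r) (hP : ball x₀ r ⊆ P) (h0 : ∀ x ∈ ball x₀ r, 0 ≤ f x) (hx : f x₀ = 0) :
    ∀ x ∈ ball x₀ r, f x = 0 := by
  refine eq_zero_of_setIntegral_ball_le_zero lf.continuous h0 ?_
  rw [← hf.mul_volume_ball_eq_setIntegral lf hr hP, hx, zero_mul]

end WeaklyHarmonicOn

end QuadraticBump

section Subharmonic

variable {V : Type*} [NormedAddCommGroup V] [InnerProductSpace ℝ V]

/-- `steepRamp f ε k` rises from `0` on `{f ≤ ε}` to `1` with slope `k + 1`; these functions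
increase to the indicator of `{f > ε}`. -/
noncomputable def steepRamp {X : Type*} (f : X → ℝ) (ε : ℝ) (k : ℕ) (x : X) : ℝ :=
  min (max ((k + 1) * (f x - ε)) 0) 1

theorem steepRamp_nonneg {X : Type*} (f : X → ℝ) (ε : ℝ) (k : ℕ) (x : X) :
    0 ≤ steepRamp f ε k x :=
  le_min (le_max_right _ _) zero_le_one

theorem steepRamp_le_one {X : Type*} (f : X → ℝ) (ε : ℝ) (k : ℕ) (x : X) :
    steepRamp f ε k x ≤ 1 :=
  min_le_right _ _

theorem steepRamp_eq_zero {X : Type*} {f : X → ℝ} {ε : ℝ} {x : X} (h : f x ≤ ε) (k : ℕ) :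
    steepRamp f ε k x = 0 := by
  have : ((k : ℝ) + 1) * (f x - ε) ≤ 0 :=
    mul_nonpos_of_nonneg_of_nonpos (by positivity) (sub_nonpos.2 h)
  rw [steepRamp, max_eq_right this, min_eq_left zero_le_one]

theorem eventually_steepRamp_eq_one {X : Type*} {f : X → ℝ} {ε : ℝ} {x : X} (h : ε < f x) :
    ∀ᶠ k : ℕ in atTop, steepRamp f ε k x = 1 := by
  have hpos : 0 < f x - ε := sub_pos.2 h
  filter_upwards [eventually_ge_atTop ⌈1 / (f x - ε)⌉₊] with k hk
  have : 1 ≤ ((k : ℝ) + 1) * (f x - ε) := by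
    have := (div_le_iff₀ hpos).1 (Nat.ceil_le.1 hk)
    linarith
  rw [steepRamp, max_eq_left (by linarith), min_eq_right this]

theorem IsLipschitz.steepRamp {X : Type*} [PseudoMetricSpace X] {f : X → ℝ} (hf : IsLipschitz f)
    (ε : ℝ) (k : ℕ) : IsLipschitz (steepRamp f ε k) :=
  (((hf.sub (.const ε)).const_mul _).max (.const 0)).min (.const 1)

theorem inner_gradient_steepRamp_nonneg [CompleteSpace V] {f : V → ℝ} (hf : Continuous f)
    (ε : ℝ) (k : ℕ) {x : V} (hd : DifferentiableAt ℝ f x) :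
    0 ≤ ⟪∇ f x, ∇ (steepRamp f ε k) x⟫ := by
  rcases le_or_gt (((k : ℝ) + 1) * (f x - ε)) 0 with h | h
  · rw [gradient_eq_zero_of_forall_ge (f := steepRamp f ε k) fun y => ?_, inner_zero_right]
    rw [steepRamp_eq_zero (sub_nonpos.1 (nonpos_of_mul_nonpos_right h (by positivity)))]
    exact steepRamp_nonneg f ε k y
  rcases le_or_gt 1 (((k : ℝ) + 1) * (f x - ε)) with h1 | h1
  · rw [gradient_eq_zero_of_forall_le (f := steepRamp f ε k) fun y => ?_, inner_zero_right]
    rw [steepRamp, steepRamp, max_eq_left h.le, min_eq_right h1]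
    exact min_le_right _ _
  · have hc : Continuous fun y => ((k : ℝ) + 1) * (f y - ε) := by fun_prop
    have hev : steepRamp f ε k =ᶠ[𝓝 x] fun y => ((k : ℝ) + 1) * (f y - ε) := by
      filter_upwards [(isOpen_lt continuous_const hc).mem_nhds h,
        (isOpen_lt hc continuous_const).mem_nhds h1] with y (hy : 0 < _) (hy' : _ < 1)
      rw [steepRamp, max_eq_left hy.le, min_eq_left hy'.le]
    rw [hev.gradient_eq, gradient_const_mul _ (hd.sub_const ε),
      gradient_sub hd (differentiableAt_const ε), gradient_fun_const, sub_zero, inner_smul_right,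
      real_inner_self_eq_norm_sq]
    positivity

variable [FiniteDimensional ℝ V] [MeasurableSpace V] [BorelSpace V]

theorem tendsto_integral_steepRamp_mul_inner_gradient {f η : V → ℝ} (lf : IsLipschitz f)
    (lη : IsLipschitz η) {K : Set V} (hK : IsCompact K) (h0 : ∀ x ∉ K, η x = 0) (ε : ℝ) :
    Tendsto (fun k => ∫ x, steepRamp f ε k x * ⟪∇ f x, ∇ η x⟫) atTop
      (𝓝 (∫ x, ⟪∇ (fun y => max (f y - ε) 0) x, ∇ η x⟫)) := by
  refine tendsto_integral_of_dominated_convergence (fun x => ‖⟪∇ f x, ∇ η x⟫‖) ?_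
    (integrable_inner_gradient lf lη hK h0).norm ?_ ?_
  · exact fun k => ((lf.steepRamp ε k).continuous.measurable.mul
      ((measurable_gradient f).inner (measurable_gradient η))).aestronglyMeasurable
  · refine fun k => Eventually.of_forall fun x => ?_
    rw [norm_mul, Real.norm_of_nonneg (steepRamp_nonneg f ε k x)]
    exact mul_le_of_le_one_left (norm_nonneg _) (steepRamp_le_one f ε k x)
  · filter_upwards [lf.ae_differentiableAt] with x hd
    rw [gradient_posPart (lf.sub (.const ε)).continuous]
    split_ifs with h
    · rw [gradient_sub hd (differentiableAt_const ε), gradient_fun_const, sub_zero]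
      refine tendsto_const_nhds.congr' ?_
      filter_upwards [eventually_steepRamp_eq_one (sub_pos.1 h)] with k hk
      rw [hk, one_mul]
    · simp [steepRamp_eq_zero (sub_nonpos.1 (not_lt.1 h))]

namespace WeaklyHarmonicOn

variable {P : Set V} {f η : V → ℝ}

theorem integral_steepRamp_mul_inner_gradient_le_zero (hf : WeaklyHarmonicOn P f)
    (lf : IsLipschitz f) (lη : IsLipschitz η) (hη : ∀ x, 0 ≤ η x) {M : ℝ} (hM : ∀ x, η x ≤ M)
    {K : Set V} (hK : IsCompact K) (h0 : ∀ x ∉ K, η x = 0) {ε : ℝ}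
    (hP : ∀ x ∈ K, ε ≤ f x → x ∈ P) (k : ℕ) :
    ∫ x, steepRamp f ε k x * ⟪∇ f x, ∇ η x⟫ ≤ 0 := by
  set χ := steepRamp f ε k
  have lχ : IsLipschitz χ := lf.steepRamp ε k
  have hχ : ∀ x, |χ x| ≤ 1 := fun x => by
    rw [abs_of_nonneg (steepRamp_nonneg f ε k x)]; exact steepRamp_le_one f ε k x
  have hηM : ∀ x, |η x| ≤ M := fun x => by rw [abs_of_nonneg (hη x)]; exact hM x
  have htest := hf (fun x => χ x * η x) (lχ.mul_of_abs_le lη 1 M hχ fun x _ => hηM x)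
    (K ∩ {x | ε ≤ f x}) (hK.inter_right (isClosed_le continuous_const lf.continuous))
    (fun x hx => hP x hx.1 hx.2) fun x hx => by
      by_cases hxK : x ∈ K
      · simp only [χ, steepRamp_eq_zero (not_le.1 fun hc => hx ⟨hxK, hc⟩).le, zero_mul]
      · simp only [h0 x hxK, mul_zero]
  have hprod : ∀ᵐ x : V, ⟪∇ f x, ∇ (fun x => χ x * η x) x⟫
      = χ x * ⟪∇ f x, ∇ η x⟫ + η x * ⟪∇ f x, ∇ χ x⟫ := by
    filter_upwards [lχ.ae_differentiableAt, lη.ae_differentiableAt] with x hx hx'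
    rw [gradient_mul hx hx', inner_add_right, inner_smul_right, inner_smul_right]
  have hint₁ : Integrable (fun x => χ x * ⟪∇ f x, ∇ η x⟫) :=
    (integrable_inner_gradient lf lη hK h0).bdd_mul lχ.continuous.aestronglyMeasurable
      (c := 1) (Eventually.of_forall hχ)
  have hint₂ : Integrable (fun x => η x * ⟪∇ f x, ∇ χ x⟫) := by
    obtain ⟨A, hA⟩ := lf
    obtain ⟨B, hB⟩ := lχ
    refine integrable_of_forall_norm_le hK (lη.continuous.measurable.mul
      ((measurable_gradient f).inner (measurable_gradient χ))).aestronglyMeasurable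
      (M * (A * B)) (fun x => ?_) (fun x hx => by simp [h0 x hx])
    rw [norm_mul]
    exact mul_le_mul (hηM x) (norm_inner_gradient_le hA hB x) (norm_nonneg _)
      ((hη x).trans (hM x))
  have hnonneg : 0 ≤ ∫ x, η x * ⟪∇ f x, ∇ χ x⟫ := integral_nonneg_of_ae <|
    lf.ae_differentiableAt.mono fun x hx =>
      mul_nonneg (hη x) (inner_gradient_steepRamp_nonneg lf.continuous ε k hx)
  rw [integral_congr_ae hprod, integral_add hint₁ hint₂] at htest
  linarith

theorem integral_inner_gradient_posPart_le_zero (hf : WeaklyHarmonicOn P f) (lf : IsLipschitz f)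
    (lη : IsLipschitz η) (hη : ∀ x, 0 ≤ η x) {M : ℝ} (hM : ∀ x, η x ≤ M) {K : Set V}
    (hK : IsCompact K) (h0 : ∀ x ∉ K, η x = 0) {ε : ℝ} (hP : ∀ x ∈ K, ε ≤ f x → x ∈ P) :
    ∫ x, ⟪∇ (fun y => max (f y - ε) 0) x, ∇ η x⟫ ≤ 0 :=
  le_of_tendsto' (tendsto_integral_steepRamp_mul_inner_gradient lf lη hK h0 ε)
    (hf.integral_steepRamp_mul_inner_gradient_le_zero lf lη hη hM hK h0 hP)

theorem posPart_sub_mul_volume_ball_le_setIntegral (hf : WeaklyHarmonicOn P f)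
    (lf : IsLipschitz f) {x₀ : V} {r ε : ℝ} (hr : 0 < r)
    (hP : ∀ x ∈ ball x₀ r, ε ≤ f x → x ∈ P) :
    max (f x₀ - ε) 0 * volume.real (ball x₀ r) ≤ ∫ y in ball x₀ r, max (f y - ε) 0 := by
  refine AltCaffarelli.mul_volume_ball_le_setIntegral ((lf.sub (.const ε)).max (.const 0)) x₀ hr
    fun s hs hsr => ?_
  have htest := hf.integral_inner_gradient_posPart_le_zero lf (isLipschitz_quadraticBump x₀ hs.le)
    (quadraticBump_nonneg x₀ s) (quadraticBump_le x₀ s) (isCompact_closedBall x₀ s)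
    (fun x hx => quadraticBump_eq_zero_of_notMem_closedBall hs.le hx) (ε := ε)
    (fun x hx hx' => hP x (closedBall_subset_ball hsr hx) hx')
  rw [integral_inner_gradient_quadraticBump _ _ hs] at htest
  linarith

theorem posPart_mul_volume_ball_le_setIntegral (hf : WeaklyHarmonicOn P f) (lf : IsLipschitz f)
    {x₀ : V} {r : ℝ} (hr : 0 < r) (hP : ∀ x ∈ ball x₀ r, 0 < f x → x ∈ P) :
    max (f x₀) 0 * volume.real (ball x₀ r) ≤ ∫ y in ball x₀ r, max (f y) 0 := by
  have hlim : Tendsto (fun ε : ℝ => max (f x₀ - ε) 0 * volume.real (ball x₀ r)) (𝓝[>] 0)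
      (𝓝 (max (f x₀) 0 * volume.real (ball x₀ r))) :=
    tendsto_nhdsWithin_of_tendsto_nhds (Continuous.tendsto' (by fun_prop) _ _ (by simp))
  refine le_of_tendsto hlim ?_
  filter_upwards [self_mem_nhdsWithin] with ε (hε : 0 < ε)
  refine (hf.posPart_sub_mul_volume_ball_le_setIntegral lf hr
    fun x hx hx' => hP x hx (hε.trans_le hx')).trans (setIntegral_mono
      (integrableOn_ball ((lf.sub (.const ε)).max (.const 0)).continuous _ _)
      (integrableOn_ball (lf.max (.const 0)).continuous _ _)
      fun y => max_le_max (by linarith) le_rfl)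

end WeaklyHarmonicOn

end Subharmonic

/-! ### Nondegeneracy -/

section Plateau

/-- The cutoff equal to `ε * ρ` on `ball x (ρ / 2)`, vanishing off `ball x ρ`, with slope `2 * ε` in
between. -/
noncomputable def plateau {V : Type*} [NormedAddCommGroup V] (x : V) (ρ ε : ℝ) (y : V) : ℝ :=
  ε * max (min ρ (2 * (ρ - ‖y - x‖))) 0

variable {V : Type*} [NormedAddCommGroup V] {x y : V} {ρ ε : ℝ}

theorem lipschitzWith_plateau (x : V) (ρ : ℝ) (hε : 0 ≤ ε) :
    LipschitzWith (2 * ε).toNNReal (plateau x ρ ε) := by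
  refine LipschitzWith.of_dist_le_mul fun y z => ?_
  have hdiff : |max (min ρ (2 * (ρ - ‖y - x‖))) 0 - max (min ρ (2 * (ρ - ‖z - x‖))) 0|
      ≤ 2 * dist y z := by
    refine (abs_sup_sub_sup_le_abs _ _ _).trans ?_
    rw [min_comm ρ, min_comm ρ]
    refine (abs_inf_sub_inf_le_abs _ _ _).trans ?_
    have hrad := abs_norm_sub_norm_le (y - x) (z - x)
    rw [sub_sub_sub_cancel_right] at hrad
    rw [← mul_sub, show ρ - ‖y - x‖ - (ρ - ‖z - x‖) = -(‖y - x‖ - ‖z - x‖) by ring, abs_mul,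
      abs_two, abs_neg, dist_eq_norm]
    linarith
  rw [Real.coe_toNNReal _ (by positivity), Real.dist_eq, plateau, plateau, ← mul_sub, abs_mul,
    abs_of_nonneg hε]
  linarith [mul_le_mul_of_nonneg_left hdiff hε]

theorem plateau_nonneg (x : V) (ρ : ℝ) (hε : 0 ≤ ε) (y : V) : 0 ≤ plateau x ρ ε y :=
  mul_nonneg hε (le_max_right _ _)

theorem plateau_eq_zero (ε : ℝ) (hy : y ∉ ball x ρ) : plateau x ρ ε y = 0 := by
  have : ρ ≤ ‖y - x‖ := by simpa [dist_eq_norm] using hy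
  rw [plateau, max_eq_right ((min_le_right _ _).trans (by linarith)), mul_zero]

theorem plateau_eq (hρ : 0 < ρ) (ε : ℝ) (hy : y ∈ ball x (ρ / 2)) : plateau x ρ ε y = ε * ρ := by
  have : ‖y - x‖ < ρ / 2 := by simpa [dist_eq_norm] using hy
  rw [plateau, min_eq_left (by linarith), max_eq_left hρ.le]

end Plateau

section Nondegeneracy

variable {V : Type*} [NormedAddCommGroup V]

/-- Linear nondegeneracy of `u` in `Ω` with constant `c`: `u` exceeds `c * ρ` somewhere in each ball
of radius `ρ` centred at a positivity point. -/
def NondegenerateOn (c : ℝ) (Ω : Set V) (u : V → ℝ) : Prop :=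
  ∀ (x : V) (ρ : ℝ), 0 < ρ → ball x ρ ⊆ Ω → 0 < u x → ∃ y ∈ ball x ρ, c * ρ < u y

theorem NondegenerateOn.mono {c c' : ℝ} {Ω : Set V} {u : V → ℝ} (h : NondegenerateOn c Ω u)
    (hc : c' ≤ c) : NondegenerateOn c' Ω u := fun x ρ hρ hΩ hx => by
  obtain ⟨y, hy, hlt⟩ := h x ρ hρ hΩ hx
  exact ⟨y, hy, (mul_le_mul_of_nonneg_right hc hρ.le).trans_lt hlt⟩

variable [InnerProductSpace ℝ V]

theorem norm_sub_sq_le_of_norm_le {a b : V} {A B : ℝ} (ha : ‖a‖ ≤ A) (hb : ‖b‖ ≤ B) :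
    ‖a - b‖ ^ 2 ≤ ‖a‖ ^ 2 + 2 * (A * B) + B ^ 2 := by
  have hinner := neg_le_of_abs_le (abs_real_inner_le_norm a b)
  have hprod := mul_le_mul ha hb (norm_nonneg _) ((norm_nonneg _).trans ha)
  have hsq := pow_le_pow_left₀ (norm_nonneg _) hb 2
  rw [norm_sub_sq_real]
  linarith

theorem energyDensity_posPart_sub_plateau_le [CompleteSpace V] {u : V → ℝ} {L : ℝ≥0}
    (hu : LipschitzWith L u) {x y : V} {ρ ε : ℝ} (hρ : 0 < ρ) (hε : 0 ≤ ε)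
    (hsmall : ∀ y ∈ ball x (ρ / 2), u y ≤ ε * ρ) (hdu : DifferentiableAt ℝ u y)
    (hdψ : DifferentiableAt ℝ (plateau x ρ ε) y) :
    energyDensity (fun y => max (u y - plateau x ρ ε y) 0) y - energyDensity u y ≤
      ({y | 0 < u y} ∩ ball x ρ).indicator (fun _ => 4 * L * ε + 4 * ε ^ 2) y -
      ({y | 0 < u y} ∩ ball x (ρ / 2)).indicator (fun _ => (1 : ℝ)) y := by
  have hψ := lipschitzWith_plateau x ρ hε
  rw [energyDensity, energyDensity, gradient_posPart (f := fun y => u y - plateau x ρ ε y)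
    (hu.continuous.sub hψ.continuous)]
  split_ifs with hpos
  · have hup : 0 < u y := by linarith [plateau_nonneg x ρ hε y]
    have hnotMem : y ∉ {y | 0 < u y} ∩ ball x (ρ / 2) := fun ⟨_, hb⟩ => by
      rw [plateau_eq hρ ε hb] at hpos
      linarith [hsmall y hb]
    rw [indicator_of_notMem hnotMem, heaviside_of_pos hup,
      heaviside_of_pos (lt_max_of_lt_left hpos), gradient_sub hdu hdψ]
    by_cases hb : y ∈ ball x ρ
    · have hmem : y ∈ {y | 0 < u y} ∩ ball x ρ := ⟨hup, hb⟩
      rw [indicator_of_mem hmem]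
      have hψy := norm_gradient_le hψ y
      rw [Real.coe_toNNReal _ (by positivity)] at hψy
      linarith [norm_sub_sq_le_of_norm_le (norm_gradient_le hu y) hψy]
    · have hψ0 : ∇ (plateau x ρ ε) y = 0 := gradient_eq_zero_of_forall_ge fun z => by
        rw [plateau_eq_zero ε hb]; exact plateau_nonneg x ρ hε z
      rw [hψ0, indicator_of_notMem (fun hc => hb hc.2)]
      simp
  · have h₁ : 0 ≤ ({y | 0 < u y} ∩ ball x ρ).indicator (fun _ => 4 * (L : ℝ) * ε + 4 * ε ^ 2) y :=
      indicator_nonneg (fun _ _ => by positivity) y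
    have h₂ : ({y | 0 < u y} ∩ ball x (ρ / 2)).indicator (fun _ => (1 : ℝ)) y
        ≤ heaviside (u y) :=
      indicator_le' (fun y hy => (heaviside_of_pos hy.1).ge) (fun _ _ => heaviside_nonneg _) y
    rw [max_eq_right (not_lt.1 hpos), heaviside_of_nonpos le_rfl, norm_zero]
    linarith [sq_nonneg ‖∇ u y‖]

theorem volume_real_le_of_subset [MeasurableSpace V] [BorelSpace V] [FiniteDimensional ℝ V]
    {s t : Set V} (h : s ⊆ t) (ht : Bornology.IsBounded t) : volume.real s ≤ volume.real t :=
  measureReal_mono h ht.measure_lt_top.ne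

theorem exists_pos_le_quadratic_le {A δ : ℝ} (hA : 0 < A) (hδ : 0 < δ) :
    ∃ ε, 0 < ε ∧ ε ≤ A ∧ 4 * A * ε + 4 * ε ^ 2 ≤ δ := by
  refine ⟨min A (δ / (8 * A)), by positivity, min_le_left _ _, ?_⟩
  have h₁ : min A (δ / (8 * A)) ≤ A := min_le_left _ _
  have h₂ := (le_div_iff₀ (by positivity)).1 (min_le_right A (δ / (8 * A)))
  have h₃ : 0 < min A (δ / (8 * A)) := by positivity
  nlinarith

namespace IsLipMinimizer

variable [FiniteDimensional ℝ V] [MeasurableSpace V] [BorelSpace V]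
  {L : ℝ≥0} {Ω : Set V} {u : V → ℝ} {x : V} {ρ ε : ℝ}

/-- Comparison of `u` with `max (u - plateau) 0`, which vanishes on `ball x (ρ / 2)`. -/
theorem volume_pos_half_ball_le (h : IsLipMinimizer L Ω u) (hρ : 0 < ρ) (hε : 0 ≤ ε)
    (hΩ : closedBall x ρ ⊆ Ω) (hu : ∀ y ∈ ball x (ρ / 2), u y ≤ ε * ρ) :
    volume.real ({y | 0 < u y} ∩ ball x (ρ / 2)) ≤
      (4 * L * ε + 4 * ε ^ 2) * volume.real ({y | 0 < u y} ∩ ball x ρ) := by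
  have lψ : IsLipschitz (plateau x ρ ε) := ⟨_, lipschitzWith_plateau x ρ hε⟩
  have lv : IsLipschitz (fun y => max (u y - plateau x ρ ε y) 0) :=
    (h.isLipschitz.sub lψ).max (.const 0)
  have hK : ∀ y ∉ closedBall x ρ, max (u y - plateau x ρ ε y) 0 = u y := fun y hy => by
    rw [plateau_eq_zero ε (fun hb => hy (ball_subset_closedBall hb)), sub_zero,
      max_eq_left (h.nonneg y)]
  have hmeas : ∀ r, MeasurableSet ({y | 0 < u y} ∩ ball x r) := fun r =>
    (isOpen_lt continuous_const h.isLipschitz.continuous).measurableSet.inter measurableSet_ball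
  have hint : ∀ r (c : ℝ), Integrable (({y | 0 < u y} ∩ ball x r).indicator fun _ => c) :=
    fun r c => (integrable_indicator_iff (hmeas r)).2
      (integrableOn_const (isBounded_ball.subset inter_subset_right).measure_lt_top.ne)
  have hle := (h.integral_sub_nonneg _ (fun y => le_max_right _ _) lv _
    (isCompact_closedBall x ρ) hΩ hK).trans (integral_mono_ae
      (integrable_energyDensity_sub h.isLipschitz lv (isCompact_closedBall _ _) hK)
      ((hint ρ _).sub (hint (ρ / 2) _)) <| by
        filter_upwards [h.isLipschitz.ae_differentiableAt, lψ.ae_differentiableAt] with y hd hd'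
        exact energyDensity_posPart_sub_plateau_le h.lipschitzWith hρ hε hu hd hd')
  simp only [Pi.sub_apply] at hle
  rw [integral_sub (hint _ _) (hint _ _), integral_indicator (hmeas _),
    integral_indicator (hmeas _), setIntegral_const, setIntegral_const, smul_eq_mul,
    smul_eq_mul] at hle
  linarith

end IsLipMinimizer

variable [FiniteDimensional ℝ V] [MeasurableSpace V] [BorelSpace V]

/-- If `u` were large at `y`, then by the Lipschitz bound it would be positive on a whole ball
around `y`. -/
theorem le_of_volume_pos_ball_le {L : ℝ≥0} (hL : 0 < L) {u : V → ℝ} (hu : LipschitzWith L u)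
    {x : V} {ρ ε m : ℝ} (hρ : 0 < ρ) (hε : 0 < ε) (hεL : ε ≤ L)
    (hm : m < (ε / (2 * L)) ^ Module.finrank ℝ V)
    (hs : volume.real ({y | 0 < u y} ∩ ball x ρ) ≤ m * volume.real (ball x ρ)) :
    ∀ y ∈ closedBall x (ρ / 2), u y ≤ ε * (ρ / 2) := by
  intro y hy
  by_contra! hlarge
  have hL' : (0 : ℝ) < L := hL
  have hLt : L * (ε / (2 * L) * ρ) = ε * (ρ / 2) := by field_simp
  have hratio : ε / (2 * L) ≤ 1 / 2 := by
    rw [div_le_div_iff₀ (by positivity) two_pos]; linarith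
  have hsub : ball y (ε / (2 * L) * ρ) ⊆ {y | 0 < u y} ∩ ball x ρ := by
    intro z hz
    rw [mem_ball] at hz
    constructor
    · have hdist := (abs_le.1 (hu.dist_le_mul y z)).2
      rw [dist_comm] at hdist
      have := mul_lt_mul_of_pos_left hz hL'
      exact (by linarith : 0 < u z)
    · have := dist_triangle z y x
      have := mul_le_mul_of_nonneg_right hratio hρ.le
      rw [mem_closedBall] at hy
      rw [mem_ball]
      linarith
  have hvol := (volume_real_le_of_subset hsub (isBounded_ball.subset inter_subset_right)).trans hs
  rw [volume_real_ball_mul y x (by positivity)] at hvol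
  exact (mul_lt_mul_of_pos_right hm (volume_real_ball_pos x hρ)).not_ge hvol

theorem IsLipMinimizer.volume_pos_quarter_ball_le {L : ℝ≥0} (hL : 0 < L) {Ω : Set V} {u : V → ℝ}
    (h : IsLipMinimizer L Ω u) {x : V} {ρ ε m : ℝ} (hρ : 0 < ρ) (hε : 0 < ε) (hεL : ε ≤ L)
    (hεV : 4 * L * ε + 4 * ε ^ 2 ≤ (1 / 4) ^ Module.finrank ℝ V)
    (hm : m < (ε / (2 * L)) ^ Module.finrank ℝ V) (hΩ : closedBall x ρ ⊆ Ω)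
    (hs : volume.real ({y | 0 < u y} ∩ ball x ρ) ≤ m * volume.real (ball x ρ)) :
    volume.real ({y | 0 < u y} ∩ ball x (ρ / 4)) ≤ m * volume.real (ball x (ρ / 4)) := by
  have hsmall := le_of_volume_pos_ball_le hL h.lipschitzWith hρ hε hεL hm hs
  have hhalf := h.volume_pos_half_ball_le (x := x) (half_pos hρ) hε.le
    ((closedBall_subset_closedBall (by linarith)).trans hΩ)
    (fun y hy => hsmall y (ball_subset_closedBall (ball_subset_ball (by linarith) hy)))
  have hmono : volume.real ({y | 0 < u y} ∩ ball x (ρ / 2)) ≤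
      volume.real ({y | 0 < u y} ∩ ball x ρ) :=
    volume_real_le_of_subset (inter_subset_inter_right _ (ball_subset_ball (by linarith)))
      (isBounded_ball.subset inter_subset_right)
  rw [(by ring : ρ / 4 = 1 / 4 * ρ), volume_real_ball_mul x x (by norm_num)]
  rw [(by ring : ρ / 2 / 2 = 1 / 4 * ρ)] at hhalf
  calc _ ≤ (1 / 4) ^ Module.finrank ℝ V * (m * volume.real (ball x ρ)) :=
        hhalf.trans (mul_le_mul hεV (hmono.trans hs) measureReal_nonneg (by positivity))
    _ = _ := by ring

variable (V) in
/-- Otherwise `u` would be small on concentric balls of radii `ρ / 4 ^ k`, and so vanish at the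
centre. -/
theorem exists_lt_volume_pos_ball {L : ℝ≥0} (hL : 0 < L) :
    ∃ m : ℝ, 0 < m ∧ ∀ (Ω : Set V) (u : V → ℝ), IsLipMinimizer L Ω u → ∀ (x : V) (ρ : ℝ),
      0 < ρ → closedBall x ρ ⊆ Ω → 0 < u x →
      m * volume.real (ball x ρ) < volume.real ({y | 0 < u y} ∩ ball x ρ) := by
  obtain ⟨ε, hε, hεL, hεV⟩ := exists_pos_le_quadratic_le (NNReal.coe_pos.2 hL)
    (by positivity : (0 : ℝ) < (1 / 4) ^ Module.finrank ℝ V)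
  have hq : 0 < (ε / (2 * L)) ^ Module.finrank ℝ V :=
    pow_pos (div_pos hε (mul_pos two_pos (NNReal.coe_pos.2 hL))) _
  refine ⟨(ε / (2 * L)) ^ Module.finrank ℝ V / 2, half_pos hq, ?_⟩
  set m := (ε / (2 * L)) ^ Module.finrank ℝ V / 2
  have hm : m < (ε / (2 * L)) ^ Module.finrank ℝ V := half_lt_self hq
  intro Ω u h x ρ hρ hΩ hux
  by_contra! hc
  have hthin : ∀ k : ℕ, volume.real ({y | 0 < u y} ∩ ball x (ρ / 4 ^ k)) ≤
      m * volume.real (ball x (ρ / 4 ^ k)) := by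
    intro k
    induction k with
    | zero => simpa using hc
    | succ k ih =>
      rw [pow_succ, ← div_div]
      exact h.volume_pos_quarter_ball_le hL (by positivity) hε hεL hεV hm
        ((closedBall_subset_closedBall (div_le_self hρ.le (one_le_pow₀ (by norm_num)))).trans hΩ) ih
  have hsmall : ∀ k : ℕ, u x ≤ ε * (ρ / 4 ^ k / 2) := fun k =>
    le_of_volume_pos_ball_le hL h.lipschitzWith (by positivity) hε hεL hm (hthin k) x
      (mem_closedBall_self (by positivity))
  have hlim : Tendsto (fun k : ℕ => ε * (ρ / 4 ^ k / 2)) atTop (𝓝 0) := by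
    have hpow := tendsto_pow_atTop_atTop_of_one_lt (r := (4 : ℝ)) (by norm_num)
    simpa using ((tendsto_const_nhds.div_atTop hpow).div_const 2).const_mul ε
  exact (ge_of_tendsto' hlim hsmall).not_gt hux

variable (V) in
theorem exists_nondegenerateOn {L : ℝ≥0} (hL : 0 < L) :
    ∃ c : ℝ, 0 < c ∧ ∀ (Ω : Set V) (u : V → ℝ), IsLipMinimizer L Ω u → NondegenerateOn c Ω u := by
  obtain ⟨m, hm, hdens⟩ := exists_lt_volume_pos_ball V hL
  obtain ⟨ε, hε, -, hεV⟩ := exists_pos_le_quadratic_le (NNReal.coe_pos.2 hL)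
    (by positivity : 0 < m * (1 / 2) ^ Module.finrank ℝ V)
  refine ⟨ε / 2, by positivity, fun Ω u h x ρ hρ hΩ hux => ?_⟩
  by_contra! hsmall
  obtain ⟨r, rfl⟩ : ∃ r, ρ = 2 * r := ⟨ρ / 2, by ring⟩
  have hr : 0 < r := by linarith
  have hhalf := h.volume_pos_half_ball_le (x := x) hr hε.le
    ((closedBall_subset_ball (by linarith)).trans hΩ)
    (fun y hy => (hsmall y (ball_subset_ball (by linarith) hy)).trans (by linarith))
  have hlower := hdens Ω u h x (r / 2) (by positivity)
    ((closedBall_subset_ball (by linarith)).trans hΩ) hux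
  have hupper : volume.real ({y | 0 < u y} ∩ ball x r) ≤ volume.real (ball x r) :=
    volume_real_le_of_subset inter_subset_right isBounded_ball
  rw [(by ring : r / 2 = 1 / 2 * r)] at hlower hhalf
  rw [volume_real_ball_mul x x (by norm_num)] at hlower
  linarith [mul_le_mul hεV hupper measureReal_nonneg (by positivity)]

end Nondegeneracy

/-! ### Growth away from the free boundary -/

section SetIntegral

variable {α : Type*} [MeasurableSpace α] {μ : Measure α} {f : α → ℝ} {s A : Set α} {a b : ℝ}

theorem setIntegral_le_mul_sub_mul (hs : MeasurableSet s) (hsμ : μ s ≠ ⊤) (hA : MeasurableSet A)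
    (hAs : A ⊆ s) (hf : IntegrableOn f s μ) (hfs : ∀ x ∈ s, f x ≤ a)
    (hfA : ∀ x ∈ A, f x ≤ a - b) :
    ∫ x in s, f x ∂μ ≤ a * μ.real s - b * μ.real A := by
  have hconst : IntegrableOn (fun _ => a) s μ := integrableOn_const hsμ
  have hind : IntegrableOn (A.indicator fun _ => b) s μ :=
    (integrableOn_const hsμ).indicator hA
  have hpt : ∀ x ∈ s, f x ≤ a - A.indicator (fun _ => b) x := fun x hx => by
    by_cases hxA : x ∈ A
    · simpa only [indicator_of_mem hxA] using hfA x hxA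
    · simpa only [indicator_of_notMem hxA, sub_zero] using hfs x hx
  have hint := setIntegral_mono_on hf (hconst.sub hind) hs hpt
  simp only [Pi.sub_apply] at hint
  rwa [integral_sub hconst hind, setIntegral_indicator hA, inter_eq_self_of_subset_right hAs,
    setIntegral_const, setIntegral_const, smul_eq_mul, smul_eq_mul, mul_comm, mul_comm _ b] at hint

theorem mul_measure_le_mul_measure_superlevel {u : α → ℝ} {m K κ : ℝ} {B p : Set α}
    (hB : MeasurableSet B) (hBμ : μ B ≠ ⊤) (hp : MeasurableSet p) (hpB : p ⊆ B)
    (hu : Measurable u) (hui : IntegrableOn u B μ) (hm : 0 < m) (hκ : 0 ≤ κ) (hK : 0 ≤ K)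
    (hmean : m * μ.real B ≤ ∫ x in B, u x ∂μ) (huB : ∀ x ∈ B, u x ≤ (1 + K) * m)
    (hup : ∀ x ∈ p, u x ≤ m / 2) (hpκ : κ * μ.real B ≤ μ.real p) :
    κ / 4 * μ.real B ≤ K * μ.real ({x | (1 + κ / 4) * m ≤ u x} ∩ B) := by
  set A := {x | (1 + κ / 4) * m ≤ u x} ∩ B
  have hA : MeasurableSet A := (measurableSet_le measurable_const hu).inter hB
  have hind : IntegrableOn (A.indicator fun _ => K * m) B μ := (integrableOn_const hBμ).indicator hA
  have hind_nonneg : ∀ x, 0 ≤ A.indicator (fun _ => K * m) x :=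
    indicator_nonneg fun _ _ => by positivity
  have hκm : 0 ≤ κ / 4 * m := by positivity
  have hle : ∀ x ∈ B, u x - A.indicator (fun _ => K * m) x ≤ (1 + κ / 4) * m := fun x hx => by
    by_cases hxA : x ∈ A
    · rw [indicator_of_mem hxA]
      linarith [huB x hx]
    · rw [indicator_of_notMem hxA, sub_zero]
      exact (not_le.1 fun h => hxA ⟨h, hx⟩).le
  have hint := setIntegral_le_mul_sub_mul (b := m / 2) hB hBμ hp hpB (hui.sub hind) hle
    fun x hx => by
      simp only [Pi.sub_apply]
      linarith [hup x hx, hind_nonneg x]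
  simp only [Pi.sub_apply] at hint
  rw [integral_sub hui hind, setIntegral_indicator hA, setIntegral_const, smul_eq_mul,
    inter_eq_self_of_subset_right (inter_subset_right : A ⊆ B)] at hint
  refine le_of_mul_le_mul_left ?_ hm
  linarith [mul_le_mul_of_nonneg_left hpκ hm.le, mul_nonneg hm.le (mul_nonneg hκ
    (measureReal_nonneg (μ := μ) (s := B)))]

end SetIntegral

section Growth

variable {V : Type*} [NormedAddCommGroup V] {u : V → ℝ} {L : ℝ≥0}

theorem exists_nearest_zero [ProperSpace V] (hu : Continuous u) (hnn : ∀ z, 0 ≤ u z) {x₀ : V}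
    (h0 : u x₀ = 0) (y : V) :
    ∃ z, u z = 0 ∧ dist y z ≤ dist y x₀ ∧ ball y (dist y z) ⊆ {x | 0 < u x} := by
  obtain ⟨z, hz, hdist⟩ :=
    (isClosed_eq hu continuous_const : IsClosed {x | u x = 0}).exists_infDist_eq_dist ⟨x₀, h0⟩ y
  refine ⟨z, hz, hdist ▸ infDist_le_dist_of_mem h0, fun x hx => (hnn x).lt_of_ne' fun hux => ?_⟩
  have hfar : infDist y {x | u x = 0} ≤ dist y x := infDist_le_dist_of_mem hux
  rw [mem_ball, dist_comm] at hx
  linarith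

theorem exists_ball_subset_le_half [NormedSpace ℝ V] (hL : 0 < L) (hu : LipschitzWith L u)
    {y z : V} (hz : u z = 0) (hy : 0 < u y) :
    ∃ p, ball p (u y / (4 * L)) ⊆ ball y (dist y z) ∧
      ∀ x ∈ ball p (u y / (4 * L)), u x ≤ u y / 2 := by
  have hL' : (0 : ℝ) < L := hL
  have hyd : u y ≤ L * dist y z := by
    have := (le_abs_self _).trans (hu.dist_le_mul y z)
    rwa [hz, sub_zero] at this
  have hd : 0 < dist y z := pos_of_mul_pos_right (hy.trans_le hyd) hL'.le
  set σ := u y / (4 * L) with hσ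
  have : 0 < σ := by positivity
  have hσd : σ ≤ dist y z := by rw [hσ, div_le_iff₀ (by positivity)]; nlinarith
  refine ⟨AffineMap.lineMap z y (σ / dist y z), ball_subset_ball' ?_, fun x hx => ?_⟩
  · rw [dist_lineMap_right, Real.norm_of_nonneg (sub_nonneg.2 ((div_le_one hd).2 hσd)),
      dist_comm z y]
    field_simp
    linarith
  · have hpz : dist (AffineMap.lineMap z y (σ / dist y z)) z = σ := by
      rw [dist_lineMap_left, Real.norm_of_nonneg (by positivity), dist_comm z y,
        div_mul_cancel₀ _ hd.ne']
    have hxz : dist x z ≤ 2 * σ := by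
      linarith [dist_triangle x (AffineMap.lineMap z y (σ / dist y z)) z, mem_ball.1 hx]
    have hux := (le_abs_self _).trans (hu.dist_le_mul x z)
    rw [hz, sub_zero] at hux
    calc u x ≤ L * (2 * σ) := hux.trans (by gcongr)
      _ = u y / 2 := by rw [hσ]; field_simp; norm_num

variable [InnerProductSpace ℝ V] [FiniteDimensional ℝ V] [MeasurableSpace V] [BorelSpace V]

namespace IsLipMinimizer

theorem mul_radius_le {Ω : Set V} {c d : ℝ} {y : V} (h : IsLipMinimizer L Ω u)
    (hnd : NondegenerateOn c Ω u) (hd : 0 < d) (hyd : ball y d ⊆ {x | 0 < u x} ∩ Ω) :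
    c * d ≤ 2 ^ (Module.finrank ℝ V + 1) * u y := by
  obtain ⟨r, rfl⟩ : ∃ r, d = 2 * r := ⟨d / 2, by ring⟩
  have hr : 0 < r := by linarith
  obtain ⟨z, hz, hcz⟩ := hnd y r hr ((ball_subset_ball (by linarith)).trans
    (hyd.trans inter_subset_right)) (hyd (mem_ball_self hd)).1
  have hzy : ball z r ⊆ ball y (2 * r) := ball_subset_ball' (by linarith [mem_ball.1 hz])
  have hmono : ∫ w in ball z r, u w ≤ ∫ w in ball y (2 * r), u w :=
    setIntegral_mono_set (integrableOn_ball h.isLipschitz.continuous _ _)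
      (Eventually.of_forall h.nonneg) hzy.eventuallyLE
  rw [← h.weaklyHarmonicOn.mul_volume_ball_eq_setIntegral h.isLipschitz hr (hzy.trans hyd),
    ← h.weaklyHarmonicOn.mul_volume_ball_eq_setIntegral h.isLipschitz hd hyd,
    volume_real_ball_mul y z two_pos, ← mul_assoc] at hmono
  have huz := le_of_mul_le_mul_right hmono (volume_real_ball_pos z hr)
  rw [pow_succ]
  linarith

theorem exists_ball_density {Ω : Set V} {K : ℝ} {y z : V} (h : IsLipMinimizer L Ω u)
    (hL : 0 < L) (hz : u z = 0) (hd : 0 < dist y z)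
    (hyd : ball y (dist y z) ⊆ {x | 0 < u x} ∩ Ω) (hK : L * dist y z ≤ K * u y) :
    (1 / (4 * K)) ^ Module.finrank ℝ V / 4 * volume.real (ball y (dist y z)) ≤
      K * volume.real ({x | (1 + (1 / (4 * K)) ^ Module.finrank ℝ V / 4) * u y ≤ u x} ∩
        ball y (dist y z)) := by
  have hL' : (0 : ℝ) < L := hL
  have hy : 0 < u y := (hyd (mem_ball_self hd)).1
  have hK0 : 0 < K := pos_of_mul_pos_left ((mul_pos hL' hd).trans_le hK) hy.le
  have hcont := h.isLipschitz.continuous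
  obtain ⟨p, hpy, hp⟩ := exists_ball_subset_le_half hL h.lipschitzWith hz hy
  refine mul_measure_le_mul_measure_superlevel measurableSet_ball measure_ball_lt_top.ne
    measurableSet_ball hpy hcont.measurable (integrableOn_ball hcont _ _) hy (by positivity) hK0.le
    (h.weaklyHarmonicOn.mul_volume_ball_eq_setIntegral h.isLipschitz hd hyd).le (fun x hx => ?_) hp
    ?_
  · have hux := (le_abs_self _).trans (h.lipschitzWith.dist_le_mul x y)
    have hxy := mul_le_mul_of_nonneg_left (mem_ball.1 hx).le hL'.le
    linarith
  · rw [← volume_real_ball_mul p y (by positivity)]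
    refine volume_real_le_of_subset (ball_subset_ball ?_) isBounded_ball
    rw [div_mul_eq_mul_div, one_mul, div_le_div_iff₀ (by positivity) (by positivity)]
    linarith

end IsLipMinimizer

/-- Growth of `u` away from its zeros, with constants `η`, `κ`, `C`: each positivity point `y` of
`ball 0 (R / 2)` is the centre of a ball of positivity of radius at most `C * u y`, in a fraction
`κ` of which `(1 + η) * u y ≤ u`. -/
def HasGrowth (η κ C R : ℝ) (u : V → ℝ) : Prop :=
  ∀ y ∈ ball (0 : V) (R / 2), 0 < u y → ∃ d, 0 < d ∧ d ≤ C * u y ∧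
    ball y d ⊆ {x | 0 < u x} ∩ ball 0 R ∧
    κ * volume.real (ball y d) ≤ volume.real ({x | (1 + η) * u y ≤ u x} ∩ ball y d)

variable (V) in
theorem exists_hasGrowth (hL : 0 < L) :
    ∃ η κ C : ℝ, 0 < η ∧ 0 < κ ∧ κ ≤ 1 ∧ 0 < C ∧ ∀ (R : ℝ) (u : V → ℝ),
      IsLipMinimizer L (ball 0 R) u → u 0 = 0 → HasGrowth η κ C R u := by
  have hL' : (0 : ℝ) < L := hL
  obtain ⟨c, hc, hnd⟩ := exists_nondegenerateOn V hL
  set C := 2 ^ (Module.finrank ℝ V + 1) / c with hC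
  have hC0 : 0 < C := by positivity
  refine ⟨(1 / (4 * (L * C))) ^ Module.finrank ℝ V / 4,
    min ((1 / (4 * (L * C))) ^ Module.finrank ℝ V / 4 / (L * C)) 1, C, by positivity,
    by positivity, min_le_right _ _, hC0, fun R u h h0 y hy hpos => ?_⟩
  obtain ⟨z, hz, hdz, hsub⟩ := exists_nearest_zero h.isLipschitz.continuous h.nonneg h0 y
  rw [dist_zero_right] at hdz
  have hd : 0 < dist y z := dist_pos.2 fun hyz => hpos.ne' (hyz ▸ hz)
  have hsubR : ball y (dist y z) ⊆ {x | 0 < u x} ∩ ball 0 R :=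
    subset_inter hsub (ball_subset_ball' (by linarith [dist_zero_right y, mem_ball_zero_iff.1 hy]))
  have hdC : dist y z ≤ C * u y := by
    rw [hC, div_mul_eq_mul_div, le_div_iff₀ hc, mul_comm]
    exact h.mul_radius_le (hnd _ u h) hd hsubR
  refine ⟨dist y z, hd, hdC, hsubR,
    (mul_le_mul_of_nonneg_right (min_le_left _ _) measureReal_nonneg).trans ?_⟩
  rw [div_mul_eq_mul_div, div_le_iff₀' (by positivity)]
  refine h.exists_ball_density hL hz hd hsubR ?_
  rw [mul_assoc]
  exact mul_le_mul_of_nonneg_left hdC hL'.le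

end Growth

/-! ### The boundary Harnack inequality -/

section BoundaryHarnack

variable {V : Type*} [NormedAddCommGroup V] {u f : V → ℝ} {L : ℝ≥0} {Ω : Set V} {c t : ℝ} {y : V}

theorem NondegenerateOn.exists_ball_forall_le (hnd : NondegenerateOn c Ω u)
    (hu : LipschitzWith L u) (hL : 0 < L) (hc : 0 < c) (hcL : c ≤ L) (ht : 0 < t)
    (hΩ : ball y (4 * t / c) ⊆ Ω) (hy : 0 < u y) :
    ∃ z, ball z (t / L) ⊆ ball y (4 * t / c) ∧ ∀ x ∈ ball z (t / L), t ≤ u x := by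
  have hL' : (0 : ℝ) < L := hL
  have hhalf : 4 * t / c / 2 = 2 * t / c := by ring
  have htL : t / L ≤ 2 * t / c := (by gcongr : t / L ≤ t / c).trans (by gcongr; linarith)
  obtain ⟨z, hz, hcz⟩ := hnd y (2 * t / c) (by positivity)
    ((ball_subset_ball (by rw [← hhalf]; exact half_le_self (by positivity))).trans hΩ) hy
  rw [mul_div_cancel₀ _ hc.ne'] at hcz
  refine ⟨z, ball_subset_ball' (by linarith [mem_ball.1 hz]), fun x hx => ?_⟩
  have huz := (le_abs_self _).trans (hu.dist_le_mul z x)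
  have hzx := (lt_div_iff₀' hL').1 (mem_ball'.1 hx)
  linarith

/-- The induction hypothesis of the boundary Harnack iteration: in `ball x r`, `f` is at most `a`,
and at most `-b` where `u` is comparable to `r`. -/
structure HarnackBound (δ : ℝ) (u f : V → ℝ) (x : V) (r a b : ℝ) : Prop where
  le : ∀ z ∈ ball x r, f z ≤ a
  le_neg : ∀ z ∈ ball x r, δ * r ≤ u z → f z ≤ -b

namespace HarnackBound

variable {a b r δ : ℝ} {x : V}

theorem center_nonpos {lam θ κ : ℝ} (h : HarnackBound δ u f x r a b) (hlam : 0 < lam)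
    (hlam₁ : lam ≤ 1) (hθ : 0 ≤ θ) (hθ₁ : θ < 1) (hθκ : θ ≤ κ / 2) (hr : 0 < r) (ha : 0 ≤ a)
    (hb : 0 ≤ b) (hab : a ≤ κ / 2 * b)
    (step : ∀ r' a' b', 0 < r' → r' ≤ r → 0 ≤ a' → 0 ≤ b' → a' ≤ κ / 2 * b' →
      HarnackBound δ u f x r' a' b' → HarnackBound δ u f x (lam * r') (θ * a') (κ / 2 * b')) :
    f x ≤ 0 := by
  have hκ : 0 ≤ κ / 2 := hθ.trans hθκ
  have hiter : ∀ k : ℕ, HarnackBound δ u f x (lam ^ k * r) (θ ^ k * a) ((κ / 2) ^ k * b) := by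
    intro k
    induction k with
    | zero => simpa using h
    | succ k ih =>
      have hle : θ ^ k * a ≤ κ / 2 * ((κ / 2) ^ k * b) := by
        rw [mul_left_comm]
        gcongr
      simpa only [pow_succ', mul_assoc] using step _ _ _ (by positivity)
        (mul_le_of_le_one_left hr.le (pow_le_one₀ hlam.le hlam₁)) (by positivity) (by positivity)
        hle ih
  have hlim : Tendsto (fun k : ℕ => θ ^ k * a) atTop (𝓝 0) := by
    simpa using (tendsto_pow_atTop_nhds_zero_of_lt_one hθ hθ₁).mul_const a
  exact ge_of_tendsto' hlim fun k => (hiter k).le x (mem_ball_self (by positivity))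

theorem exists_sub_const_mul [ProperSpace V] {h : V → ℝ} (hu : LipschitzWith L u) (hu0 : u 0 = 0)
    (hh : Continuous h) (hΩ : closedBall 0 (2 * r) ⊆ Ω) (h0 : ∀ x ∈ Ω, 0 ≤ h x)
    (hpos : ∀ x ∈ Ω, 0 < u x → 0 < h x) (hr : 0 < r) (hδ : 0 < δ) (hb : 0 < b) :
    ∃ C, 0 < C ∧ ∀ x ∈ ball (0 : V) r,
      HarnackBound δ u (fun y => u y - C * h y) x r (L * (2 * r)) b := by
  obtain ⟨m, hm, hmh⟩ :=
    ((isCompact_closedBall (0 : V) (2 * r)).inter_right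
      (isClosed_le continuous_const hu.continuous)).exists_forall_le' hh.continuousOn
      fun y hy => hpos y (hΩ hy.1) (lt_of_lt_of_le (mul_pos hδ hr) hy.2)
  have hC : 0 < (L * (2 * r) + b) / m := by positivity
  refine ⟨(L * (2 * r) + b) / m, hC, fun x hx => ?_⟩
  have hball : ∀ y ∈ ball x r, y ∈ closedBall (0 : V) (2 * r) := fun y hy => by
    rw [mem_closedBall]
    linarith [dist_triangle y x 0, mem_ball.1 hy, mem_ball.1 hx]
  have hule : ∀ y ∈ ball x r, u y ≤ L * (2 * r) := fun y hy => by
    have := (le_abs_self _).trans (hu.dist_le_mul y 0)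
    rw [hu0, sub_zero] at this
    exact this.trans (mul_le_mul_of_nonneg_left (hball y hy) L.2)
  refine ⟨fun y hy => ?_, fun y hy hyu => ?_⟩
  · linarith [hule y hy, mul_nonneg hC.le (h0 y (hΩ (hball y hy)))]
  · have hCm := mul_le_mul_of_nonneg_left (hmh y ⟨hball y hy, hyu⟩) hC.le
    rw [div_mul_cancel₀ _ hm.ne'] at hCm
    linarith [hule y hy]

end HarnackBound

variable [InnerProductSpace ℝ V] [FiniteDimensional ℝ V] [MeasurableSpace V] [BorelSpace V]

theorem le_sub_mul_of_mul_volume_ball_le {g : V → ℝ} {m r a b κ : ℝ} {A : Set V}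
    (hg : Continuous g) (hr : 0 < r) (hmean : m * volume.real (ball y r) ≤ ∫ x in ball y r, g x)
    (hA : MeasurableSet A) (hAs : A ⊆ ball y r)
    (hκ : κ * volume.real (ball y r) ≤ volume.real A) (hb : 0 ≤ b)
    (hga : ∀ x ∈ ball y r, g x ≤ a) (hgA : ∀ x ∈ A, g x ≤ a - b) : m ≤ a - κ * b := by
  have hint := hmean.trans (setIntegral_le_mul_sub_mul measurableSet_ball measure_ball_lt_top.ne hA
    hAs (integrableOn_ball hg y r) hga hgA)
  refine le_of_mul_le_mul_right ?_ (volume_real_ball_pos y hr)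
  linarith [mul_le_mul_of_nonneg_left hκ hb]

namespace WeaklyHarmonicOn

theorem le_one_sub_mul_of_nondegenerateOn {a : ℝ}
    (hf : WeaklyHarmonicOn ({x | 0 < u x} ∩ Ω) f) (lf : IsLipschitz f)
    (hfu : ∀ x ∈ Ω, 0 < f x → 0 < u x) (hnd : NondegenerateOn c Ω u) (hu : LipschitzWith L u)
    (hL : 0 < L) (hc : 0 < c) (hcL : c ≤ L) (ht : 0 < t) (ha : 0 ≤ a)
    (hΩ : ball y (4 * t / c) ⊆ Ω) (hfa : ∀ z ∈ ball y (4 * t / c), f z ≤ a)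
    (hft : ∀ z ∈ ball y (4 * t / c), t ≤ u z → f z ≤ 0) :
    f y ≤ (1 - (c / (4 * L)) ^ Module.finrank ℝ V) * a := by
  have : (0 : ℝ) < L := hL
  have hq : (c / (4 * L)) ^ Module.finrank ℝ V ≤ 1 :=
    pow_le_one₀ (by positivity) ((div_le_one (by positivity)).2 (by linarith))
  rcases le_or_gt (f y) 0 with hfy | hfy
  · exact hfy.trans (mul_nonneg (sub_nonneg.2 hq) ha)
  have hρ : 0 < 4 * t / c := by positivity
  obtain ⟨z, hzy, hz⟩ := hnd.exists_ball_forall_le hu hL hc hcL ht hΩ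
    (hfu y (hΩ (mem_ball_self hρ)) hfy)
  have hmean := hf.posPart_mul_volume_ball_le_setIntegral lf hρ
    fun x hx hfx => ⟨hfu x (hΩ hx) hfx, hΩ hx⟩
  have hvol : (c / (4 * L)) ^ Module.finrank ℝ V * volume.real (ball y (4 * t / c)) ≤
      volume.real (ball z (t / L)) := by
    rw [← volume_real_ball_mul z y (by positivity)]
    exact (congrArg (fun r => volume.real (ball z r)) (by field_simp)).le
  have hle := le_sub_mul_of_mul_volume_ball_le (lf.max (.const 0)).continuous hρ hmean
    measurableSet_ball hzy hvol ha (fun x hx => max_le (hfa x hx) ha)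
    fun x hx => by rw [max_eq_right (hft x (hzy hx) (hz x hx)), sub_self]
  linarith [le_max_left (f y) 0]

theorem le_pow_mul_of_nondegenerateOn {a r : ℝ} {x : V}
    (hf : WeaklyHarmonicOn ({x | 0 < u x} ∩ Ω) f) (lf : IsLipschitz f)
    (hfu : ∀ x ∈ Ω, 0 < f x → 0 < u x) (hnd : NondegenerateOn c Ω u) (hu : LipschitzWith L u)
    (hL : 0 < L) (hc : 0 < c) (hcL : c ≤ L) (ht : 0 < t) (ha : 0 ≤ a) (hΩ : ball x r ⊆ Ω)
    (hfa : ∀ z ∈ ball x r, f z ≤ a) (hft : ∀ z ∈ ball x r, t ≤ u z → f z ≤ 0) (j : ℕ) :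
    ∀ z ∈ ball x (r - j * (4 * t / c)),
      f z ≤ (1 - (c / (4 * L)) ^ Module.finrank ℝ V) ^ j * a := by
  have : (0 : ℝ) < L := hL
  have hq : (c / (4 * L)) ^ Module.finrank ℝ V ≤ 1 :=
    pow_le_one₀ (by positivity) ((div_le_one (by positivity)).2 (by linarith))
  induction j with
  | zero => simpa using hfa
  | succ j ih =>
    intro z hz
    have hzj : ball z (4 * t / c) ⊆ ball x (r - j * (4 * t / c)) := by
      refine ball_subset_ball' ?_
      have := mem_ball.1 hz
      push_cast at this
      linarith
    have hzr : ball z (4 * t / c) ⊆ ball x r :=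
      hzj.trans (ball_subset_ball (sub_le_self _ (by positivity)))
    rw [pow_succ', mul_assoc]
    exact hf.le_one_sub_mul_of_nondegenerateOn lf hfu hnd hu hL hc hcL ht
      (mul_nonneg (pow_nonneg (sub_nonneg.2 hq) _) ha) (hzr.trans hΩ) (fun w hw => ih w (hzj hw))
      fun w hw => hft w (hzr hw)

theorem le_neg_of_hasGrowth {η κ C R a b r δ : ℝ} {x : V}
    (hf : WeaklyHarmonicOn ({x | 0 < u x} ∩ ball 0 R) f) (lf : IsLipschitz f) (hu : Continuous u)
    (hgr : HasGrowth η κ C R u) (ha : 0 ≤ a) (hb : 0 ≤ b)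
    (hab : a ≤ κ / 2 * b) (hyR : y ∈ ball (0 : V) (R / 2)) (hy : 0 < u y)
    (hyt : δ * r ≤ (1 + η) * u y) (hyx : dist y x + C * u y ≤ r) (hfa : ∀ z ∈ ball x r, f z ≤ a)
    (hfb : ∀ z ∈ ball x r, δ * r ≤ u z → f z ≤ -b) : f y ≤ -(κ / 2 * b) := by
  obtain ⟨d, hd, hdC, hsub, hvol⟩ := hgr y hyR hy
  have hyr : ball y d ⊆ ball x r := ball_subset_ball' (by linarith)
  have hle := le_sub_mul_of_mul_volume_ball_le lf.continuous hd
    (hf.mul_volume_ball_le_setIntegral lf hd hsub)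
    ((isClosed_le continuous_const hu).measurableSet.inter measurableSet_ball) inter_subset_right
    hvol hb (fun z hz => hfa z (hyr hz))
    fun z hz => (hfb z (hyr hz.2) (hyt.trans hz.1)).trans (by linarith)
  linarith

end WeaklyHarmonicOn

namespace HarnackBound

variable {a b r δ : ℝ} {x : V}

theorem contract {η κ C R : ℝ} {N : ℕ} (h : HarnackBound δ u f x r a b)
    (hf : WeaklyHarmonicOn ({x | 0 < u x} ∩ ball 0 R) f) (lf : IsLipschitz f)
    (hfu : ∀ x ∈ ball (0 : V) R, 0 < f x → 0 < u x) (hnd : NondegenerateOn c (ball 0 R) u)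
    (hgr : HasGrowth η κ C R u) (hu : LipschitzWith L u) (hL : 0 < L) (hc : 0 < c) (hcL : c ≤ L)
    (hη : 0 < η) (hκ : κ ≤ 1) (hC : 0 < C) (hδ : 0 < δ) (hNδ : N * (4 * δ / c) ≤ 1 - (1 + η)⁻¹)
    (hCδ : C * δ ≤ 1 - (1 + η)⁻¹) (hr : 0 < r) (hR : 0 < R) (hxR : ball x r ⊆ ball 0 (R / 2))
    (ha : 0 ≤ a) (hb : 0 ≤ b) (hab : a ≤ κ / 2 * b) :
    HarnackBound δ u f x ((1 + η)⁻¹ * r)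
      ((1 - (c / (4 * L)) ^ Module.finrank ℝ V) ^ N * a) (κ / 2 * b) := by
  have hxr : ball x ((1 + η)⁻¹ * r) ⊆ ball x r :=
    ball_subset_ball (mul_le_of_le_one_left hr.le (inv_le_one_of_one_le₀ (by linarith)))
  refine ⟨fun z hz => ?_, fun z hz hzu => ?_⟩
  · refine hf.le_pow_mul_of_nondegenerateOn lf hfu hnd hu hL hc hcL (mul_pos hδ hr) ha
      (hxR.trans (ball_subset_ball (by linarith))) h.le
      (fun w hw hwu => (h.le_neg w hw hwu).trans (neg_nonpos.2 hb)) N z (ball_subset_ball ?_ hz)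
    calc (1 + η)⁻¹ * r ≤ r - N * (4 * δ / c) * r := by nlinarith
      _ = r - N * (4 * (δ * r) / c) := by ring
  · rcases le_or_gt (δ * r) (u z) with hzr | hzr
    · exact (h.le_neg z (hxr hz) hzr).trans (by nlinarith)
    have huz : 0 < u z := lt_of_lt_of_le (by positivity) hzu
    refine hf.le_neg_of_hasGrowth lf hu.continuous hgr ha hb hab (hxR (hxr hz)) huz ?_ ?_ h.le
      h.le_neg
    · calc δ * r = (1 + η) * (δ * ((1 + η)⁻¹ * r)) := by field_simp
        _ ≤ (1 + η) * u z := by gcongr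
    · have hzx := mem_ball.1 hz
      nlinarith

end HarnackBound

theorem exists_harnack_parameters {c κ C θ lam : ℝ} (hκ : 0 < κ) (hθ : 0 ≤ θ) (hθ₁ : θ < 1)
    (hlam : lam < 1) :
    ∃ (N : ℕ) (δ : ℝ), N ≠ 0 ∧ 0 < δ ∧ θ ^ N ≤ κ / 2 ∧ N * (4 * δ / c) ≤ 1 - lam ∧
      C * δ ≤ 1 - lam := by
  obtain ⟨N, hNκ, hN⟩ := (((tendsto_pow_atTop_nhds_zero_of_lt_one hθ hθ₁).eventually_le_const
    (half_pos hκ)).and (eventually_ne_atTop 0)).exists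
  have hsmall : ∀ g : ℝ → ℝ, Continuous g → g 0 = 0 → ∀ᶠ δ in 𝓝[>] 0, g δ ≤ 1 - lam :=
    fun g hg hg0 => (tendsto_nhdsWithin_of_tendsto_nhds (hg.tendsto' 0 0 hg0)).eventually_le_const
      (sub_pos.2 hlam)
  obtain ⟨δ, hNδ, hCδ, hδ⟩ := ((hsmall (fun δ => N * (4 * δ / c)) (by fun_prop) (by simp)).and
    ((hsmall (fun δ => C * δ) (by fun_prop) (by simp)).and self_mem_nhdsWithin)).exists
  exact ⟨N, δ, hN, hδ, hNκ, hNδ, hCδ⟩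

theorem boundary_harnack {R : ℝ} (hL : 0 < L) (hR : 0 < R) {h : V → ℝ}
    (hu : IsLipMinimizer L (ball 0 R) u) (hu0 : u 0 = 0) (lh : IsLipschitz h)
    (h0 : ∀ x ∈ ball (0 : V) R, 0 ≤ h x)
    (hh : WeaklyHarmonicOn ({x | 0 < u x} ∩ ball (0 : V) R) h)
    (hpos : ∀ x ∈ ball (0 : V) R, 0 < u x → 0 < h x) :
    ∃ r c : ℝ, 0 < r ∧ r ≤ R ∧ 0 < c ∧ ∀ x ∈ ball (0 : V) r, c * u x ≤ h x := by
  have hL' : (0 : ℝ) < L := hL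
  obtain ⟨η, κ, K, hη, hκ, hκ₁, hK, hgr⟩ := exists_hasGrowth V hL
  obtain ⟨c₀, hc₀, hnd₀⟩ := exists_nondegenerateOn V hL
  have hnd := (hnd₀ _ u hu).mono (min_le_left c₀ L)
  have hc : 0 < min c₀ L := lt_min hc₀ hL'
  have hq : 0 < (min c₀ L / (4 * L)) ^ Module.finrank ℝ V := by positivity
  have hq₁ : (min c₀ L / (4 * L)) ^ Module.finrank ℝ V ≤ 1 :=
    pow_le_one₀ (by positivity) ((div_le_one (by positivity)).2 (by linarith [min_le_right c₀ L]))
  obtain ⟨N, δ, hN, hδ, hθκ, hNδ, hKδ⟩ := exists_harnack_parameters (c := min c₀ L) (C := K)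
    hκ (sub_nonneg.2 hq₁) (sub_lt_self 1 hq) (inv_lt_one_of_one_lt₀ (by linarith : 1 < 1 + η))
  obtain ⟨C, hC, hinit⟩ := HarnackBound.exists_sub_const_mul hu.lipschitzWith hu0 lh.continuous
    (closedBall_subset_ball (by linarith : 2 * (R / 8) < R)) h0 hpos (by positivity) hδ
    (by positivity : 0 < L * (2 * (R / 8)) / (κ / 2))
  refine ⟨R / 8, 1 / C, by positivity, by linarith, by positivity, fun x hx => ?_⟩
  have hnonpos : u x - C * h x ≤ 0 :=
    (hinit x hx).center_nonpos (by positivity) (inv_le_one_of_one_le₀ (by linarith))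
      (pow_nonneg (sub_nonneg.2 hq₁) N) (pow_lt_one₀ (sub_nonneg.2 hq₁) (sub_lt_self 1 hq) hN) hθκ
      (by positivity) (by positivity) (by positivity) (by field_simp; rfl)
      fun r a b hr hrR ha hb hab hS =>
        hS.contract (hu.weaklyHarmonicOn.sub_const_mul hh hu.isLipschitz lh C)
          (hu.isLipschitz.sub (lh.const_mul C))
          (fun y hy hfy => by nlinarith [h0 y hy, mul_nonneg hC.le (h0 y hy)]) hnd
          (hgr R u hu hu0) hu.lipschitzWith hL hc (min_le_right _ _) hη hκ₁ hK hδ hNδ hKδ hr hR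
          (ball_subset_ball' (by linarith [mem_ball.1 hx])) ha hb hab
  rw [one_div, inv_mul_le_iff₀ hC]
  linarith

end BoundaryHarnack

/-! ### Rescaling, minima and maxima of minimizers -/

section Rescale

variable {V : Type*} [NormedAddCommGroup V] [InnerProductSpace ℝ V] {z : V} {t : ℝ} {u : V → ℝ}

/-- The blow-up `x ↦ u (z + t x) / t` of a function at the point `z` and scale `t`; it preserves
Lipschitz constants and energy densities. -/
noncomputable def rescale (z : V) (t : ℝ) (u : V → ℝ) : V → ℝ := fun x => t⁻¹ * u (z + t • x)

theorem lipschitzWith_rescale {K : ℝ≥0} (z : V) (ht : 0 < t) (hu : LipschitzWith K u) :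
    LipschitzWith K (rescale z t u) := by
  refine LipschitzWith.of_dist_le_mul fun x y => ?_
  calc dist (rescale z t u x) (rescale z t u y)
      = t⁻¹ * dist (u (z + t • x)) (u (z + t • y)) := by
        simp only [rescale, Real.dist_eq, ← mul_sub, abs_mul, abs_of_pos (inv_pos.2 ht)]
    _ ≤ t⁻¹ * (K * dist (z + t • x) (z + t • y)) :=
        mul_le_mul_of_nonneg_left (hu.dist_le_mul _ _) (inv_pos.2 ht).le
    _ = K * dist x y := by
        rw [dist_add_left, dist_smul₀, Real.norm_of_nonneg ht.le]; field_simp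

theorem rescale_rescale_inv (z : V) (ht : 0 < t) (v : V → ℝ) :
    rescale z t (rescale (-(t⁻¹ • z)) t⁻¹ v) = v := by
  ext x
  rw [rescale, rescale, inv_inv, inv_mul_cancel_left₀ ht.ne', smul_add, inv_smul_smul₀ ht.ne',
    neg_add_cancel_left]

variable [CompleteSpace V]

theorem gradient_rescale (z : V) (ht : 0 < t) (u : V → ℝ) (x : V) :
    ∇ (rescale z t u) x = ∇ u (z + t • x) := by
  have hsmul : rescale z t u = t⁻¹ • fun x => (fun y => u (z + y)) (t • x) := by
    ext; simp [rescale]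
  have hfderiv : fderiv ℝ (rescale z t u) x = fderiv ℝ u (z + t • x) := by
    rw [hsmul, fderiv_const_smul_field, Pi.smul_apply, fderiv_comp_smul (f := fun y => u (z + y)),
      fderiv_comp_add_left, inv_smul_smul₀ ht.ne']
  simp only [gradient, hfderiv]

theorem energyDensity_rescale (z : V) (ht : 0 < t) (u : V → ℝ) (x : V) :
    energyDensity (rescale z t u) x = energyDensity u (z + t • x) := by
  simp only [energyDensity, gradient_rescale z ht]
  rw [rescale, heaviside_congr (mul_pos_iff_of_pos_left (inv_pos.2 ht))]

end Rescale

theorem IsLipMinimizer.rescale {V : Type*} [NormedAddCommGroup V] [InnerProductSpace ℝ V]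
    [FiniteDimensional ℝ V] [MeasurableSpace V] [BorelSpace V] {L : ℝ≥0} {Ω : Set V} {u : V → ℝ}
    (h : IsLipMinimizer L Ω u) (z : V) {t : ℝ} (ht : 0 < t) :
    IsLipMinimizer L {x | z + t • x ∈ Ω} (rescale z t u) := by
  refine ⟨fun x => mul_nonneg (inv_pos.2 ht).le (h.nonneg _),
    lipschitzWith_rescale z ht h.lipschitzWith, fun v hv ⟨A, hA⟩ K hK hKΩ hvu => ?_⟩
  obtain ⟨v', hv', hA', rfl⟩ : ∃ v' : V → ℝ, (∀ x, 0 ≤ v' x) ∧ LipschitzWith A v' ∧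
      AltCaffarelli.rescale z t v' = v :=
    ⟨_, fun x => mul_nonneg (by positivity) (hv _), lipschitzWith_rescale _ (inv_pos.2 ht) hA,
      rescale_rescale_inv z ht v⟩
  have heq : ∀ y ∉ (fun x => z + t • x) '' K, v' y = u y := fun y hy => by
    have hzy : z + t • t⁻¹ • (y - z) = y := by rw [smul_inv_smul₀ ht.ne', add_sub_cancel]
    have := hvu (t⁻¹ • (y - z)) fun hmem => hy ⟨_, hmem, hzy⟩
    rw [AltCaffarelli.rescale, AltCaffarelli.rescale, hzy] at this
    exact mul_left_cancel₀ (inv_pos.2 ht).ne' this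
  have hmin := h.integral_sub_nonneg v' hv' ⟨A, hA'⟩ ((fun x => z + t • x) '' K)
    (hK.image (by fun_prop)) (image_subset_iff.2 hKΩ) heq
  simp only [energyDensity_rescale z ht]
  rw [Measure.integral_comp_smul volume (fun y => energyDensity v' (z + y) -
      energyDensity u (z + y)) t,
    integral_add_left_eq_self (fun y => energyDensity v' y - energyDensity u y) z]
  exact smul_nonneg (abs_nonneg _) hmin

theorem exists_mem_frontier_of_isPreconnected {X : Type*} [TopologicalSpace X] {S C : Set X}
    (hC : IsPreconnected C) {x y : X} (hx : x ∈ C) (hxS : x ∈ S) (hy : y ∈ C) (hyS : y ∉ S) :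
    ∃ z ∈ C, z ∈ frontier S := by
  by_contra! hcon
  have hcov : C ⊆ interior S ∪ (closure S)ᶜ := fun z hz => or_iff_not_imp_left.2 fun hint hcl =>
    hcon z hz ⟨hcl, hint⟩
  obtain ⟨z, -, hz, hz'⟩ := hC _ _ isOpen_interior isClosed_closure.isOpen_compl hcov
    ⟨x, hx, (hcov hx).resolve_right (not_not.2 (subset_closure hxS))⟩
    ⟨y, hy, (hcov hy).resolve_left fun h => hyS (interior_subset h)⟩
  exact hz' (subset_closure (interior_subset hz))

theorem lipschitzWith_indicator {E : Type*} [SeminormedAddCommGroup E] [NormedSpace ℝ E]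
    {L : ℝ≥0} {u : E → ℝ} (hu : LipschitzWith L u) {S : Set E}
    (hS : ∀ x ∈ frontier S, u x = 0) : LipschitzWith L (S.indicator u) := by
  have hcross : ∀ x ∈ S, ∀ y ∉ S, |u x| ≤ L * dist x y := fun x hx y hy => by
    obtain ⟨z, hz, hzf⟩ := exists_mem_frontier_of_isPreconnected
      (convex_segment (𝕜 := ℝ) x y).isPreconnected (left_mem_segment ℝ x y) hx
      (right_mem_segment ℝ x y) hy
    calc |u x| = dist (u x) (u z) := by rw [hS z hzf, Real.dist_eq, sub_zero]
      _ ≤ L * dist x z := hu.dist_le_mul x z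
      _ ≤ L * dist x y := mul_le_mul_of_nonneg_left
          (le_of_le_of_eq (le_add_of_nonneg_right dist_nonneg) (dist_add_dist_of_mem_segment hz))
          L.2
  refine LipschitzWith.of_dist_le_mul fun x y => ?_
  by_cases hx : x ∈ S <;> by_cases hy : y ∈ S <;> simp only [hx, hy, not_false_eq_true,
    indicator_of_mem, indicator_of_notMem, Real.dist_eq, sub_zero, zero_sub, abs_neg, abs_zero]
  · exact hu.dist_le_mul x y
  · exact hcross x hx y hy
  · exact (hcross y hy x hx).trans_eq (by rw [dist_comm])
  · positivity

-- Glueing the rest of `u` back onto a competitor by a maximum does not increase the energy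
-- difference, because the two pieces of `u` have minimum `0`.
theorem IsLipMinimizer.indicator {V : Type*} [NormedAddCommGroup V] [InnerProductSpace ℝ V]
    [FiniteDimensional ℝ V] [MeasurableSpace V] [BorelSpace V] {L : ℝ≥0} {Ω : Set V} {u : V → ℝ}
    (h : IsLipMinimizer L Ω u) {S : Set V} (hS : ∀ x ∈ frontier S, u x = 0) :
    IsLipMinimizer L Ω (S.indicator u) := by
  have hl : LipschitzWith L (S.indicator u) := lipschitzWith_indicator h.lipschitzWith hS
  have hl' : LipschitzWith L (Sᶜ.indicator u) :=
    lipschitzWith_indicator h.lipschitzWith (by rwa [frontier_compl])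
  refine ⟨indicator_nonneg fun x _ => h.nonneg x, hl, fun v hv lv K hK hKΩ hvu => ?_⟩
  set u₁ := S.indicator u
  set u₂ := Sᶜ.indicator u
  have hmax : (fun y => max (u₁ y) (u₂ y)) = u := by
    ext x; by_cases hx : x ∈ S <;> simp [u₁, u₂, hx, h.nonneg x]
  have hmin : (fun y => min (u₁ y) (u₂ y)) = fun _ => 0 := by
    ext x; by_cases hx : x ∈ S <;> simp [u₁, u₂, hx, h.nonneg x]
  have hlmax : IsLipschitz fun y => max (v y) (u₂ y) := lv.max ⟨L, hl'⟩
  have heq : ∀ x ∉ K, max (v x) (u₂ x) = u x := fun x hx => by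
    rw [hvu x hx]; exact congrFun hmax x
  refine (h.integral_sub_nonneg _ (fun x => (hv x).trans (le_max_left _ _)) hlmax K hK hKΩ
    heq).trans (integral_mono_ae (integrable_energyDensity_sub h.isLipschitz hlmax hK heq)
      (integrable_energyDensity_sub ⟨L, hl⟩ lv hK hvu) ?_)
  filter_upwards [ae_energyDensity_max_add_min ⟨L, hl⟩ ⟨L, hl'⟩,
    ae_energyDensity_max_add_min lv ⟨L, hl'⟩] with x hx₁ hx₂
  have hzero : energyDensity (fun _ : V => (0 : ℝ)) x = 0 := by
    simp [energyDensity, heaviside, gradient_fun_const]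
  rw [hmin, hmax, hzero] at hx₁
  have := energyDensity_nonneg (fun y => min (v y) (u₂ y)) x
  linarith

/-! ### Convergence of energies -/

section WeakConvergence

theorem norm_min_heaviside_sub_le (a b : ℝ) :
    ‖min (heaviside a) (heaviside b) - heaviside b‖ ≤ 1 := by
  have h := le_min (heaviside_nonneg a) (heaviside_nonneg b)
  rw [Real.norm_eq_abs, abs_le]
  constructor <;> linarith [heaviside_le_one b, min_le_right (heaviside a) (heaviside b)]

theorem measurable_min_heaviside_sub {X : Type*} [TopologicalSpace X] [MeasurableSpace X]
    [OpensMeasurableSpace X] {f g : X → ℝ} (hf : Continuous f) (hg : Continuous g) :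
    Measurable fun x => min (heaviside (f x)) (heaviside (g x)) - heaviside (g x) :=
  ((measurable_heaviside.comp hf.measurable).min (measurable_heaviside.comp hg.measurable)).sub
    (measurable_heaviside.comp hg.measurable)

variable {V : Type*} [NormedAddCommGroup V] [InnerProductSpace ℝ V] [FiniteDimensional ℝ V]

theorem norm_gradient_sub_le {K K' : ℝ≥0} {f g : V → ℝ} (hf : LipschitzWith K f)
    (hg : LipschitzWith K' g) (x : V) : ‖∇ f x - ∇ g x‖ ≤ K + K' :=
  (norm_sub_le _ _).trans (add_le_add (norm_gradient_le hf x) (norm_gradient_le hg x))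

-- `∇u₀` enters linearly, so that weak convergence of the gradients suffices below.
theorem energyDensity_le_sub_inner_gradient_sub (u u₀ : V → ℝ) (x : V) :
    energyDensity u₀ x ≤ energyDensity u x - 2 * ⟪∇ u x - ∇ u₀ x, ∇ u₀ x⟫
      - (min (heaviside (u x)) (heaviside (u₀ x)) - heaviside (u₀ x)) := by
  have hsq := norm_sub_sq_real (∇ u x) (∇ u₀ x)
  unfold energyDensity
  rw [inner_sub_left, real_inner_self_eq_norm_sq]
  linarith [sq_nonneg ‖∇ u x - ∇ u₀ x‖, min_le_left (heaviside (u x)) (heaviside (u₀ x))]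

variable [MeasurableSpace V] [BorelSpace V]

theorem measurable_gradient_sub (f g : V → ℝ) : Measurable fun x => ∇ f x - ∇ g x :=
  (measurable_gradient f).sub (measurable_gradient g)

theorem tendsto_integral_mul_zero_of_forall_contDiff {G : ℕ → V → ℝ} {C : ℝ}
    (hG : ∀ k, Measurable (G k)) (hC : ∀ k x, ‖G k x‖ ≤ C)
    (hφ : ∀ φ : V → ℝ, ContDiff ℝ 1 φ → HasCompactSupport φ →
      Tendsto (fun k => ∫ x, φ x * G k x) atTop (𝓝 0))
    {f : V → ℝ} (hf : Integrable f) : Tendsto (fun k => ∫ x, f x * G k x) atTop (𝓝 0) := by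
  have hC0 : 0 ≤ C := (norm_nonneg _).trans (hC 0 0)
  have hint : ∀ {h : V → ℝ}, Integrable h → ∀ k, Integrable fun x => h x * G k x := fun hh k =>
    hh.mul_bdd (hG k).aestronglyMeasurable (Eventually.of_forall (hC k))
  refine Metric.tendsto_nhds.2 fun ε hε => ?_
  obtain ⟨φ, hφs, hφc, hφf⟩ := MemLp.exist_eLpNorm_sub_le (p := 1) (by simp) le_rfl
    (memLp_one_iff_integrable.2 hf) (show 0 < ε / (2 * (C + 1)) by positivity)
  have hφi : Integrable φ := hφc.continuous.integrable_of_hasCompactSupport hφs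
  have hclose : ∫ x, ‖f x - φ x‖ ≤ ε / (2 * (C + 1)) := by
    rw [eLpNorm_one_eq_lintegral_enorm] at hφf
    rw [integral_norm_eq_lintegral_enorm (hf.sub' hφi).aestronglyMeasurable]
    exact ENNReal.toReal_le_of_le_ofReal (by positivity) hφf
  have herr : ∀ k, ‖∫ x, (f x - φ x) * G k x‖ ≤ ε / 2 := fun k => by
    calc ‖∫ x, (f x - φ x) * G k x‖ ≤ ∫ x, ‖f x - φ x‖ * C :=
          norm_integral_le_of_norm_le ((hf.sub' hφi).norm.mul_const C) <|
            Eventually.of_forall fun x => by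
              rw [norm_mul]; exact mul_le_mul_of_nonneg_left (hC k x) (norm_nonneg _)
      _ ≤ ε / (2 * (C + 1)) * (C + 1) := by
          rw [integral_mul_const]; gcongr; linarith
      _ = ε / 2 := by field_simp
  filter_upwards [Metric.tendsto_nhds.1 (hφ φ (hφc.of_le (by simp)) hφs) (ε / 2) (by positivity)]
    with k hk
  have hsplit : ∫ x, f x * G k x = (∫ x, (f x - φ x) * G k x) + ∫ x, φ x * G k x := by
    rw [← integral_add (hint (hf.sub' hφi) k) (hint hφi k)]
    exact integral_congr_ae (Eventually.of_forall fun x => by ring)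
  rw [dist_zero_right] at hk ⊢
  rw [hsplit]
  exact (norm_add_le _ _).trans_lt (by linarith [herr k])

theorem integral_mul_inner_gradient {L : ℝ≥0} {f φ : V → ℝ} (hf : LipschitzWith L f)
    (hφ : ContDiff ℝ 1 φ) (hs : HasCompactSupport φ) (e : V) :
    ∫ x, φ x * ⟪∇ f x, e⟫ = ∫ x, fderiv ℝ φ x (-e) * f x := by
  obtain ⟨D, hD⟩ := hφ.lipschitzWith_of_hasCompactSupport hs one_ne_zero
  calc ∫ x, φ x * ⟪∇ f x, e⟫ = ∫ x, lineDeriv ℝ f x e * φ x := by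
        refine integral_congr_ae ?_
        filter_upwards [hf.ae_differentiableAt] with x hx
        rw [hx.lineDeriv_eq_fderiv, ← inner_gradient_left, mul_comm]
    _ = ∫ x, lineDeriv ℝ φ x (-e) * f x := hf.integral_lineDeriv_mul_eq hD hs e
    _ = ∫ x, fderiv ℝ φ x (-e) * f x := integral_congr_ae <| Eventually.of_forall fun x => by
        simp only [((hφ.differentiable one_ne_zero) x).lineDeriv_eq_fderiv]

variable {L : ℝ≥0} {u : ℕ → V → ℝ} {u₀ : V → ℝ}

theorem tendsto_integral_mul_of_lipschitzWith (hu : ∀ k, LipschitzWith L (u k))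
    (hlim : ∀ x, Tendsto (fun k => u k x) atTop (𝓝 (u₀ x))) {ψ : V → ℝ} (hψ : Continuous ψ)
    (hs : HasCompactSupport ψ) :
    Tendsto (fun k => ∫ x, ψ x * u k x) atTop (𝓝 (∫ x, ψ x * u₀ x)) := by
  have hbound : Integrable fun x => |ψ x| * (|u₀ 0| + 1 + L * ‖x‖) :=
    Continuous.integrable_of_hasCompactSupport (by fun_prop)
      (HasCompactSupport.mul_right (hs.comp_left abs_zero))
  refine tendsto_integral_filter_of_dominated_convergence _ (Eventually.of_forall fun k =>
    (hψ.mul (hu k).continuous).aestronglyMeasurable) ?_ hbound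
    (Eventually.of_forall fun x => (hlim x).const_mul (ψ x))
  filter_upwards [(hlim 0).abs.eventually_le_const (lt_add_one |u₀ 0|)] with k hk
  refine Eventually.of_forall fun x => ?_
  rw [norm_mul, Real.norm_eq_abs, Real.norm_eq_abs]
  have hkx := (hu k).dist_le_mul x 0
  rw [Real.dist_eq, dist_zero_right] at hkx
  exact mul_le_mul_of_nonneg_left (by linarith [abs_sub_abs_le_abs_sub (u k x) (u k 0)])
    (abs_nonneg _)

theorem tendsto_integral_mul_inner_gradient_sub (hu : ∀ k, LipschitzWith L (u k))
    (hu₀ : LipschitzWith L u₀) (hlim : ∀ x, Tendsto (fun k => u k x) atTop (𝓝 (u₀ x)))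
    {f : V → ℝ} (hf : Integrable f) (e : V) :
    Tendsto (fun k => ∫ x, f x * ⟪∇ (u k) x - ∇ u₀ x, e⟫) atTop (𝓝 0) := by
  refine tendsto_integral_mul_zero_of_forall_contDiff (C := (L + L) * ‖e‖)
    (fun k => (measurable_gradient_sub _ _).inner measurable_const)
    (fun k x => (norm_inner_le_norm _ _).trans
      (mul_le_mul_of_nonneg_right (norm_gradient_sub_le (hu k) hu₀ x) (norm_nonneg _)))
    (fun φ hφ hs => ?_) hf
  have hint : ∀ {g : V → ℝ}, LipschitzWith L g → Integrable fun x => φ x * ⟪∇ g x, e⟫ :=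
    fun {g} hg => (hφ.continuous.integrable_of_hasCompactSupport hs).mul_bdd (c := L * ‖e‖)
      ((measurable_gradient g).inner measurable_const).aestronglyMeasurable
      (Eventually.of_forall fun x => (norm_inner_le_norm _ _).trans
        (mul_le_mul_of_nonneg_right (norm_gradient_le hg x) (norm_nonneg _)))
  have hcont : Continuous fun x => fderiv ℝ φ x (-e) :=
    (hφ.continuous_fderiv one_ne_zero).clm_apply continuous_const
  have hconv := (tendsto_integral_mul_of_lipschitzWith hu hlim hcont
    (hs.fderiv_apply ℝ (-e))).sub_const (∫ x, fderiv ℝ φ x (-e) * u₀ x)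
  rw [sub_self] at hconv
  refine hconv.congr fun k => ?_
  simp only [inner_sub_left, mul_sub]
  rw [integral_sub (hint (hu k)) (hint hu₀), integral_mul_inner_gradient (hu k) hφ hs,
    integral_mul_inner_gradient hu₀ hφ hs]

theorem tendsto_setIntegral_inner_gradient_sub (hu : ∀ k, LipschitzWith L (u k))
    (hu₀ : LipschitzWith L u₀) (hlim : ∀ x, Tendsto (fun k => u k x) atTop (𝓝 (u₀ x)))
    {s : Set V} (hs : MeasurableSet s) (hsb : Bornology.IsBounded s) :
    Tendsto (fun k => ∫ x in s, ⟪∇ (u k) x - ∇ u₀ x, ∇ u₀ x⟫) atTop (𝓝 0) := by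
  set b := stdOrthonormalBasis ℝ V
  have hint : ∀ {g : V → ℝ}, LipschitzWith L g → ∀ i, IntegrableOn (fun x => ⟪∇ g x, b i⟫) s :=
    fun {g} hg i => integrableOn_of_forall_norm_le hsb
      ((measurable_gradient g).inner measurable_const).aestronglyMeasurable (L * ‖b i‖) fun x =>
      (norm_inner_le_norm _ _).trans
        (mul_le_mul_of_nonneg_right (norm_gradient_le hg x) (norm_nonneg _))
  have hsum := tendsto_finsetSum Finset.univ fun i _ => tendsto_integral_mul_inner_gradient_sub
    hu hu₀ hlim ((hint hu₀ i).integrable_indicator hs) (b i)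
  simp only [Finset.sum_const_zero] at hsum
  refine hsum.congr fun k => ?_
  have hcoord : ∀ i, ∫ x, s.indicator (fun x => ⟪∇ u₀ x, b i⟫) x * ⟪∇ (u k) x - ∇ u₀ x, b i⟫
      = ∫ x in s, ⟪∇ u₀ x, b i⟫ * ⟪∇ (u k) x - ∇ u₀ x, b i⟫ := fun i => by
    rw [← integral_indicator hs]; simp only [indicator_mul_left]
  simp only [hcoord]
  rw [← integral_finsetSum _ fun i _ => (hint hu₀ i).mul_bdd (c := (L + L) * ‖b i‖)
    ((measurable_gradient_sub _ _).inner measurable_const).aestronglyMeasurable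
    (Eventually.of_forall fun x => (norm_inner_le_norm _ _).trans
      (mul_le_mul_of_nonneg_right (norm_gradient_sub_le (hu k) hu₀ x) (norm_nonneg _)))]
  refine setIntegral_congr_fun hs fun x _ => ?_
  rw [← b.sum_inner_mul_inner (∇ (u k) x - ∇ u₀ x)]
  exact Finset.sum_congr rfl fun i _ => by rw [real_inner_comm (b i) (∇ u₀ x), mul_comm]

theorem tendsto_setIntegral_min_heaviside_sub (hu : ∀ k, Continuous (u k)) (hu₀ : Continuous u₀)
    (hlim : ∀ x, Tendsto (fun k => u k x) atTop (𝓝 (u₀ x))) {s : Set V}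
    (hsb : Bornology.IsBounded s) :
    Tendsto (fun k => ∫ x in s, (min (heaviside (u k x)) (heaviside (u₀ x)) - heaviside (u₀ x)))
      atTop (𝓝 0) := by
  have hpt : ∀ x, Tendsto
      (fun k => min (heaviside (u k x)) (heaviside (u₀ x)) - heaviside (u₀ x)) atTop (𝓝 0) := by
    intro x
    rcases lt_or_ge 0 (u₀ x) with h | h
    · refine tendsto_const_nhds.congr' ?_
      filter_upwards [(hlim x).eventually (lt_mem_nhds h)] with k hk
      rw [heaviside_of_pos h, heaviside_of_pos hk, min_self, sub_self]
    · exact tendsto_const_nhds.congr fun k => by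
        rw [heaviside_of_nonpos h, min_eq_right (heaviside_nonneg _), sub_self]
  have h := tendsto_integral_of_dominated_convergence (μ := volume.restrict s) (fun _ => 1)
    (fun k => (measurable_min_heaviside_sub (hu k) hu₀).aestronglyMeasurable)
    (integrableOn_const hsb.measure_lt_top.ne)
    (fun k => Eventually.of_forall fun x => norm_min_heaviside_sub_le _ _)
    (Eventually.of_forall hpt)
  rwa [integral_zero] at h

theorem eventually_setIntegral_energyDensity_le_add (hu : ∀ k, LipschitzWith L (u k))
    (hu₀ : LipschitzWith L u₀) (hlim : ∀ x, Tendsto (fun k => u k x) atTop (𝓝 (u₀ x)))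
    {s : Set V} (hs : MeasurableSet s) (hsb : Bornology.IsBounded s) {ε : ℝ} (hε : 0 < ε) :
    ∀ᶠ k in atTop, ∫ x in s, energyDensity u₀ x ≤ (∫ x in s, energyDensity (u k) x) + ε := by
  have hlimit := ((tendsto_setIntegral_inner_gradient_sub hu hu₀ hlim hs hsb).const_mul 2).add
    (tendsto_setIntegral_min_heaviside_sub (fun k => (hu k).continuous) hu₀.continuous hlim hsb)
  rw [mul_zero, add_zero] at hlimit
  filter_upwards [hlimit.eventually_const_le (neg_lt_zero.2 hε)] with k hk
  have hinner : IntegrableOn (fun x => ⟪∇ (u k) x - ∇ u₀ x, ∇ u₀ x⟫) s :=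
    integrableOn_of_forall_norm_le hsb ((measurable_gradient_sub _ _).inner
      (measurable_gradient _)).aestronglyMeasurable ((L + L) * L) fun x =>
      (norm_inner_le_norm _ _).trans (mul_le_mul (norm_gradient_sub_le (hu k) hu₀ x)
        (norm_gradient_le hu₀ x) (norm_nonneg _) (by positivity))
  have hheav : IntegrableOn
      (fun x => min (heaviside (u k x)) (heaviside (u₀ x)) - heaviside (u₀ x)) s :=
    integrableOn_of_forall_norm_le hsb (measurable_min_heaviside_sub (hu k).continuous
      hu₀.continuous).aestronglyMeasurable 1 fun x => norm_min_heaviside_sub_le _ _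
  have huk := integrableOn_energyDensity (hu k) hsb
  have hle := setIntegral_mono (integrableOn_energyDensity hu₀ hsb)
    ((huk.sub' (hinner.const_mul 2)).sub' hheav)
    (energyDensity_le_sub_inner_gradient_sub (u k) u₀)
  rw [integral_sub (huk.sub' (hinner.const_mul 2)) hheav, integral_sub huk (hinner.const_mul 2),
    integral_const_mul] at hle
  linarith

end WeakConvergence

/-! ### Compactness of minimizers -/

section Compactness

theorem exists_cutoff {X : Type*} [PseudoMetricSpace X] (E : Set X) {δ : ℝ} (hδ : 0 < δ) :
    ∃ ζ : X → ℝ, LipschitzWith δ.toNNReal⁻¹ ζ ∧ (∀ x, ζ x ∈ Icc 0 1) ∧ (∀ x ∈ E, ζ x = 1) ∧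
      ∀ x ∉ thickening δ E, ζ x = 0 := by
  refine ⟨fun x => thickenedIndicator hδ E x, ?_, fun x => ⟨NNReal.coe_nonneg _, ?_⟩,
    fun x hx => ?_, fun x hx => ?_⟩
  · exact lipschitzWith_thickenedIndicator hδ E
  · exact NNReal.coe_le_one.2 (thickenedIndicator_le_one hδ E x)
  · exact congrArg NNReal.toReal (thickenedIndicator_one hδ E hx)
  · exact congrArg NNReal.toReal (thickenedIndicator_zero hδ E hx)

theorem isCompact_setOf_lipschitzWith {X : Type*} [PseudoMetricSpace X] (L : ℝ≥0) (x₀ : X) :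
    IsCompact {f : C(X, ℝ) | LipschitzWith L f ∧ f x₀ = 0} := by
  refine ArzelaAscoli.isCompact_of_equicontinuous _ ?_
    (LipschitzWith.uniformEquicontinuous _ L fun f => f.2.1).equicontinuous
  have himage : ContinuousMap.toFun '' {f : C(X, ℝ) | LipschitzWith L f ∧ f x₀ = 0} =
      {g : X → ℝ | LipschitzWith L g ∧ g x₀ = 0} :=
    Subset.antisymm (image_subset_iff.2 fun f hf => hf)
      fun g hg => ⟨⟨g, hg.1.continuous⟩, hg, rfl⟩
  rw [himage]
  have hclosed : IsClosed {g : X → ℝ | LipschitzWith L g ∧ g x₀ = 0} :=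
    (isClosed_setOfPred_lipschitzWith L).inter (isClosed_eq (continuous_apply x₀) continuous_const)
  refine (isCompact_univ_pi fun x =>
    isCompact_closedBall (0 : ℝ) (L * dist x x₀)).of_isClosed_subset hclosed fun g hg x _ => ?_
  have := hg.1.dist_le_mul x x₀
  rwa [hg.2] at this

theorem exists_strictMono_tendstoLocallyUniformly {X : Type*} [PseudoMetricSpace X] [ProperSpace X]
    {L : ℝ≥0} {u w : ℕ → X → ℝ} {x₀ : X} (hu : ∀ k, LipschitzWith L (u k)) (hu0 : ∀ k, u k x₀ = 0)
    (hw : ∀ k, LipschitzWith L (w k)) (hw0 : ∀ k, w k x₀ = 0) :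
    ∃ (u₀ w₀ : X → ℝ) (φ : ℕ → ℕ), StrictMono φ ∧
      TendstoLocallyUniformly (fun j => u (φ j)) u₀ atTop ∧
      TendstoLocallyUniformly (fun j => w (φ j)) w₀ atTop := by
  have hK := isCompact_setOf_lipschitzWith L x₀
  obtain ⟨⟨u₀, w₀⟩, -, φ, hφ, hlim⟩ := (hK.prod hK).tendsto_subseq
    (x := fun k => (⟨u k, (hu k).continuous⟩, ⟨w k, (hw k).continuous⟩))
    fun k => ⟨⟨hu k, hu0 k⟩, hw k, hw0 k⟩
  exact ⟨u₀, w₀, φ, hφ,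
    ContinuousMap.tendsto_iff_tendstoLocallyUniformly.1 ((continuous_fst.tendsto _).comp hlim),
    ContinuousMap.tendsto_iff_tendstoLocallyUniformly.1 ((continuous_snd.tendsto _).comp hlim)⟩

theorem norm_gradient_sub_mul_le {V : Type*} [NormedAddCommGroup V] [InnerProductSpace ℝ V]
    [CompleteSpace V] {K K' : ℝ≥0} {f g ζ : V → ℝ} {x : V} {δ : ℝ} (hδ : 0 < δ)
    (hf : LipschitzWith K f) (hg : LipschitzWith K' g) (hζ : LipschitzWith δ.toNNReal⁻¹ ζ)
    (hζx : ζ x ∈ Icc 0 1) (hgx : |g x| ≤ δ) (df : DifferentiableAt ℝ f x)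
    (dg : DifferentiableAt ℝ g x) (dζ : DifferentiableAt ℝ ζ x) :
    ‖∇ (fun y => f y - ζ y * g y) x‖ ≤ K + K' + 1 := by
  have h₁ : ‖ζ x • ∇ g x‖ ≤ K' := by
    rw [norm_smul, Real.norm_of_nonneg hζx.1]
    exact (mul_le_of_le_one_left (norm_nonneg _) hζx.2).trans (norm_gradient_le hg x)
  have h₂ : ‖g x • ∇ ζ x‖ ≤ 1 := by
    have hgradζ := norm_gradient_le hζ x
    rw [NNReal.coe_inv, Real.coe_toNNReal _ hδ.le] at hgradζ
    rw [norm_smul, Real.norm_eq_abs, ← mul_inv_cancel₀ hδ.ne']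
    exact mul_le_mul hgx hgradζ (norm_nonneg _) hδ.le
  rw [gradient_sub df (dζ.fun_mul dg), gradient_mul dζ dg]
  calc ‖∇ f x - (ζ x • ∇ g x + g x • ∇ ζ x)‖ ≤ ‖∇ f x‖ + (‖ζ x • ∇ g x‖ + ‖g x • ∇ ζ x‖) :=
        (norm_sub_le _ _).trans (add_le_add_right (norm_add_le _ _) _)
    _ ≤ K + K' + 1 := by linarith [norm_gradient_le hf x]

variable {V : Type*} [NormedAddCommGroup V] [InnerProductSpace ℝ V] [FiniteDimensional ℝ V]
  [MeasurableSpace V] [BorelSpace V]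

theorem exists_cthickening_subset_mul_volume_sdiff_le {K Ω : Set V} (hK : IsCompact K)
    (hΩ : IsOpen Ω) (hKΩ : K ⊆ Ω) (C : ℝ) {ε : ℝ} (hε : 0 < ε) :
    ∃ δ > 0, cthickening δ K ⊆ Ω ∧ C * volume.real (cthickening δ K \ K) ≤ ε := by
  obtain ⟨δ₀, hδ₀, hsub⟩ := hK.exists_cthickening_subset_open hΩ hKΩ
  have hlim : Tendsto (fun δ => C * (volume.real (cthickening δ K) - volume.real K)) (𝓝[>] 0)
      (𝓝 (C * (volume.real K - volume.real K))) :=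
    ((((ENNReal.tendsto_toReal hK.measure_lt_top.ne).comp
      (tendsto_measure_cthickening_of_isCompact hK)).sub_const _).const_mul C).mono_left
      nhdsWithin_le_nhds
  rw [sub_self, mul_zero] at hlim
  obtain ⟨δ, hδε, hδδ₀, hδ⟩ := ((hlim.eventually_le_const hε).and
    ((eventually_nhdsWithin_of_eventually_nhds (ge_mem_nhds hδ₀)).and self_mem_nhdsWithin)).exists
  refine ⟨δ, hδ, (cthickening_mono hδδ₀ K).trans hsub, ?_⟩
  rwa [measureReal_sdiff (self_subset_cthickening K) hK.measurableSet
    hK.isBounded.cthickening.measure_lt_top.ne]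

theorem integral_energyDensity_sub_eq {u v : V → ℝ} (hu : IsLipschitz u) (hv : IsLipschitz v)
    {K s : Set V} (hK : IsClosed K) (hKs : K ⊆ s) (hs : Bornology.IsBounded s)
    (hvu : ∀ x ∉ K, v x = u x) :
    ∫ x, (energyDensity v x - energyDensity u x) =
      (∫ x in s, energyDensity v x) - ∫ x in s, energyDensity u x := by
  obtain ⟨A, hA⟩ := hu
  obtain ⟨B, hB⟩ := hv
  rw [← integral_sub (integrableOn_energyDensity hB hs) (integrableOn_energyDensity hA hs)]
  refine (setIntegral_eq_integral_of_forall_compl_eq_zero fun x hx => ?_).symm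
  rw [energyDensity_congr_of_notMem hK hvu fun h => hx (hKs h), sub_self]

theorem setIntegral_energyDensity_le_of_ae_norm_gradient_le {f : V → ℝ} (hf : IsLipschitz f)
    {s : Set V} (hs : MeasurableSet s) (hsb : Bornology.IsBounded s) {M : ℝ}
    (hM : ∀ᵐ x, x ∈ s → ‖∇ f x‖ ≤ M) :
    ∫ x in s, energyDensity f x ≤ (M ^ 2 + 1) * volume.real s := by
  obtain ⟨K, hK⟩ := hf
  calc ∫ x in s, energyDensity f x ≤ ∫ _ in s, (M ^ 2 + 1) := by
        refine setIntegral_mono_on_ae (integrableOn_energyDensity hK hsb)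
          (integrableOn_const hsb.measure_lt_top.ne) hs ?_
        filter_upwards [hM] with x hx hxs
        exact add_le_add (pow_le_pow_left₀ (norm_nonneg _) (hx hxs) 2) (heaviside_le_one _)
    _ = (M ^ 2 + 1) * volume.real s := by rw [setIntegral_const, smul_eq_mul, mul_comm]

/-- The glued function is `u + (v - u₀) - ζ * (u - u₀)` with a cutoff `ζ` that equals `1` on the
`δ`-thickening of `K`. -/
theorem exists_gluing {L : ℝ≥0} {u u₀ v : V → ℝ} {K : Set V} {δ : ℝ} (hu : LipschitzWith L u)
    (hu0 : ∀ x, 0 ≤ u x) (hu₀ : LipschitzWith L u₀) (hu₀0 : ∀ x, 0 ≤ u₀ x) (hv : IsLipschitz v)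
    (hv0 : ∀ x, 0 ≤ v x) (hK : IsClosed K) (hvu₀ : ∀ x ∉ K, v x = u₀ x) (hδ : 0 < δ)
    (hclose : ∀ x ∈ cthickening (δ + δ) K, |u x - u₀ x| ≤ δ) :
    ∃ w : V → ℝ, IsLipschitz w ∧ (∀ x, 0 ≤ w x) ∧ (∀ x ∈ thickening δ K, w x = v x) ∧
      (∀ x ∉ cthickening (δ + δ) K, w x = u x) ∧
      ∀ᵐ x, x ∈ cthickening (δ + δ) K \ thickening δ K → ‖∇ w x‖ ≤ 3 * L + 1 := by
  obtain ⟨ζ, lζ, hζ01, hζ1, hζ0⟩ := exists_cutoff (thickening δ K) hδ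
  have lg : LipschitzWith (L + L) fun x => u x - u₀ x := hu.sub hu₀
  have hKT : K ⊆ thickening δ K := self_subset_thickening hδ K
  have hKS : K ⊆ cthickening (δ + δ) K := self_subset_cthickening K
  have hζS : ∀ x ∉ cthickening (δ + δ) K, ζ x = 0 := fun x hx => hζ0 x fun hxT =>
    hx (thickening_subset_cthickening _ K (thickening_thickening_subset δ δ K hxT))
  set w : V → ℝ := fun x => u x + (v x - u₀ x) - ζ x * (u x - u₀ x) with hw
  have hwT : ∀ x ∈ thickening δ K, w x = v x := fun x hx => by simp only [hw, hζ1 x hx]; ring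
  have hwK : ∀ x ∉ K, w x = u x - ζ x * (u x - u₀ x) := fun x hx => by
    simp only [hw, hvu₀ x hx]; ring
  refine ⟨w, ?_, fun x => ?_, hwT, fun x hx => ?_, ?_⟩
  · exact (IsLipschitz.add ⟨L, hu⟩ (hv.sub ⟨L, hu₀⟩)).sub <|
      IsLipschitz.mul_of_abs_le ⟨_, lζ⟩ ⟨_, lg⟩ 1 δ
        (fun x => by rw [abs_of_nonneg (hζ01 x).1]; exact (hζ01 x).2)
        fun x hx => hclose x (not_imp_comm.1 (hζS x) hx)
  · by_cases hx : x ∈ K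
    · rw [hwT x (hKT hx)]; exact hv0 x
    · rw [hwK x hx]
      linarith [mul_nonneg (hζ01 x).1 (hu₀0 x), mul_nonneg (sub_nonneg.2 (hζ01 x).2) (hu0 x)]
  · rw [hwK x fun hxK => hx (hKS hxK), hζS x hx, zero_mul, sub_zero]
  · filter_upwards [hu.ae_differentiableAt, lg.ae_differentiableAt, lζ.ae_differentiableAt]
      with x du dg dζ hx
    have hev : w =ᶠ[𝓝 x] fun x => u x - ζ x * (u x - u₀ x) := by
      filter_upwards [hK.isOpen_compl.mem_nhds fun hxK => hx.2 (hKT hxK)] using hwK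
    have hgrad := norm_gradient_sub_mul_le hδ hu lg lζ (hζ01 x) (hclose x hx.1) du dg dζ
    rw [hev.gradient_eq]
    push_cast at hgrad
    linarith

theorem IsLipMinimizer.setIntegral_thickening_energyDensity_le {L : ℝ≥0} {Ω : Set V}
    {u u₀ v : V → ℝ} (h : IsLipMinimizer L Ω u) (hu₀ : LipschitzWith L u₀) (hu₀0 : ∀ x, 0 ≤ u₀ x)
    (hv : IsLipschitz v) (hv0 : ∀ x, 0 ≤ v x) {K : Set V} (hK : IsCompact K)
    (hvu₀ : ∀ x ∉ K, v x = u₀ x) {δ : ℝ} (hδ : 0 < δ) (hδΩ : cthickening (δ + δ) K ⊆ Ω)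
    (hclose : ∀ x ∈ cthickening (δ + δ) K, |u x - u₀ x| ≤ δ) :
    ∫ x in thickening δ K, energyDensity u x ≤ (∫ x in thickening δ K, energyDensity v x) +
      ((3 * L + 1) ^ 2 + 1) * volume.real (cthickening (δ + δ) K \ K) := by
  obtain ⟨w, lw, hw0, hwT, hwS, hgrad⟩ := exists_gluing h.lipschitzWith h.nonneg hu₀ hu₀0 hv hv0
    hK.isClosed hvu₀ hδ hclose
  obtain ⟨B, hB⟩ := id lw
  set T := thickening δ K
  set S := cthickening (δ + δ) K
  have hS : IsCompact S := hK.cthickening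
  have hT : MeasurableSet T := isOpen_thickening.measurableSet
  have hTS : T ⊆ S := (thickening_mono (by linarith) K).trans (thickening_subset_cthickening _ K)
  have hmin := h.integral_sub_nonneg w hw0 lw S hS hδΩ hwS
  rw [integral_energyDensity_sub_eq h.isLipschitz lw hS.isClosed subset_rfl hS.isBounded hwS]
    at hmin
  have hmono : ∫ x in T, energyDensity u x ≤ ∫ x in S, energyDensity u x :=
    setIntegral_mono_set (integrableOn_energyDensity h.lipschitzWith hS.isBounded)
      (Eventually.of_forall (energyDensity_nonneg u)) hTS.eventuallyLE
  have hsplit := setIntegral_sdiff hT (integrableOn_energyDensity hB hS.isBounded) hTS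
  have hwv : ∫ x in T, energyDensity w x = ∫ x in T, energyDensity v x :=
    setIntegral_congr_fun hT fun x hx =>
      energyDensity_congr (by filter_upwards [isOpen_thickening.mem_nhds hx] using hwT)
  have hann : ∫ x in S \ T, energyDensity w x ≤ ((3 * L + 1) ^ 2 + 1) * volume.real (S \ T) :=
    setIntegral_energyDensity_le_of_ae_norm_gradient_le lw (hS.measurableSet.diff hT)
      (hS.isBounded.subset sdiff_subset) hgrad
  have hvol : volume.real (S \ T) ≤ volume.real (S \ K) :=
    measureReal_mono (sdiff_subset_sdiff_right (self_subset_thickening hδ K))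
      (hS.isBounded.subset sdiff_subset).measure_lt_top.ne
  have := mul_le_mul_of_nonneg_left hvol (show 0 ≤ ((3 * L + 1) ^ 2 + 1 : ℝ) by positivity)
  linarith

theorem IsLipMinimizer.of_tendstoLocallyUniformly {L : ℝ≥0} {Ω : ℕ → Set V} {Ω₀ : Set V}
    {u : ℕ → V → ℝ} {u₀ : V → ℝ} (hΩ₀ : IsOpen Ω₀)
    (hΩ : ∀ K, IsCompact K → K ⊆ Ω₀ → ∀ᶠ k in atTop, K ⊆ Ω k)
    (hu : ∀ k, IsLipMinimizer L (Ω k) (u k)) (hlim : TendstoLocallyUniformly u u₀ atTop) :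
    IsLipMinimizer L Ω₀ u₀ := by
  have hpt : ∀ x, Tendsto (fun k => u k x) atTop (𝓝 (u₀ x)) := fun x =>
    (tendstoLocallyUniformlyOn_univ.2 hlim).tendsto_at (mem_univ x)
  have lu₀ : LipschitzWith L u₀ := LipschitzWith.of_dist_le_mul fun x y =>
    le_of_tendsto ((hpt x).dist (hpt y))
      (Eventually.of_forall fun k => (hu k).lipschitzWith.dist_le_mul x y)
  have hu₀0 : ∀ x, 0 ≤ u₀ x := fun x => ge_of_tendsto' (hpt x) fun k => (hu k).nonneg x
  refine ⟨hu₀0, lu₀, fun v hv0 lv K hK hKΩ₀ hvu₀ => ?_⟩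
  refine le_of_forall_pos_le_add fun ε hε => ?_
  obtain ⟨δ, hδ, hδΩ₀, hvol⟩ := exists_cthickening_subset_mul_volume_sdiff_le hK hΩ₀ hKΩ₀
    ((3 * L + 1) ^ 2 + 1) (half_pos hε)
  have hS : IsCompact (cthickening δ K) := hK.cthickening
  have hTb : Bornology.IsBounded (thickening (δ / 2) K) := hK.isBounded.thickening
  obtain ⟨k, hkΩ, hkclose, hklsc⟩ := ((hΩ _ hS hδΩ₀).and
    ((Metric.tendstoUniformlyOn_iff.1
      (tendstoLocallyUniformly_iff_forall_isCompact.1 hlim _ hS) _ (half_pos hδ)).and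
    (eventually_setIntegral_energyDensity_le_add (fun k => (hu k).lipschitzWith) lu₀ hpt
      isOpen_thickening.measurableSet hTb (half_pos hε)))).exists
  have hle := (hu k).setIntegral_thickening_energyDensity_le lu₀ hu₀0 lv hv0 hK hvu₀ (half_pos hδ)
    (by rwa [add_halves]) (by
      rw [add_halves]
      exact fun x hx => by rw [abs_sub_comm]; exact (hkclose x hx).le)
  rw [add_halves] at hle
  rw [integral_energyDensity_sub_eq ⟨L, lu₀⟩ lv hK.isClosed
    (self_subset_thickening (half_pos hδ) K) hTb hvu₀]
  linarith

end Compactness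

/-! ### Inner variations -/

section InnerVariation

theorem bijective_add_of_lipschitzWith {E : Type*} [NormedAddCommGroup E] [CompleteSpace E]
    {K : ℝ≥0} {ψ : E → E} (hψ : LipschitzWith K ψ) (hK : K < 1) :
    Function.Bijective fun x => x + ψ x := by
  refine ⟨(AntilipschitzWith.id.add_lipschitzWith hψ (by simpa using hK)).injective, fun y => ?_⟩
  have hcontr : ContractingWith K fun x => y - ψ x :=
    ⟨hK, LipschitzWith.of_dist_le_mul fun a b => by
      rw [dist_sub_left]
      exact hψ.dist_le_mul a b⟩
  exact ⟨hcontr.fixedPoint, (sub_eq_iff_eq_add.1 hcontr.fixedPoint_isFixedPt).symm⟩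

theorem det_id_add_smulRight {E : Type*} [NormedAddCommGroup E] [NormedSpace ℝ E]
    [FiniteDimensional ℝ E] (f : E →L[ℝ] ℝ) (a : E) :
    (ContinuousLinearMap.id ℝ E + f.smulRight a).det = 1 + f a := by
  have : ((ContinuousLinearMap.id ℝ E + f.smulRight a : E →L[ℝ] E) : E →ₗ[ℝ] E) =
      LinearMap.transvection (f : E →ₗ[ℝ] ℝ) a := by
    ext y
    simp [LinearMap.transvection]
  rw [ContinuousLinearMap.det, this, LinearMap.transvection.det]
  rfl

section Shear

variable {V : Type*} [NormedAddCommGroup V] [InnerProductSpace ℝ V]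

/-- The deformation of the space which moves each `x` by `η x` times the fixed vector `a`. -/
def shear (η : V → ℝ) (a x : V) : V := x + η x • a

variable {η : V → ℝ} {a x : V} {M : ℝ≥0}

theorem hasFDerivAt_shear (hη : DifferentiableAt ℝ η x) (a : V) :
    HasFDerivAt (shear η a) (ContinuousLinearMap.id ℝ V + (fderiv ℝ η x).smulRight a) x :=
  (hasFDerivAt_id x).add (hη.hasFDerivAt.smul_const a)

theorem lipschitzWith_smul_const (hη : LipschitzWith M η) (ha : M * ‖a‖ ≤ 1 / 2) :
    LipschitzWith (1 / 2) fun x => η x • a :=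
  LipschitzWith.of_dist_le_mul fun x y => by
    calc dist (η x • a) (η y • a) = dist (η x) (η y) * ‖a‖ := by
          rw [dist_eq_norm, ← sub_smul, norm_smul, dist_eq_norm]
      _ ≤ M * dist x y * ‖a‖ := by
          gcongr
          exact hη.dist_le_mul x y
      _ = M * ‖a‖ * dist x y := by ring
      _ ≤ 1 / 2 * dist x y := by gcongr
      _ = ((1 / 2 : ℝ≥0) : ℝ) * dist x y := by norm_num

theorem shear_of_notMem_tsupport (hx : x ∉ tsupport η) : shear η a x = x := by
  rw [shear, image_eq_zero_of_notMem_tsupport hx, zero_smul, add_zero]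

theorem image_shear_tsupport (h : Function.Bijective (shear η a)) :
    shear η a '' tsupport η = tsupport η := by
  rw [← compl_inj_iff, ← image_compl_eq h]
  exact (image_congr fun x hx => shear_of_notMem_tsupport hx).trans (image_id _)

theorem exists_antilipschitzWith_shear (hη : LipschitzWith M η) (ha : M * ‖a‖ ≤ 1 / 2) :
    ∃ K, AntilipschitzWith K (shear η a) :=
  ⟨_, AntilipschitzWith.id.add_lipschitzWith (lipschitzWith_smul_const hη ha) (by
    rw [inv_one]
    exact one_half_lt_one)⟩

variable [FiniteDimensional ℝ V]

theorem bijective_shear (hη : LipschitzWith M η) (ha : M * ‖a‖ ≤ 1 / 2) :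
    Function.Bijective (shear η a) :=
  bijective_add_of_lipschitzWith (lipschitzWith_smul_const hη ha) one_half_lt_one

theorem abs_inner_gradient_le_half (hη : LipschitzWith M η) (ha : M * ‖a‖ ≤ 1 / 2) (x : V) :
    |⟪a, ∇ η x⟫| ≤ 1 / 2 :=
  calc |⟪a, ∇ η x⟫| ≤ ‖a‖ * ‖∇ η x‖ := abs_real_inner_le_norm _ _
    _ ≤ ‖a‖ * M := by
        gcongr
        exact norm_gradient_le hη x
    _ ≤ 1 / 2 := by rwa [mul_comm]

theorem half_le_one_add_inner_gradient (hη : LipschitzWith M η) (ha : M * ‖a‖ ≤ 1 / 2) (x : V) :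
    1 / 2 ≤ 1 + ⟪a, ∇ η x⟫ := by
  linarith [(abs_le.1 (abs_inner_gradient_le_half hη ha x)).1]

theorem gradient_comp_shear {v : V → ℝ} (hη : DifferentiableAt ℝ η x)
    (hv : DifferentiableAt ℝ v (shear η a x)) :
    ∇ (v ∘ shear η a) x = ∇ v (shear η a x) + ⟪∇ v (shear η a x), a⟫ • ∇ η x := by
  refine ext_inner_right ℝ fun y => ?_
  rw [inner_gradient_left, (hv.hasFDerivAt.comp x (hasFDerivAt_shear hη a)).fderiv]
  simp only [inner_add_left, real_inner_smul_left, inner_gradient_left,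
    ContinuousLinearMap.comp_apply, _root_.add_apply, ContinuousLinearMap.id_apply,
    ContinuousLinearMap.smulRight_apply, map_add, map_smul, smul_eq_mul]
  ring

variable [MeasurableSpace V] [BorelSpace V]

theorem ae_comp_of_antilipschitzWith {K : ℝ≥0} {Φ : V → V} (hΦ : AntilipschitzWith K Φ)
    {p : V → Prop} (hp : ∀ᵐ y, p y) : ∀ᵐ x, p (Φ x) := by
  set d : ℝ := (Module.finrank ℝ V : ℝ)
  have hnull : Measure.hausdorffMeasure d {y | ¬p y} = 0 :=
    Measure.absolutelyContinuous_isAddHaarMeasure _ (volume : Measure V) hp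
  have hpre : Measure.hausdorffMeasure d (Φ ⁻¹' {y | ¬p y}) = 0 :=
    le_antisymm ((hΦ.hausdorffMeasure_preimage_le (Nat.cast_nonneg _) _).trans
      (by rw [hnull, mul_zero])) zero_le
  exact Measure.absolutelyContinuous_isAddHaarMeasure (volume : Measure V) _ hpre

theorem setIntegral_tsupport_eq_comp_shear (hη : ContDiff ℝ 1 η) (hM : LipschitzWith M η)
    (ha : M * ‖a‖ ≤ 1 / 2) (f : V → ℝ) :
    ∫ x in tsupport η, f x = ∫ x in tsupport η, (1 + ⟪a, ∇ η x⟫) * f (shear η a x) := by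
  have hΦ := bijective_shear hM ha
  have hchange := integral_image_eq_integral_abs_det_fderiv_smul (volume : Measure V)
    (isClosed_tsupport η).measurableSet
    (fun x _ => (hasFDerivAt_shear (hη.differentiable one_ne_zero x) a).hasFDerivWithinAt)
    hΦ.1.injOn f
  rw [image_shear_tsupport hΦ] at hchange
  rw [hchange]
  refine integral_congr_ae (Eventually.of_forall fun x => ?_)
  have hdet := half_le_one_add_inner_gradient hM ha x
  simp only [det_id_add_smulRight, smul_eq_mul]
  rw [← inner_gradient_left, real_inner_comm, abs_of_pos (by linarith)]

end Shear

variable {V : Type*} [NormedAddCommGroup V] [InnerProductSpace ℝ V] [FiniteDimensional ℝ V]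

/-- The integrand of the first variation `d/dt J(u ∘ Φₜ⁻¹)` at `t = 0` of the energy under the
deformations `Φₜ x = x + t η(x) a`. -/
noncomputable def innerVariation (u η : V → ℝ) (a x : V) : ℝ :=
  energyDensity u x * ⟪a, ∇ η x⟫ - 2 * ⟪∇ u x, a⟫ * ⟪∇ u x, ∇ η x⟫

variable {u η : V → ℝ} {L M : ℝ≥0}

theorem innerVariation_smul (t : ℝ) (a x : V) :
    innerVariation u η (t • a) x = t * innerVariation u η a x := by
  simp only [innerVariation, real_inner_smul_left, real_inner_smul_right]
  ring

theorem innerVariation_eq_zero_of_notMem_tsupport {x : V} (hx : x ∉ tsupport η) (a : V) :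
    innerVariation u η a x = 0 := by
  simp [innerVariation, gradient_eq_zero_of_notMem (isClosed_tsupport η)
    (fun _ => image_eq_zero_of_notMem_tsupport) hx]

theorem norm_innerVariation_le (hu : LipschitzWith L u) (hη : LipschitzWith M η) (a x : V) :
    ‖innerVariation u η a x‖ ≤ (L ^ 2 + 1) * (‖a‖ * M) + 2 * (L * ‖a‖) * (L * M) := by
  have hgrad := norm_gradient_le hu x
  have hinner : ‖⟪a, ∇ η x⟫‖ ≤ ‖a‖ * M :=
    (norm_inner_le_norm _ _).trans (by gcongr; exact norm_gradient_le hη x)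
  have hinner' : ‖⟪∇ u x, a⟫‖ ≤ L * ‖a‖ := (norm_inner_le_norm _ _).trans (by gcongr)
  refine (norm_sub_le _ _).trans (add_le_add ?_ ?_)
  · rw [norm_mul, Real.norm_of_nonneg (energyDensity_nonneg u x)]
    exact mul_le_mul (energyDensity_le hu x) hinner (norm_nonneg _) (by positivity)
  · rw [norm_mul, norm_mul, Real.norm_of_nonneg zero_le_two]
    exact mul_le_mul (by gcongr) (norm_inner_gradient_le hu hη x) (norm_nonneg _) (by positivity)

theorem energyDensity_shear_le {v : V → ℝ} {a x : V} (hv : LipschitzWith L (v ∘ shear η a))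
    (hη : LipschitzWith M η) (ha : M * ‖a‖ ≤ 1 / 2) (hηx : DifferentiableAt ℝ η x)
    (hvx : DifferentiableAt ℝ v (shear η a x)) :
    (1 + ⟪a, ∇ η x⟫) * energyDensity v (shear η a x) ≤ energyDensity (v ∘ shear η a) x
      + innerVariation (v ∘ shear η a) η a x + 2 * (L * ‖a‖ * M) ^ 2 := by
  have hdet := half_le_one_add_inner_gradient hη ha x
  have hLa : |⟪∇ (v ∘ shear η a) x, a⟫| ≤ L * ‖a‖ :=
    (abs_real_inner_le_norm _ _).trans (by gcongr; exact norm_gradient_le hv x)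
  have hgrad := gradient_comp_shear hηx hvx
  have hq : ‖∇ η x‖ ≤ M := norm_gradient_le hη x
  unfold innerVariation energyDensity
  rw [Function.comp_apply]
  set p := ∇ (v ∘ shear η a) x
  set P := ∇ v (shear η a x)
  set q := ∇ η x
  have hpa : ⟪p, a⟫ = (1 + ⟪a, q⟫) * ⟪P, a⟫ := by
    rw [hgrad, inner_add_left, real_inner_smul_left, real_inner_comm q a]
    ring
  have hP : ‖P‖ ^ 2 = ‖p‖ ^ 2 - 2 * ⟪P, a⟫ * ⟪p, q⟫ + ⟪P, a⟫ ^ 2 * ‖q‖ ^ 2 := by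
    rw [eq_sub_of_add_eq hgrad.symm, norm_sub_sq_real, real_inner_smul_right, norm_smul, mul_pow,
      Real.norm_eq_abs, sq_abs, ← eq_sub_of_add_eq hgrad.symm]
    ring
  have hremainder : (1 + ⟪a, q⟫) * (⟪P, a⟫ ^ 2 * ‖q‖ ^ 2) ≤ 2 * (L * ‖a‖ * M) ^ 2 :=
    calc (1 + ⟪a, q⟫) * (⟪P, a⟫ ^ 2 * ‖q‖ ^ 2)
        ≤ 2 * (1 + ⟪a, q⟫) * ((1 + ⟪a, q⟫) * (⟪P, a⟫ ^ 2 * ‖q‖ ^ 2)) :=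
          le_mul_of_one_le_left (mul_nonneg (by linarith) (by positivity)) (by linarith)
      _ = 2 * (|⟪p, a⟫| * ‖q‖) ^ 2 := by
          rw [mul_pow, sq_abs, hpa]
          ring
      _ ≤ 2 * (L * ‖a‖ * M) ^ 2 := by gcongr
  rw [hP, hpa]
  linarith

variable [MeasurableSpace V] [BorelSpace V]

theorem measurable_innerVariation (hu : Continuous u) (η : V → ℝ) (a : V) :
    Measurable (innerVariation u η a) :=
  ((measurable_energyDensity hu).mul (measurable_const.inner (measurable_gradient η))).sub
    ((((measurable_gradient u).inner measurable_const).const_mul 2).mul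
      ((measurable_gradient u).inner (measurable_gradient η)))

theorem integrable_innerVariation (hu : LipschitzWith L u) (hη : LipschitzWith M η)
    (hc : HasCompactSupport η) (a : V) : Integrable (innerVariation u η a) :=
  integrable_of_forall_norm_le hc (measurable_innerVariation hu.continuous η a).aestronglyMeasurable
    _ (norm_innerVariation_le hu hη a) fun _ hx => innerVariation_eq_zero_of_notMem_tsupport hx a

theorem integrableOn_energyDensity_shear {v : V → ℝ} (hv : LipschitzWith L v)
    (hη : ContDiff ℝ 1 η) (hM : LipschitzWith M η) {a : V} (ha : M * ‖a‖ ≤ 1 / 2) {s : Set V}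
    (hs : Bornology.IsBounded s) :
    IntegrableOn (fun x => (1 + ⟪a, ∇ η x⟫) * energyDensity v (shear η a x)) s := by
  have hΦ : Continuous (shear η a) := continuous_id.add (hη.continuous.smul continuous_const)
  have hmeas : Measurable fun x => (1 + ⟪a, ∇ η x⟫) * energyDensity v (shear η a x) :=
    (measurable_const.add (measurable_const.inner (measurable_gradient η))).mul
      ((measurable_energyDensity hv.continuous).comp hΦ.measurable)
  refine integrableOn_of_forall_norm_le hs hmeas.aestronglyMeasurable
    ((1 + 1 / 2) * (L ^ 2 + 1)) fun x => ?_
  have hinner := abs_le.1 (abs_inner_gradient_le_half hM ha x)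
  rw [norm_mul, Real.norm_of_nonneg (energyDensity_nonneg v _),
    Real.norm_of_nonneg (by linarith [hinner.1])]
  exact mul_le_mul (by linarith [hinner.2]) (energyDensity_le hv _) (energyDensity_nonneg _ _)
    (by norm_num)

namespace IsLipMinimizer

variable {Ω : Set V}

theorem integral_innerVariation_add_nonneg (hu : IsLipMinimizer L Ω u) (hη : ContDiff ℝ 1 η)
    (hc : HasCompactSupport η) (hηΩ : tsupport η ⊆ Ω) (hM : LipschitzWith M η) {a : V}
    (ha : M * ‖a‖ ≤ 1 / 2) :
    0 ≤ (∫ x, innerVariation u η a x)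
      + 2 * (L * ‖a‖ * M) ^ 2 * (volume : Measure V).real (tsupport η) := by
  have hΦ := bijective_shear hM ha
  obtain ⟨K, hanti⟩ := exists_antilipschitzWith_shear hM ha
  obtain ⟨Ψ, hΨΦ, hΦΨ⟩ := Function.bijective_iff_has_inverse.1 hΦ
  set v := u ∘ Ψ
  have hvΦ : v ∘ shear η a = u := funext fun x => congrArg u (hΨΦ x)
  have lv : LipschitzWith (L * K) v := hu.lipschitzWith.comp (hanti.to_rightInverse hΦΨ)
  have hvu : ∀ x ∉ tsupport η, v x = u x := fun x hx => by
    conv_rhs => rw [← hvΦ, Function.comp_apply, shear_of_notMem_tsupport hx]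
  have hmin : ∫ x in tsupport η, energyDensity u x ≤ ∫ x in tsupport η, energyDensity v x := by
    have := hu.integral_sub_nonneg v (fun x => hu.nonneg _) ⟨_, lv⟩ _ hc hηΩ hvu
    rwa [integral_energyDensity_sub_eq hu.isLipschitz ⟨_, lv⟩ (isClosed_tsupport η) subset_rfl
      hc.isBounded hvu, sub_nonneg] at this
  have hpt : ∀ᵐ x : V, (1 + ⟪a, ∇ η x⟫) * energyDensity v (shear η a x) ≤
      energyDensity u x + innerVariation u η a x + 2 * (L * ‖a‖ * M) ^ 2 := by
    filter_upwards [ae_comp_of_antilipschitzWith hanti lv.ae_differentiableAt] with x hx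
    have := energyDensity_shear_le (hvΦ ▸ hu.lipschitzWith) hM ha
      (hη.differentiable one_ne_zero x) hx
    rwa [hvΦ] at this
  have iL := integrableOn_energyDensity_shear lv hη hM ha hc.isBounded
  have iu := integrableOn_energyDensity hu.lipschitzWith hc.isBounded
  have iI := (integrable_innerVariation hu.lipschitzWith hM hc a).integrableOn (s := tsupport η)
  have hfin := integral_mono_ae iL ((iu.add iI).add (integrableOn_const hc.measure_lt_top.ne))
    (ae_restrict_of_ae hpt)
  rw [← setIntegral_tsupport_eq_comp_shear hη hM ha] at hfin
  rw [integral_add' (iu.add iI) (integrableOn_const hc.measure_lt_top.ne), integral_add' iu iI,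
    setIntegral_const, smul_eq_mul, setIntegral_eq_integral_of_forall_compl_eq_zero
    fun x hx => innerVariation_eq_zero_of_notMem_tsupport hx a] at hfin
  linarith

theorem integral_innerVariation_eq_zero (hu : IsLipMinimizer L Ω u) (hη : ContDiff ℝ 1 η)
    (hc : HasCompactSupport η) (hηΩ : tsupport η ⊆ Ω) (a : V) :
    ∫ x, innerVariation u η a x = 0 := by
  obtain ⟨M, hM⟩ := ContDiff.lipschitzWith_of_hasCompactSupport hc hη one_ne_zero
  have hnonneg : ∀ a : V, 0 ≤ ∫ x, innerVariation u η a x := by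
    intro a
    refine nonneg_of_forall_small_quadratic_nonneg
      (b := 2 * (L * ‖a‖ * M) ^ 2 * (volume : Measure V).real (tsupport η))
      (t₀ := 1 / (2 * (M * ‖a‖ + 1))) (by positivity) fun t ht ht' => ?_
    have hta : M * ‖t • a‖ ≤ 1 / 2 := by
      rw [lt_div_iff₀ (by positivity)] at ht'
      rw [norm_smul, Real.norm_of_nonneg ht.le]
      linarith
    have hstep := hu.integral_innerVariation_add_nonneg hη hc hηΩ hM hta
    simp only [innerVariation_smul, integral_const_mul, norm_smul, Real.norm_of_nonneg ht.le]
      at hstep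
    convert hstep using 2
    ring
  have hneg := hnonneg ((-1 : ℝ) • a)
  simp only [innerVariation_smul, integral_const_mul] at hneg
  linarith [hnonneg a]

end IsLipMinimizer

end InnerVariation

/-! ### Proportional minimizers -/

section Convolution

variable {V : Type*} [NormedAddCommGroup V] [InnerProductSpace ℝ V] [FiniteDimensional ℝ V]
  {p g : V → ℝ}

theorem inner_gradient_comp_const_sub (hg : Differentiable ℝ g) (a c t : V) :
    ⟪a, ∇ (fun x => g (c - x)) t⟫ = -fderiv ℝ g (c - t) a := by
  have hcomp : HasFDerivAt (fun x => g (c - x))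
      ((fderiv ℝ g (c - t)).comp (-ContinuousLinearMap.id ℝ V)) t :=
    (hg (c - t)).hasFDerivAt.comp t ((hasFDerivAt_id t).const_sub c)
  rw [real_inner_comm, inner_gradient_left, hcomp.fderiv]
  simp

variable [MeasurableSpace V] [BorelSpace V]

theorem integral_mul_comp_sub_eq (hp : LocallyIntegrable p)
    (h : ∀ η : V → ℝ, ContDiff ℝ 1 η → HasCompactSupport η → ∀ a : V,
      ∫ x, p x * ⟪a, ∇ η x⟫ = 0)
    (hg : ContDiff ℝ 1 g) (hc : HasCompactSupport g) (x y : V) :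
    ∫ t, p t * g (x - t) = ∫ t, p t * g (y - t) := by
  have hderiv := hc.hasFDerivAt_convolution_right (ContinuousLinearMap.mul ℝ ℝ) hp hg
  refine is_const_of_fderiv_eq_zero (𝕜 := ℝ) (fun z => (hderiv z).differentiableAt)
    (fun z => ?_) x y
  ext a
  rw [(hderiv z).fderiv, convolution_precompR_apply _ hp (hc.fderiv ℝ)
    (hg.continuous_fderiv one_ne_zero), convolution_mul]
  have htest := h (fun t => g (z - t)) (hg.comp (contDiff_const.sub contDiff_id))
    (hc.comp_homeomorph (Homeomorph.subLeft z)) a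
  simpa only [inner_gradient_comp_const_sub (hg.differentiable one_ne_zero), mul_neg,
    integral_neg, neg_eq_zero, zero_apply] using htest

theorem ae_eq_const_of_integral_mul_inner_gradient_eq_zero (hp : LocallyIntegrable p)
    (h : ∀ η : V → ℝ, ContDiff ℝ 1 η → HasCompactSupport η → ∀ a : V,
      ∫ x, p x * ⟪a, ∇ η x⟫ = 0) :
    ∃ c, ∀ᵐ x : V, p x = c := by
  let φ : ℕ → ContDiffBump (0 : V) := fun k =>
    ⟨1 / (k + 1), 2 * (1 / (k + 1)), by positivity, lt_two_mul_self (by positivity)⟩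
  have hrOut : Tendsto (fun k => (φ k).rOut) atTop (𝓝 0) := by
    simpa only [mul_zero] using (tendsto_one_div_add_atTop_nhds_zero_nat (𝕜 := ℝ)).const_mul 2
  have hlim : ∀ᵐ x : V, Tendsto (fun k => ∫ t, p t * (φ k).normed volume (x - t)) atTop
      (𝓝 (p x)) := by
    filter_upwards [ContDiffBump.ae_convolution_tendsto_right_of_locallyIntegrable hrOut
      (.of_forall fun _ => le_rfl) hp] with x hx
    simpa only [convolution_lsmul_swap, smul_eq_mul, mul_comm] using hx
  obtain ⟨x₀, hx₀⟩ := hlim.exists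
  refine ⟨p x₀, hlim.mono fun x hx => tendsto_nhds_unique hx (hx₀.congr fun k => ?_)⟩
  exact integral_mul_comp_sub_eq hp h (φ k).contDiff_normed (φ k).hasCompactSupport_normed x₀ x

end Convolution

section Proportional

variable {V : Type*} [NormedAddCommGroup V] [InnerProductSpace ℝ V] [FiniteDimensional ℝ V]
  {L L' : ℝ≥0} {Ω : Set V} {u w η : V → ℝ} {Λ : ℝ}

theorem sq_mul_innerVariation_sub_innerVariation_const_mul (hΛ : 0 < Λ) {x : V}
    (hu : DifferentiableAt ℝ u x) (a : V) :
    Λ ^ 2 * innerVariation u η a x - innerVariation (fun y => Λ * u y) η a x =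
      (Λ ^ 2 - 1) * (heaviside (u x) * ⟪a, ∇ η x⟫) := by
  have hheav : heaviside (Λ * u x) = heaviside (u x) :=
    heaviside_congr (mul_pos_iff_of_pos_left hΛ)
  rw [innerVariation, innerVariation, energyDensity, energyDensity, gradient_const_mul Λ hu, hheav,
    norm_smul, mul_pow, Real.norm_eq_abs, sq_abs, real_inner_smul_left, real_inner_smul_left]
  ring

variable [MeasurableSpace V] [BorelSpace V]

theorem WeaklyHarmonicOn.isOpen_zeroSet {P : Set V} {f : V → ℝ} (hf : WeaklyHarmonicOn P f)
    (lf : IsLipschitz f) (hP : IsOpen P) (h0 : ∀ x ∈ P, 0 ≤ f x) :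
    IsOpen {x | x ∈ P ∧ f x = 0} := by
  refine Metric.isOpen_iff.2 fun x hx => ?_
  obtain ⟨r, hr, hrP⟩ := Metric.isOpen_iff.1 hP x hx.1
  exact ⟨r, hr, fun y hy => ⟨hrP hy, hf.eq_zero_of_nonneg_of_center_eq_zero lf hr hrP
    (fun z hz => h0 z (hrP hz)) hx.2 y hy⟩⟩

namespace IsLipMinimizer

theorem integral_heaviside_mul_inner_gradient_eq_zero (hΛ : 0 < Λ) (hΛ1 : Λ ≠ 1)
    (hu : IsLipMinimizer L Ω u) (hw : IsLipMinimizer L' Ω fun x => Λ * u x)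
    (hη : ContDiff ℝ 1 η) (hc : HasCompactSupport η) (hηΩ : tsupport η ⊆ Ω) (a : V) :
    ∫ x, heaviside (u x) * ⟪a, ∇ η x⟫ = 0 := by
  obtain ⟨M, hM⟩ := ContDiff.lipschitzWith_of_hasCompactSupport hc hη one_ne_zero
  have hsq : Λ ^ 2 - 1 ≠ 0 := by
    rw [sub_ne_zero, Ne, pow_eq_one_iff_of_nonneg hΛ.le two_ne_zero]
    exact hΛ1
  refine (mul_eq_zero.1 ?_).resolve_left hsq
  calc (Λ ^ 2 - 1) * ∫ x, heaviside (u x) * ⟪a, ∇ η x⟫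
      = ∫ x, (Λ ^ 2 * innerVariation u η a x - innerVariation (fun y => Λ * u y) η a x) := by
        rw [← integral_const_mul]
        refine integral_congr_ae ?_
        filter_upwards [hu.isLipschitz.ae_differentiableAt] with x hx
        exact (sq_mul_innerVariation_sub_innerVariation_const_mul hΛ hx a).symm
    _ = 0 := by
        rw [integral_sub ((integrable_innerVariation hu.lipschitzWith hM hc a).const_mul _)
          (integrable_innerVariation hw.lipschitzWith hM hc a), integral_const_mul,
          hu.integral_innerVariation_eq_zero hη hc hηΩ,
          hw.integral_innerVariation_eq_zero hη hc hηΩ, mul_zero, sub_zero]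

theorem pos_of_ae_pos (hu : IsLipMinimizer L Ω u) (hΩ : IsOpen Ω)
    (hpos : ∀ᵐ x : V, x ∈ Ω → 0 < u x) : ∀ x ∈ Ω, 0 < u x := by
  intro x₀ hx₀
  by_contra hcon
  have hux₀ : u x₀ = 0 := le_antisymm (not_lt.1 hcon) (hu.nonneg x₀)
  obtain ⟨r, hr, hrΩ⟩ := Metric.isOpen_iff.1 hΩ x₀ hx₀
  have hsuper : ∀ s, 0 < s → s < r → 0 ≤ ∫ x, ⟪∇ u x, ∇ (quadraticBump x₀ s) x⟫ := by
    intro s hs hsr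
    have hsΩ : closedBall x₀ s ⊆ Ω := (closedBall_subset_ball hsr).trans hrΩ
    have hbump := fun x => quadraticBump_nonneg x₀ s x
    refine hu.integral_inner_gradient_nonneg_of_heaviside_eq (isLipschitz_quadraticBump x₀ hs.le)
      (isCompact_closedBall x₀ s) hsΩ (fun x => quadraticBump_eq_zero_of_notMem_closedBall hs.le)
      one_pos (fun t ht _ x => add_nonneg (hu.nonneg x) (mul_nonneg ht.le (hbump x)))
      fun t ht _ => ?_
    filter_upwards [hpos] with x hx
    by_cases hxs : x ∈ closedBall x₀ s
    · have hux := hx (hsΩ hxs)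
      rw [heaviside_of_pos hux, heaviside_of_pos
        (add_pos_of_pos_of_nonneg hux (mul_nonneg ht.le (hbump x)))]
    · rw [quadraticBump_eq_zero_of_notMem_closedBall hs.le hxs, mul_zero, add_zero]
  have hmean : ∫ y in ball x₀ r, u y ≤ 0 := by
    have := mul_volume_ball_le_setIntegral hu.isLipschitz.neg x₀ hr fun s hs hsr => by
      simpa only [gradient_neg, inner_neg_left, integral_neg,
        integral_inner_gradient_quadraticBump _ _ hs] using hsuper s hs hsr
    rwa [hux₀, neg_zero, zero_mul, integral_neg, Left.nonneg_neg_iff] at this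
  have hzero := eq_zero_of_setIntegral_ball_le_zero hu.isLipschitz.continuous
    (fun x _ => hu.nonneg x) hmean
  obtain ⟨x, hx, hxr⟩ := (Measure.dense_of_ae hpos).exists_mem_open isOpen_ball
    ⟨x₀, mem_ball_self hr⟩
  exact (hx (hrΩ hxr)).ne' (hzero x hxr)

theorem pos_of_const_mul (hΛ : 0 < Λ) (hΛ1 : Λ ≠ 1) (hu : IsLipMinimizer L univ u)
    (hw : IsLipMinimizer L' univ fun x => Λ * u x) {x₀ : V} (hx₀ : 0 < u x₀) (x : V) :
    0 < u x := by
  have hcont := hu.isLipschitz.continuous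
  have hint : LocallyIntegrable fun x => heaviside (u x) := by
    refine (locallyIntegrable_const (1 : ℝ)).mono
      (measurable_heaviside.comp hcont.measurable).aestronglyMeasurable (.of_forall fun x => ?_)
    rw [Real.norm_of_nonneg (heaviside_nonneg _), norm_one]
    exact heaviside_le_one _
  obtain ⟨c, hc⟩ := ae_eq_const_of_integral_mul_inner_gradient_eq_zero hint fun η hη hηc a =>
    integral_heaviside_mul_inner_gradient_eq_zero hΛ hΛ1 hu hw hη hηc (subset_univ _) a
  obtain ⟨y, hyc, hy⟩ := (Measure.dense_of_ae hc).exists_mem_open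
    (isOpen_lt continuous_const hcont) ⟨x₀, hx₀⟩
  refine hu.pos_of_ae_pos isOpen_univ ?_ x (mem_univ x)
  filter_upwards [hc] with z hz _
  by_contra hneg
  rw [heaviside_of_nonpos (not_lt.1 hneg), ← (hyc : heaviside (u y) = c),
    heaviside_of_pos hy] at hz
  exact zero_ne_one hz

theorem const_mul_lt_of_const_mul_le (hΛ : 1 < Λ) (hu : IsLipMinimizer L univ u)
    (hw : IsLipMinimizer L' univ w) {x₀ : V} (hx₀ : u x₀ = 0) (hle : ∀ x, Λ * u x ≤ w x) {x : V}
    (hx : 0 < u x) : Λ * u x < w x := by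
  have hΛ0 : 0 < Λ := one_pos.trans hΛ
  have hucont := hu.isLipschitz.continuous
  have hharm : WeaklyHarmonicOn {x | 0 < u x} fun x => w x - Λ * u x :=
    (hw.weaklyHarmonicOn.mono fun x hx => ⟨(mul_pos hΛ0 hx).trans_le (hle x), mem_univ x⟩)
      |>.sub_const_mul (hu.weaklyHarmonicOn.mono fun x hx => ⟨hx, mem_univ x⟩)
        hw.isLipschitz hu.isLipschitz Λ
  set G : Set V := {x | 0 < u x ∧ w x - Λ * u x = 0}
  have hGopen : IsOpen G :=
    hharm.isOpen_zeroSet (hw.isLipschitz.sub (hu.isLipschitz.const_mul Λ))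
      (isOpen_lt continuous_const hucont) fun x _ => sub_nonneg.2 (hle x)
  have hGclosure : ∀ y ∈ closure G, w y = Λ * u y :=
    closure_minimal (fun y hy => sub_eq_zero.1 hy.2)
      (isClosed_eq hw.isLipschitz.continuous (continuous_const.mul hucont))
  have hufrontier : ∀ y ∈ frontier G, u y = 0 := by
    intro y hy
    rw [hGopen.frontier_eq] at hy
    by_contra hne
    exact hy.2 ⟨(hu.nonneg y).lt_of_ne' hne, sub_eq_zero.2 (hGclosure y hy.1)⟩
  have hwG : IsLipMinimizer L' univ fun y => Λ * G.indicator u y := by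
    convert hw.indicator (S := G) fun y hy => by
      rw [hGclosure y (frontier_subset_closure hy), hufrontier y hy, mul_zero] with y
    by_cases hy : y ∈ G
    · simp [hy, sub_eq_zero.1 hy.2]
    · simp [hy]
  refine (hle x).lt_of_ne' fun hwx => ?_
  have hxG : x ∈ G := ⟨hx, sub_eq_zero.2 hwx⟩
  have hpos := (hu.indicator hufrontier).pos_of_const_mul hΛ0 hΛ.ne' hwG
    (x₀ := x) (by rwa [indicator_of_mem hxG]) x₀
  exact hpos.ne' (indicator_apply_eq_zero.2 fun _ => hx₀)

end IsLipMinimizer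

end Proportional

/-! ### Touching pairs at the free boundary -/

section ClosureNondegeneracy

variable {V : Type*}

theorem NondegenerateOn.exists_of_mem_closure [NormedAddCommGroup V] {c : ℝ} {Ω : Set V}
    {u : V → ℝ} (h : NondegenerateOn c Ω u) {x : V} (hx : x ∈ closure {x | 0 < u x}) {ρ : ℝ}
    (hρ : 0 < ρ) (hΩ : ball x ρ ⊆ Ω) : ∃ y ∈ ball x ρ, c / 2 * ρ < u y := by
  obtain ⟨z, hz, hxz⟩ := Metric.mem_closure_iff.1 hx (ρ / 2) (half_pos hρ)
  have hsub : ball z (ρ / 2) ⊆ ball x ρ := ball_subset_ball' (by rw [dist_comm]; linarith)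
  obtain ⟨y, hy, hlt⟩ := h z (ρ / 2) (half_pos hρ) (hsub.trans hΩ) hz
  exact ⟨y, hsub hy, by linarith⟩

theorem mem_closure_pos_of_tendstoLocallyUniformly [NormedAddCommGroup V]
    [InnerProductSpace ℝ V] [FiniteDimensional ℝ V] [MeasurableSpace V] [BorelSpace V] {L : ℝ≥0}
    (hL : 0 < L) {Ω : ℕ → Set V} {u : ℕ → V → ℝ} {u₀ : V → ℝ}
    (hu : ∀ k, IsLipMinimizer L (Ω k) (u k)) {x : V} {r : ℝ} (hr : 0 < r)
    (hΩ : ∀ᶠ k in atTop, ball x r ⊆ Ω k) (hx : ∀ k, x ∈ closure {y | 0 < u k y})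
    (hlim : TendstoLocallyUniformly u u₀ atTop) : x ∈ closure {y | 0 < u₀ y} := by
  obtain ⟨c, hc, hnd⟩ := exists_nondegenerateOn V hL
  refine Metric.mem_closure_iff.2 fun ε hε => ?_
  have hρ : 0 < min ε r := lt_min hε hr
  have hunif := Metric.tendstoUniformlyOn_iff.1
    (tendstoLocallyUniformly_iff_forall_isCompact.1 hlim _ (isCompact_closedBall x (min ε r)))
    (c / 2 * min ε r) (by positivity)
  obtain ⟨k, hk, hkΩ⟩ := (hunif.and hΩ).exists
  obtain ⟨y, hy, hlt⟩ := (hnd _ _ (hu k)).exists_of_mem_closure (hx k) hρ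
    ((ball_subset_ball (min_le_right _ _)).trans hkΩ)
  have hclose : |u₀ y - u k y| < c / 2 * min ε r := hk y (ball_subset_closedBall hy)
  have hpos : 0 < u₀ y := by linarith [(abs_lt.1 hclose).1]
  exact ⟨y, hpos, (mem_ball'.1 hy).trans_le (min_le_left _ _)⟩

end ClosureNondegeneracy

section TouchingPair

variable {V : Type*} [NormedAddCommGroup V] [InnerProductSpace ℝ V] [FiniteDimensional ℝ V]
  [MeasurableSpace V] [BorelSpace V]

/-- Minimizers `u`, `w` in `Ω` with `Λ u ≤ w` there, both vanishing at the origin, which adheres to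
`{u > 0}`. The origin is thus a common free boundary point. -/
structure IsTouchingPair (L : ℝ≥0) (Λ : ℝ) (Ω : Set V) (u w : V → ℝ) : Prop where
  left : IsLipMinimizer L Ω u
  right : IsLipMinimizer L Ω w
  left_zero : u 0 = 0
  right_zero : w 0 = 0
  mem_closure : 0 ∈ closure {x | 0 < u x}
  const_mul_le : ∀ x ∈ Ω, Λ * u x ≤ w x

variable (V) in
/-- The factors `Λ` for which some touching pair `Λ u ≤ w` exists, at any scale. -/
def touchingRatios (L : ℝ≥0) : Set ℝ :=
  {Λ | ∃ R > 0, ∃ u w : V → ℝ, IsTouchingPair L Λ (ball 0 R) u w}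

variable {L : ℝ≥0} {Λ R : ℝ} {Ω Ω' : Set V} {u w : V → ℝ}

namespace IsTouchingPair

theorem mono (h : IsTouchingPair L Λ Ω u w) (hΩ : Ω' ⊆ Ω) : IsTouchingPair L Λ Ω' u w :=
  { h with
    left := h.left.mono hΩ
    right := h.right.mono hΩ
    const_mul_le := fun x hx => h.const_mul_le x (hΩ hx) }

theorem rescale (h : IsTouchingPair L Λ (ball 0 R) u w) {t : ℝ} (ht : 0 < t) :
    IsTouchingPair L Λ (ball 0 (R / t)) (rescale 0 t u) (rescale 0 t w) where
  left := (h.left.rescale 0 ht).mono fun x hx => by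
    simpa [norm_smul, abs_of_pos ht, lt_div_iff₀' ht] using hx
  right := (h.right.rescale 0 ht).mono fun x hx => by
    simpa [norm_smul, abs_of_pos ht, lt_div_iff₀' ht] using hx
  left_zero := by simp [AltCaffarelli.rescale, h.left_zero]
  right_zero := by simp [AltCaffarelli.rescale, h.right_zero]
  mem_closure := by
    have hpre : {x | 0 < AltCaffarelli.rescale 0 t u x} = (t • ·) ⁻¹' {x | 0 < u x} := by
      ext x
      simp [AltCaffarelli.rescale, mul_pos_iff_of_pos_left, ht]
    rw [hpre]
    have hcl := (Homeomorph.smulOfNeZero t ht.ne' : V ≃ₜ V).preimage_closure {x | 0 < u x}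
    exact hcl.subset (by simpa using h.mem_closure)
  const_mul_le x hx := by
    have htx : (0 : V) + t • x ∈ ball 0 R := by
      simpa [norm_smul, abs_of_pos ht, lt_div_iff₀' ht] using hx
    simpa only [AltCaffarelli.rescale, mul_left_comm] using
      mul_le_mul_of_nonneg_left (h.const_mul_le _ htx) (inv_pos.2 ht).le

theorem of_tendstoLocallyUniformly (hL : 0 < L) {Ω : ℕ → Set V}
    (hΩ : ∀ K, IsCompact K → ∀ᶠ k in atTop, K ⊆ Ω k) {Λ : ℕ → ℝ} {Λ₀ : ℝ} {u w : ℕ → V → ℝ}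
    {u₀ w₀ : V → ℝ} (h : ∀ k, IsTouchingPair L (Λ k) (Ω k) (u k) (w k))
    (hΛ : Tendsto Λ atTop (𝓝 Λ₀)) (hu : TendstoLocallyUniformly u u₀ atTop)
    (hw : TendstoLocallyUniformly w w₀ atTop) : IsTouchingPair L Λ₀ univ u₀ w₀ := by
  have hu' := fun x => (tendstoLocallyUniformlyOn_univ.2 hu).tendsto_at (mem_univ x)
  have hw' := fun x => (tendstoLocallyUniformlyOn_univ.2 hw).tendsto_at (mem_univ x)
  refine ⟨.of_tendstoLocallyUniformly isOpen_univ (fun K hK _ => hΩ K hK) (fun k => (h k).left) hu,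
    .of_tendstoLocallyUniformly isOpen_univ (fun K hK _ => hΩ K hK) (fun k => (h k).right) hw,
    tendsto_nhds_unique (hu' 0) (tendsto_const_nhds.congr fun k => (h k).left_zero.symm),
    tendsto_nhds_unique (hw' 0) (tendsto_const_nhds.congr fun k => (h k).right_zero.symm),
    mem_closure_pos_of_tendstoLocallyUniformly hL (fun k => (h k).left) one_pos
      ((hΩ _ (isCompact_closedBall 0 1)).mono fun _ => ball_subset_closedBall.trans)
      (fun k => (h k).mem_closure) hu, fun x _ => ?_⟩
  refine le_of_tendsto_of_tendsto (hΛ.mul (hu' x)) (hw' x) ?_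
  filter_upwards [hΩ {x} isCompact_singleton] with k hk
  exact (h k).const_mul_le x (hk rfl)

theorem exists_add_mem_touchingRatios (h : IsTouchingPair L Λ (ball 0 R) u w) (hL : 0 < L)
    (hΛ : 0 ≤ Λ) (hR : 0 < R) (hlt : ∀ x ∈ ball (0 : V) R, 0 < u x → Λ * u x < w x) :
    ∃ c > 0, Λ + c ∈ touchingRatios V L := by
  have hharm : WeaklyHarmonicOn ({x | 0 < u x} ∩ ball 0 R) fun x => w x - Λ * u x :=
    (h.right.weaklyHarmonicOn.mono fun x hx =>
      ⟨(mul_nonneg hΛ (h.left.nonneg x)).trans_lt (hlt x hx.2 hx.1), hx.2⟩).sub_const_mul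
      h.left.weaklyHarmonicOn h.right.isLipschitz h.left.isLipschitz Λ
  obtain ⟨r, c, hr, hrR, hc, hcu⟩ := boundary_harnack hL hR h.left h.left_zero
    (h.right.isLipschitz.sub (h.left.isLipschitz.const_mul Λ))
    (fun x hx => sub_nonneg.2 (h.const_mul_le x hx)) hharm
    (fun x hx hux => sub_pos.2 (hlt x hx hux))
  refine ⟨c, hc, r, hr, u, w, { h.mono (ball_subset_ball hrR) with
    const_mul_le := fun x hx => ?_ }⟩
  linarith [hcu x hx]

end IsTouchingPair

theorem bddAbove_touchingRatios (hL : 0 < L) : BddAbove (touchingRatios V L) := by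
  obtain ⟨c, hc, hnd⟩ := exists_nondegenerateOn V hL
  refine ⟨L / (c / 2), ?_⟩
  rintro Λ ⟨R, hR, u, w, h⟩
  obtain ⟨y, hy, hlt⟩ := (hnd _ _ h.left).exists_of_mem_closure h.mem_closure hR subset_rfl
  rcases le_or_gt Λ 0 with hΛ | hΛ
  · exact hΛ.trans (by positivity)
  have hchain : Λ * (c / 2) * R < L * R :=
    calc Λ * (c / 2) * R = Λ * (c / 2 * R) := mul_assoc _ _ _
      _ < Λ * u y := mul_lt_mul_of_pos_left hlt hΛ
      _ ≤ w y := h.const_mul_le y hy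
      _ ≤ L * dist y 0 := by
        simpa [h.right_zero] using (le_abs_self _).trans (h.right.lipschitzWith.dist_le_mul y 0)
      _ ≤ L * R := by gcongr; exact (mem_ball.1 hy).le
  exact (le_div_iff₀ (by positivity)).2 (lt_of_mul_lt_mul_right hchain hR.le).le

theorem exists_isTouchingPair_of_tendsto (hL : 0 < L) {Λ : ℕ → ℝ} {Λ₀ : ℝ}
    (hΛ : ∀ k, Λ k ∈ touchingRatios V L) (hlim : Tendsto Λ atTop (𝓝 Λ₀)) :
    ∃ u w : V → ℝ, IsTouchingPair L Λ₀ univ u w := by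
  choose R hR u w h using hΛ
  have h' : ∀ k : ℕ, IsTouchingPair L (Λ k) (ball 0 (k + 1))
      (rescale 0 (R k / (k + 1)) (u k)) (rescale 0 (R k / (k + 1)) (w k)) := fun k => by
    simpa only [div_div_cancel₀ (hR k).ne'] using (h k).rescale (t := R k / (k + 1))
      (div_pos (hR k) k.cast_add_one_pos)
  obtain ⟨u₀, w₀, φ, hφ, hu, hw⟩ := exists_strictMono_tendstoLocallyUniformly
    (fun k => (h' k).left.lipschitzWith) (fun k => (h' k).left_zero)
    (fun k => (h' k).right.lipschitzWith) (fun k => (h' k).right_zero)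
  refine ⟨u₀, w₀, .of_tendstoLocallyUniformly hL (fun K hK => ?_) (fun j => h' (φ j))
    (hlim.comp hφ.tendsto_atTop) hu hw⟩
  obtain ⟨r, hr⟩ := hK.isBounded.subset_ball 0
  have hradius : Tendsto (fun j => (φ j : ℝ) + 1) atTop atTop :=
    tendsto_atTop_add_const_right _ _ (tendsto_natCast_atTop_atTop.comp hφ.tendsto_atTop)
  filter_upwards [hradius.eventually_ge_atTop r] with j hj
  exact hr.trans (ball_subset_ball hj)

theorem IsTouchingPair.exists_eq (h : IsTouchingPair L 1 (ball 0 R) u w) (hL : 0 < L)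
    (hR : 0 < R) : ∃ x ∈ ball (0 : V) R, 0 < u x ∧ w x = u x := by
  by_contra! hne
  obtain ⟨c, hc, hmem⟩ := h.exists_add_mem_touchingRatios hL zero_le_one hR fun x hx hux =>
    (h.const_mul_le x hx).lt_of_ne' (by simpa using hne x hx hux)
  have hbdd := bddAbove_touchingRatios (V := V) hL
  have hΛ : 1 < sSup (touchingRatios V L) :=
    (lt_add_of_pos_right 1 hc).trans_le (le_csSup hbdd hmem)
  obtain ⟨Λ, -, hlim, hΛmem⟩ := exists_seq_tendsto_sSup ⟨_, hmem⟩ hbdd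
  obtain ⟨u', w', h'⟩ := exists_isTouchingPair_of_tendsto hL hΛmem hlim
  obtain ⟨c', hc', hmem'⟩ := (h'.mono (subset_univ (ball 0 1))).exists_add_mem_touchingRatios hL
    (zero_le_one.trans hΛ.le) one_pos fun x _ hx => h'.left.const_mul_lt_of_const_mul_le hΛ h'.right
      h'.left_zero (fun x => h'.const_mul_le x (mem_univ x)) hx
  exact (lt_add_of_pos_right _ hc').not_ge (le_csSup hbdd hmem')

end TouchingPair

/-! ### The dichotomy for Lipschitz minimizers -/

namespace IsLipMinimizer

variable {V : Type*} [NormedAddCommGroup V] [InnerProductSpace ℝ V] [FiniteDimensional ℝ V]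
  [MeasurableSpace V] [BorelSpace V] {L : ℝ≥0} {Ω K : Set V} {u w : V → ℝ}

theorem eq_zero_of_isCompact (h : IsLipMinimizer L Ω u) (hK : IsCompact K) (hKΩ : K ⊆ Ω)
    (h0 : ∀ x ∉ K, u x = 0) : u = 0 := by
  have hzero : ∀ x : V, energyDensity (fun _ => (0 : ℝ)) x = 0 := fun x => by
    simp [energyDensity, heaviside, gradient_fun_const]
  have hint : Integrable (energyDensity u) := by
    simpa only [hzero, sub_zero] using
      integrable_energyDensity_sub (.const 0) h.isLipschitz hK h0
  have hnonpos : ∫ x, energyDensity u x ≤ 0 := by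
    have hmin := h.integral_sub_nonneg (fun _ => 0) (fun _ => le_rfl) (.const 0) K hK hKΩ
      fun x hx => (h0 x hx).symm
    simp only [hzero, zero_sub, integral_neg] at hmin
    linarith
  have hae : energyDensity u =ᵐ[volume] 0 :=
    (integral_eq_zero_iff_of_nonneg (energyDensity_nonneg u) hint).1
      (hnonpos.antisymm (integral_nonneg (energyDensity_nonneg u)))
  refine h.isLipschitz.continuous.ae_eq_iff_eq volume continuous_const |>.1 ?_
  filter_upwards [hae] with x hx
  refine le_antisymm (not_lt.1 fun hpos => ?_) (h.nonneg x)
  rw [energyDensity, heaviside_of_pos hpos] at hx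
  exact (by positivity : ‖∇ u x‖ ^ 2 + 1 ≠ 0) hx

theorem isOpen_setOf_pos_and_eq (hu : IsLipMinimizer L Ω u) (hw : IsLipMinimizer L Ω w)
    (hΩ : IsOpen Ω) (hle : ∀ x ∈ Ω, u x ≤ w x) :
    IsOpen {x | x ∈ {y | 0 < u y} ∩ Ω ∧ w x = u x} := by
  have hharm := WeaklyHarmonicOn.sub_const_mul
    (hw.weaklyHarmonicOn.mono fun x hx => ⟨hx.1.trans_le (hle x hx.2), hx.2⟩)
    hu.weaklyHarmonicOn hw.isLipschitz hu.isLipschitz 1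
  simp only [one_mul] at hharm
  simpa only [sub_eq_zero] using
    hharm.isOpen_zeroSet (hw.isLipschitz.sub hu.isLipschitz)
      ((isOpen_lt continuous_const hu.isLipschitz.continuous).inter hΩ)
      fun x hx => sub_nonneg.2 (hle x hx.2)

theorem inf (hu : IsLipMinimizer L Ω u) (hw : LipschitzWith L w) (hw0 : ∀ x, 0 ≤ w x)
    (hK : IsCompact K) (hKΩ : K ⊆ Ω) (hle : ∀ x ∉ K, u x ≤ w x)
    (hmax : 0 ≤ ∫ x, (energyDensity (fun y => max (u y) (w y)) x - energyDensity w x)) :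
    IsLipMinimizer L Ω (fun x => min (u x) (w x)) := by
  have hlip : LipschitzWith L fun x => min (u x) (w x) := by
    simpa only [max_self] using hu.lipschitzWith.min hw
  have hoff : ∀ x ∉ K, u x = min (u x) (w x) := fun x hx => (min_eq_left (hle x hx)).symm
  refine ⟨fun x => le_min (hu.nonneg x) (hw0 x), hlip, fun v hv lv K' hK' hK'Ω hvm => ?_⟩
  have hvu : ∀ x ∉ K' ∪ K, v x = u x := fun x hx => by
    rw [mem_union, not_or] at hx
    rw [hvm x hx.1, ← hoff x hx.2]
  have hminimal : 0 ≤ ∫ x, (energyDensity v x - energyDensity u x) :=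
    hu.integral_sub_nonneg v hv lv _ (hK'.union hK) (union_subset hK'Ω hKΩ) hvu
  have hexchange : ∫ x, (energyDensity u x - energyDensity (fun y => min (u y) (w y)) x)
      = ∫ x, (energyDensity (fun y => max (u y) (w y)) x - energyDensity w x) := by
    refine integral_congr_ae ?_
    filter_upwards [ae_energyDensity_max_add_min hu.isLipschitz ⟨L, hw⟩] with x hx
    linarith
  calc 0 ≤ (∫ x, (energyDensity v x - energyDensity u x))
        + ∫ x, (energyDensity u x - energyDensity (fun y => min (u y) (w y)) x) :=
        add_nonneg hminimal (hexchange ▸ hmax)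
    _ = ∫ x, (energyDensity v x - energyDensity (fun y => min (u y) (w y)) x) := by
      rw [← integral_add (integrable_energyDensity_sub hu.isLipschitz lv (hK'.union hK) hvu)
        (integrable_energyDensity_sub ⟨L, hlip⟩ hu.isLipschitz hK hoff)]
      simp only [sub_add_sub_cancel]

-- By the strong maximum principle `u` vanishes on the frontier of `{w < u}`, so cutting `u` off
-- there leaves a compactly supported minimizer.
theorem le_of_inf (hu : IsLipMinimizer L Ω u) (hm : IsLipMinimizer L Ω fun x => min (u x) (w x))
    (hw : Continuous w) (hΩ : IsOpen Ω) (hK : IsCompact K) (hKΩ : K ⊆ Ω)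
    (hle : ∀ x ∉ K, u x ≤ w x) (x : V) : u x ≤ w x := by
  set S : Set V := {y | w y < u y}
  have hSK : S ⊆ K := fun y hy => by_contra fun h => (hle y h).not_gt hy
  have hfrontier : ∀ y ∈ frontier S, u y = 0 := by
    intro y hy
    by_contra hne
    have heq : w y = u y := frontier_lt_subset_eq hw hu.isLipschitz.continuous hy
    have hyΩ : y ∈ Ω := hKΩ (closure_minimal hSK hK.isClosed hy.1)
    have hpos : 0 < u y := (hu.nonneg y).lt_of_ne' hne
    obtain ⟨z, hz, hzS⟩ := mem_closure_iff.1 hy.1 _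
      (hm.isOpen_setOf_pos_and_eq hu hΩ fun z _ => min_le_left _ _)
      ⟨⟨by simpa [heq] using hpos, hyΩ⟩, by simp [heq]⟩
    exact (min_eq_left_iff.1 hz.2.symm).not_gt hzS
  have hzero : S.indicator u = 0 := (hu.indicator hfrontier).eq_zero_of_isCompact hK hKΩ fun y hy =>
    indicator_of_notMem (fun h => hy (hSK h)) u
  by_contra! hx
  have hux : u x = 0 := by simpa [S, hx] using congrFun hzero x
  have hmx := hm.nonneg x
  rw [min_eq_right hx.le] at hmx
  linarith

theorem lt_of_mem_closure_pos (hu : IsLipMinimizer L Ω u) (hw : IsLipMinimizer L Ω w)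
    (hL : 0 < L) (hΩ : IsOpen Ω) (hle : ∀ x ∈ Ω, u x ≤ w x)
    (hlt : ∀ x ∈ {x | 0 < u x} ∩ Ω, u x < w x) : ∀ z ∈ Ω ∩ closure {x | 0 < u x}, u z < w z := by
  rintro z ⟨hz, hzc⟩
  by_contra! hwz
  have hwz' : w z = u z := hwz.antisymm (hle z hz)
  have huz : u z = 0 := (not_lt.1 fun h => (hlt z ⟨h, hz⟩).not_ge hwz).antisymm (hu.nonneg z)
  obtain ⟨R, hR, hRΩ⟩ := Metric.isOpen_iff.1 hΩ z hz
  have hmem : ∀ x ∈ ball (0 : V) R, z + x ∈ Ω := fun x hx => hRΩ (by simpa using hx)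
  have htouch : IsTouchingPair L 1 (ball 0 R) (AltCaffarelli.rescale z 1 u)
      (AltCaffarelli.rescale z 1 w) :=
    { left := (hu.rescale z one_pos).mono fun x hx => by simpa using hmem x hx
      right := (hw.rescale z one_pos).mono fun x hx => by simpa using hmem x hx
      left_zero := by simp [AltCaffarelli.rescale, huz]
      right_zero := by simp [AltCaffarelli.rescale, hwz', huz]
      mem_closure := by
        have hpre : {x | 0 < AltCaffarelli.rescale z 1 u x} = (z + ·) ⁻¹' {x | 0 < u x} := by
          ext x; simp [AltCaffarelli.rescale]
        rw [hpre]
        exact ((Homeomorph.addLeft z).preimage_closure _).subset (by simpa using hzc)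
      const_mul_le := fun x hx => by simpa [AltCaffarelli.rescale] using hle _ (hmem x hx) }
  obtain ⟨x, hx, hpos, heq⟩ := htouch.exists_eq hL hR
  simp only [AltCaffarelli.rescale, inv_one, one_mul, one_smul] at hpos heq
  exact (hlt _ ⟨hpos, hmem x hx⟩).ne' heq

theorem eq_or_lt_of_isPreconnected (hu : IsLipMinimizer L Ω u) (hw : IsLipMinimizer L Ω w)
    (hL : 0 < L) (hΩ : IsOpen Ω) (hle : ∀ x ∈ Ω, u x ≤ w x)
    (hconn : IsPreconnected ({x | 0 < u x} ∩ Ω)) :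
    (∀ x ∈ Ω ∩ closure {x | 0 < u x}, w x = u x) ∨
      ∀ x ∈ Ω ∩ closure {x | 0 < u x}, u x < w x := by
  have hucont := hu.isLipschitz.continuous
  have hwcont := hw.isLipschitz.continuous
  refine or_iff_not_imp_right.2 fun hcon => ?_
  obtain ⟨a, ha, hae⟩ : ∃ a ∈ {x | 0 < u x} ∩ Ω, w a = u a := by
    contrapose! hcon
    exact hu.lt_of_mem_closure_pos hw hL hΩ hle fun x hx => (hle x hx.2).lt_of_ne' (hcon x hx)
  have hsub : {x | 0 < u x} ∩ Ω ⊆ {x | x ∈ {y | 0 < u y} ∩ Ω ∧ w x = u x} :=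
    hconn.subset_left_of_subset_union (hu.isOpen_setOf_pos_and_eq hw hΩ hle)
      (isOpen_lt hucont hwcont)
      (disjoint_left.2 fun x hx hlt => (show u x < w x from hlt).ne' hx.2)
      (fun x hx => (hle x hx.2).eq_or_lt.imp (fun h => ⟨hx, h.symm⟩) id) ⟨a, ha, ha, hae⟩
  intro x hx
  exact closure_minimal (fun y hy => (hsub hy.symm).2) (isClosed_eq hwcont hucont)
    (hΩ.inter_closure hx)

end IsLipMinimizer

/-! ### Minimizers in Euclidean space -/

theorem ae_energyDensity_eq_of_eq {V : Type*} [NormedAddCommGroup V] [InnerProductSpace ℝ V]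
    [FiniteDimensional ℝ V] [MeasurableSpace V] [BorelSpace V] {u v : V → ℝ} (hu : IsLipschitz u)
    (hv : IsLipschitz v) : ∀ᵐ x : V, u x = v x → energyDensity u x = energyDensity v x := by
  filter_upwards [hu.ae_differentiableAt, hv.ae_differentiableAt,
    (hu.max hv).ae_differentiableAt] with x hdu hdv hdmax hx
  rw [energyDensity, energyDensity, hx,
    gradient_eq_of_forall_le (fun _ => le_max_left _ _) (by simp [hx]) hdu hdmax,
    gradient_eq_of_forall_le (fun _ => le_max_right _ _) (by simp [hx]) hdv hdmax]

theorem IsLipschitz.mul_of_locallyLipschitz {X : Type*} [PseudoMetricSpace X] {η u : X → ℝ}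
    {K : Set X} (hη : IsLipschitz η) (hK : IsCompact K) (h0 : ∀ x ∉ K, η x = 0)
    (hu : LocallyLipschitz u) : IsLipschitz fun x => η x * u x := by
  obtain ⟨A, hA⟩ := LocallyLipschitzOn.exists_lipschitzOnWith_of_compact hK hu.locallyLipschitzOn
  obtain ⟨u', hu', huu'⟩ := hA.extend_real
  obtain ⟨M, hM, hηM⟩ := (hK.image hη.continuous).isBounded.exists_pos_norm_le
  obtain ⟨N, -, huN⟩ := (hK.image hu'.continuous).isBounded.exists_pos_norm_le
  have heq : (fun x => η x * u x) = fun x => η x * u' x := by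
    ext x
    by_cases hx : x ∈ K
    · rw [huu' hx]
    · simp [h0 x hx]
  rw [heq]
  refine hη.mul_of_abs_le ⟨A, hu'⟩ M N (fun x => ?_) fun x hx => ?_
  · by_cases hx : x ∈ K
    · exact hηM _ (mem_image_of_mem η hx)
    · simpa [h0 x hx] using hM.le
  · exact huN _ (mem_image_of_mem u' (by_contra fun h => hx (h0 x h)))

theorem exists_cutoff_lipschitzWith_mul {X : Type*} [PseudoMetricSpace X] [ProperSpace X]
    {E : Set X} (hE : Bornology.IsBounded E) {u w : X → ℝ} (hu : LocallyLipschitz u)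
    (hw : LocallyLipschitz w) : ∃ (η : X → ℝ) (L : ℝ≥0), 0 < L ∧ (∀ x, 0 ≤ η x) ∧
      (∀ x ∈ E, η x = 1) ∧ LipschitzWith L (fun x => η x * u x) ∧
      LipschitzWith L fun x => η x * w x := by
  obtain ⟨η, hη, h01, h1, h0⟩ := exists_cutoff E one_pos
  have hK : IsCompact (cthickening 1 E) :=
    isCompact_of_isClosed_isBounded isClosed_cthickening hE.cthickening
  have hoff : ∀ x ∉ cthickening 1 E, η x = 0 := fun x hx =>
    h0 x fun h => hx (thickening_subset_cthickening 1 E h)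
  obtain ⟨A, hA⟩ := IsLipschitz.mul_of_locallyLipschitz ⟨_, hη⟩ hK hoff hu
  obtain ⟨B, hB⟩ := IsLipschitz.mul_of_locallyLipschitz ⟨_, hη⟩ hK hoff hw
  exact ⟨η, max 1 (max A B), one_pos.trans_le (le_max_left _ _), fun x => (h01 x).1, h1,
    hA.weaken ((le_max_left _ _).trans (le_max_right _ _)),
    hB.weaken ((le_max_right _ _).trans (le_max_right _ _))⟩

section Euclidean

variable {n : ℕ} {D O Ω : Set (EuclideanSpace ℝ (Fin n))} {u f v : EuclideanSpace ℝ (Fin n) → ℝ}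
  {L : ℝ≥0}

theorem JE_eq_ofReal_integral (hD : MeasurableSet D) (hDb : Bornology.IsBounded D)
    (hO : IsOpen O) (hDO : D ⊆ O) (hf : IsLipschitz f) (huf : EqOn u f O) :
    JE D u = ENNReal.ofReal (∫ x in D, energyDensity f x) := by
  obtain ⟨K, hK⟩ := hf
  rw [ofReal_integral_eq_lintegral_ofReal (integrableOn_energyDensity hK hDb)
    (.of_forall (energyDensity_nonneg f))]
  refine setLIntegral_congr_fun hD fun x hx => ?_
  have hev : u =ᶠ[𝓝 x] f := huf.eventuallyEq_of_mem (hO.mem_nhds (hDO hx))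
  rw [energyDensity, ENNReal.ofReal_add (sq_nonneg _) (heaviside_nonneg _), hev.gradient_eq,
    hev.eq_of_nhds, ENNReal.ofReal_pow (norm_nonneg _), ofReal_norm, heaviside]
  split_ifs <;> simp [enorm_eq_nnnorm]

theorem integral_energyDensity_sub_nonneg_of_isMinimizer (hΩ : MeasurableSet Ω)
    (hu : IsMinimizer Ω u) {c : EuclideanSpace ℝ (Fin n)} {r : ℝ} (hf : IsLipschitz f)
    (huf : EqOn u f (ball c r)) (hv0 : ∀ x, 0 ≤ v x) (hv : IsLipschitz v)
    (hvf : {x | v x ≠ f x} ⊆ Ω ∩ ball c r) :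
    0 ≤ ∫ x, (energyDensity v x - energyDensity f x) := by
  obtain ⟨hu0, hulip, hmin⟩ := hu
  set D := Ω ∩ ball c r
  have hDm : MeasurableSet D := hΩ.inter measurableSet_ball
  have hDb : Bornology.IsBounded D := isBounded_ball.subset inter_subset_right
  set v' := fun x => u x + (v x - f x)
  have hv'v : EqOn v' v (ball c r) := fun x hx => by simp [v', huf hx]
  have hsub : {x | v' x ≠ u x} ⊆ D := fun x hx =>
    hvf fun h => hx (by simp [v', h])
  have hv'0 : ∀ x, 0 ≤ v' x := fun x => by
    by_cases hx : v' x = u x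
    · exact hx ▸ hu0 x
    · exact hv'v (hsub hx).2 ▸ hv0 x
  have hv'lip : LocallyLipschitz v' :=
    let ⟨_, hK⟩ := hv.sub hf; hulip.add hK.locallyLipschitz
  have hle := hmin v' hv'0 hv'lip (hDb.subset hsub) (hsub.trans inter_subset_left) c r
    (hsub.trans inter_subset_right)
  rw [JE_eq_ofReal_integral hDm hDb isOpen_ball inter_subset_right hf huf,
    JE_eq_ofReal_integral hDm hDb isOpen_ball inter_subset_right hv hv'v,
    ENNReal.ofReal_le_ofReal_iff (integral_nonneg (energyDensity_nonneg v)), ← sub_nonneg] at hle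
  obtain ⟨A, hA⟩ := hf
  obtain ⟨B, hB⟩ := hv
  rwa [← integral_sub (integrableOn_energyDensity hB hDb) (integrableOn_energyDensity hA hDb),
    setIntegral_eq_integral_of_ae_compl_eq_zero] at hle
  filter_upwards [ae_energyDensity_eq_of_eq ⟨A, hA⟩ ⟨B, hB⟩] with x hx hxD
  exact sub_eq_zero.2 (hx (not_not.1 fun h => hxD (hvf (Ne.symm h)))).symm

theorem isLipMinimizer_of_isMinimizer (hΩ : MeasurableSet Ω) (hu : IsMinimizer Ω u)
    {c : EuclideanSpace ℝ (Fin n)} {r : ℝ} (hf0 : ∀ x, 0 ≤ f x) (hf : LipschitzWith L f)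
    (huf : EqOn u f (ball c r)) : IsLipMinimizer L (Ω ∩ ball c r) f :=
  ⟨hf0, hf, fun _ hv0 hv _ _ hKΩ hvf =>
    integral_energyDensity_sub_nonneg_of_isMinimizer hΩ hu ⟨L, hf⟩ huf hv0 hv fun x hx =>
      hKΩ (by_contra fun h => hx (hvf x h))⟩

theorem exists_cutoff_isLipMinimizer_mul {Ω' : Set (EuclideanSpace ℝ (Fin n))}
    (hΩ : MeasurableSet Ω) (hΩ' : MeasurableSet Ω') (hu : IsMinimizer Ω u) (hv : IsMinimizer Ω' v)
    (c : EuclideanSpace ℝ (Fin n)) (r : ℝ) :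
    ∃ (η : EuclideanSpace ℝ (Fin n) → ℝ) (L : ℝ≥0), 0 < L ∧ (∀ x, 0 ≤ η x) ∧
      (∀ x ∈ ball c r, η x = 1) ∧ IsLipMinimizer L (Ω ∩ ball c r) (fun x => η x * u x) ∧
      IsLipMinimizer L (Ω' ∩ ball c r) fun x => η x * v x := by
  obtain ⟨η, L, hL, hη0, hη1, hlu, hlv⟩ :=
    exists_cutoff_lipschitzWith_mul (isBounded_ball (x := c) (r := r)) hu.2.1 hv.2.1
  exact ⟨η, L, hL, hη0, hη1,
    isLipMinimizer_of_isMinimizer hΩ hu (fun x => mul_nonneg (hη0 x) (hu.1 x)) hlu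
      fun x hx => by simp [hη1 x hx],
    isLipMinimizer_of_isMinimizer hΩ' hv (fun x => mul_nonneg (hη0 x) (hv.1 x)) hlv
      fun x hx => by simp [hη1 x hx]⟩

theorem le_of_isMinimizer_of_le_off_ball {w g : EuclideanSpace ℝ (Fin n) → ℝ}
    {c : EuclideanSpace ℝ (Fin n)} {r R : ℝ} (hrR : r < R) (hw : IsMinimizer (ball c r) w)
    (hwg : EqOn w g (ball c R)) (hg0 : ∀ x, 0 ≤ g x) (hg : LipschitzWith L g)
    (hf : IsLipMinimizer L Ω f) (hΩ : IsOpen Ω) (hball : closedBall c r ⊆ Ω)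
    (hle : ∀ x ∉ ball c r, f x ≤ g x) (x : EuclideanSpace ℝ (Fin n)) : f x ≤ g x := by
  have hmax : {x | max (f x) (g x) ≠ g x} ⊆ ball c r ∩ ball c R := fun x hx =>
    have hxr : x ∈ ball c r := by_contra fun h => hx (max_eq_right (hle x h))
    ⟨hxr, ball_subset_ball hrR.le hxr⟩
  have hoff : ∀ x ∉ closedBall c r, f x ≤ g x := fun x hx =>
    hle x fun h => hx (ball_subset_closedBall h)
  have hinf : IsLipMinimizer L Ω fun x => min (f x) (g x) :=
    hf.inf hg hg0 (isCompact_closedBall c r) hball hoff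
      (integral_energyDensity_sub_nonneg_of_isMinimizer measurableSet_ball hw ⟨L, hg⟩ hwg
        (fun x => (hg0 x).trans (le_max_right _ _)) (hf.isLipschitz.max ⟨L, hg⟩) hmax)
  exact hf.le_of_inf hinf hg.continuous hΩ (isCompact_closedBall c r) hball hoff x

end Euclidean

section Homogeneous

variable {V : Type*} [NormedAddCommGroup V] [NormedSpace ℝ V] {U : V → ℝ}

-- The retraction `x ↦ x / (1 + ‖x‖)` maps the cone `{U > 0}` onto its part in the unit ball.
theorem isPreconnected_pos_inter_ball (hom : ∀ t : ℝ, 0 < t → ∀ x, U (t • x) = t * U x)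
    (h : IsPreconnected {x | 0 < U x}) : IsPreconnected ({x | 0 < U x} ∩ ball (0 : V) 1) := by
  have hcone : ∀ {t : ℝ}, 0 < t → ∀ {x}, 0 < U x → 0 < U (t • x) := fun ht x hx =>
    hom _ ht x ▸ mul_pos ht hx
  have hp : ∀ x : V, 0 < 1 + ‖x‖ := fun x => by positivity
  have himage : (fun x : V => (1 + ‖x‖)⁻¹ • x) '' {x | 0 < U x} = {x | 0 < U x} ∩ ball 0 1 := by
    refine Subset.antisymm (image_subset_iff.2 fun x hx => ⟨hcone (inv_pos.2 (hp x)) hx, ?_⟩) ?_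
    · rw [mem_ball_zero_iff, norm_smul, norm_inv, Real.norm_of_nonneg (hp x).le,
        inv_mul_lt_iff₀ (hp x)]
      linarith
    · rintro y ⟨hy, hy1⟩
      have hq : 0 < 1 - ‖y‖ := by simpa using hy1
      refine ⟨(1 - ‖y‖)⁻¹ • y, hcone (inv_pos.2 hq) hy, ?_⟩
      have hnorm : 1 + ‖(1 - ‖y‖)⁻¹ • y‖ = (1 - ‖y‖)⁻¹ := by
        rw [norm_smul, norm_inv, Real.norm_of_nonneg hq.le]
        field_simp
        ring
      simp only [hnorm, inv_inv, smul_inv_smul₀ hq.ne']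
  rw [← himage]
  exact h.image _ (((continuous_const.add continuous_norm).inv₀
    fun x => (hp x).ne').smul continuous_id).continuousOn

end Homogeneous

theorem inter_closure_congr {X : Type*} [TopologicalSpace X] {s t O : Set X} (hO : IsOpen O)
    (h : s ∩ O = t ∩ O) : O ∩ closure s = O ∩ closure t := by
  have hsub : ∀ {s t : Set X}, s ∩ O = t ∩ O → O ∩ closure s ⊆ O ∩ closure t := fun h =>
    subset_inter inter_subset_left <| hO.inter_closure.trans <| closure_mono <| by
      rw [inter_comm, h]; exact inter_subset_left
  exact (hsub h).antisymm (hsub h.symm)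

end AltCaffarelli

open AltCaffarelli in
theorem stmt4_general {n : ℕ} {Ω : Set (EuclideanSpace ℝ (Fin n))} (hΩ : IsOpen Ω)
    (hball : closedBall 0 1 ⊆ Ω) {U : EuclideanSpace ℝ (Fin n) → ℝ} (hU : IsMinimizer Ω U)
    (hconn : IsPreconnected ({x | 0 < U x} ∩ ball 0 1)) {w : EuclideanSpace ℝ (Fin n) → ℝ}
    (hw : IsMinimizer (ball 0 1) w) (hbd : ∀ x ∉ ball 0 1, U x ≤ w x) :
    (∀ x ∈ ball 0 1, U x ≤ w x) ∧
      ((∀ x ∈ ball 0 1 ∩ closure {x | 0 < U x}, w x = U x) ∨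
        ∀ x ∈ ball 0 1 ∩ closure {x | 0 < U x}, U x < w x) := by
  have hball12 : ball (0 : EuclideanSpace ℝ (Fin n)) 1 ⊆ ball 0 2 := ball_subset_ball one_le_two
  obtain ⟨η, L, hL, hη0, hη1, hUη, hwη⟩ :=
    exists_cutoff_isLipMinimizer_mul hΩ.measurableSet measurableSet_ball hU hw 0 2
  have hle : ∀ x, η x * U x ≤ η x * w x :=
    le_of_isMinimizer_of_le_off_ball one_lt_two hw (fun x hx => by simp [hη1 x hx]) hwη.nonneg
      hwη.lipschitzWith hUη (hΩ.inter isOpen_ball)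
      (subset_inter hball (closedBall_subset_ball one_lt_two))
      fun x hx => mul_le_mul_of_nonneg_left (hbd x hx) (hη0 x)
  have hη : ∀ x ∈ ball 0 1, η x = 1 := fun x hx => hη1 x (hball12 hx)
  refine ⟨fun x hx => by simpa [hη x hx] using hle x, ?_⟩
  have hpos : {x | 0 < η x * U x} ∩ ball 0 1 = {x | 0 < U x} ∩ ball 0 1 := by
    ext x
    simp +contextual only [mem_inter_iff, mem_ofPred_eq, and_congr_left_iff, hη, one_mul,
      implies_true]
  have hdichotomy := (hUη.mono (subset_inter (ball_subset_closedBall.trans hball)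
    hball12)).eq_or_lt_of_isPreconnected (hwη.mono (subset_inter Subset.rfl hball12)) hL
    isOpen_ball (fun x _ => hle x) (hpos ▸ hconn)
  rw [inter_closure_congr isOpen_ball hpos] at hdichotomy
  exact hdichotomy.imp (fun h x hx => by simpa [hη x hx.1] using h x hx)
    fun h x hx => by simpa [hη x hx.1] using h x hx

/-- strict separation. -/
theorem stmt4 {n : ℕ} (hn : 2 ≤ n) (U₀ : EuclideanSpace ℝ (Fin n) → ℝ)
    (hU₀min : IsMinimizer (Set.univ : Set (EuclideanSpace ℝ (Fin n))) U₀)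
    (hU₀ne : U₀ ≠ 0)
    (hU₀hom : ∀ t : ℝ, 0 < t → ∀ x, U₀ (t • x) = t * U₀ x)
    (hconn : IsConnected {x | 0 < U₀ x})
    (w : EuclideanSpace ℝ (Fin n) → ℝ)
    (hw : IsMinimizer (Metric.ball (0 : EuclideanSpace ℝ (Fin n)) 1) w)
    (hbd : ∀ x ∉ Metric.ball (0 : EuclideanSpace ℝ (Fin n)) 1, U₀ x ≤ w x) :
    (∀ x ∈ Metric.ball (0 : EuclideanSpace ℝ (Fin n)) 1, U₀ x ≤ w x) ∧
    ((∀ x ∈ Metric.ball (0 : EuclideanSpace ℝ (Fin n)) 1 ∩ closure {x | 0 < U₀ x}, w x = U₀ x) ∨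
     (∀ x ∈ Metric.ball (0 : EuclideanSpace ℝ (Fin n)) 1 ∩ closure {x | 0 < U₀ x}, U₀ x < w x)) := by
  exact stmt4_general isOpen_univ (subset_univ _) hU₀min
    (AltCaffarelli.isPreconnected_pos_inter_ball hU₀hom hconn.isPreconnected) hw hbd
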